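/- arXiv:math/0504221 — 3 statements merged into one kernel-verified Lean document; each statement's English description precedes it below -/
import Mathlib

section
/- In the Calderón–Zygmund decomposition for Sobolev functions on ℝⁿ at height α with exponent q (where 1 ≤ q < ∞, f ∈ C_c^∞(ℝⁿ), α > 0, f = g + Σ_i b_i with balls B_i, functions b_i supported in B_i satisfying ∫_{B_i}|∇b_i|^q ≤ Cα^q|B_i|, Σ_i|B_i| ≤ Cα^{-q}∫|∇f|^q, bounded overlap Σ_i 1_{B_i} ≤ N, and |∇g| ≤ Cα a.e.), the functions g and b_i can moreover be chosen so that Σ_i ∇b_i converges in L^q(ℝⁿ) with ‖Σ_i |∇b_i|‖_q ≤ C‖|∇f|‖_q, and consequently ‖|∇g|‖_q ≤ (C+1)·‖|∇f|‖_q, where C depends only on n and q. -/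
/-!
The decomposition is of Whitney type. Call a ball bad if the average of `|∇f|^q` over it is at
least `α^q`, and let `ρ(x)` be the supremum of `(2 r - |x - y|)⁺` over all bad balls `B(y, r)`.
Then `ρ` is `1`-Lipschitz, balls centred at `x` of radius at least `ρ(x)` are not bad, and Vitali's
covering lemma gives `|{ρ > 0}| ≤ 8ⁿ α^{-q} ∫ |∇f|^q` (`exists_scale`).

Since `∇f` is uniformly continuous, there is `ε > 0` such that `∇f` oscillates by at most `α` on
balls of radius `ε` (`exists_radius`); at points with `ρ ≤ ε` this and the average bound on
`B(x, ε)` already give `|∇f| ≤ 2 α` (`norm_fderiv_le_of_average`). Hence it is enough to decompose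
`f` over `{ρ > ε}`, and there finitely many balls `Bᵢ = B(pᵢ, ρ(pᵢ)/10)` suffice (`exists_cover`):
all sums are finite and `g` is of class `C¹`. The balls `B(pᵢ, ρ(pᵢ)/100)` are disjoint. This bounds
`Σ |Bᵢ|` (`sum_volume_le`) and, as the radii of the balls through a point are comparable, bounds
the overlap of the `Bᵢ` by `N = 220ⁿ` (`card_overlap`).

From bump functions `φᵢ` of the balls the telescoping products `χᵢ = φᵢ ∏_{j<i} (1 - φⱼ)` form a
partition of unity on `{ρ > ε}` with `|∇χᵢ| ≲ 1/ρ` (`exists_partition`). The bad functions are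
`bᵢ = χᵢ (f - f_{Bᵢ})`, where `f_{Bᵢ}` is the mean of `f` over `Bᵢ`. The product rule and
Poincaré's inequality (`poincare`) yield `∫_{Bᵢ} |∇bᵢ|^q ≤ K ∫_{Bᵢ} |∇f|^q`
(`lintegral_fderiv_bad_le`); the right side is at most a multiple of `α^q |Bᵢ|`, since
`B(pᵢ, ρ(pᵢ))` is not bad, and summing with bounded overlap gives the `L^q` bound for `Σ |∇bᵢ|`
(`lintegral_sum_rpow_le`). The bound for `‖∇g‖_q` is then Minkowski's inequality.

For `|∇g| ≤ C α` (`norm_fderiv_good_le`) write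
`∇g = (1 - Σ χᵢ) ∇f - Σ (f - f_{Bᵢ}) ∇χᵢ`. Where `ρ > ε`, the first term vanishes and `Σ ∇χᵢ = 0`,
so `f` may be replaced by its mean over a ball of radius comparable to `ρ`, and differences of means
are controlled by Poincaré's inequality. Where `ρ ≤ ε`, both terms are estimated from the pointwise
bound on `∇f`.
-/

open MeasureTheory Metric ENNReal

namespace CZSobolev

/-! ### Poincaré inequality -/

/-- Euclidean space `ℝⁿ`. -/
abbrev E (n : ℕ) := EuclideanSpace ℝ (Fin n)

lemma volume_ball_mul {n : ℕ} (x y : E n) {k r : ℝ} (hk : 0 < k) :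
    volume (ball x (k * r)) = ENNReal.ofReal (k ^ n) * volume (ball y r) := by
  have h1 := Measure.addHaar_ball_mul_of_pos (volume : Measure (E n)) x hk r
  rw [h1, finrank_euclideanSpace_fin, Measure.addHaar_ball_center, Measure.addHaar_ball_center _ y]

lemma jensen {X : Type*} [MeasurableSpace X] (μ : Measure X) [IsProbabilityMeasure μ]
    {q : ℝ} (hq : 1 ≤ q) {h : X → ℝ≥0∞} (hh : AEMeasurable h μ) :
    (∫⁻ x, h x ∂μ) ^ q ≤ ∫⁻ x, h x ^ q ∂μ := by
  have h1 := eLpNorm'_le_eLpNorm'_of_exponent_le (μ := μ) (f := h) one_pos hq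
    hh.aestronglyMeasurable
  simp only [eLpNorm', enorm_eq_self, ENNReal.rpow_one, div_one] at h1
  have h2 := ENNReal.rpow_le_rpow h1 (by linarith : 0 ≤ q)
  rwa [← ENNReal.rpow_mul, one_div_mul_cancel (by linarith), ENNReal.rpow_one] at h2

lemma lintegral_comp_affine {n : ℕ} (G : E n → ℝ≥0∞) (hG : Measurable G) (v : E n) {t : ℝ}
    (ht : 1 / 2 ≤ t) :
    ∫⁻ y, G (v + t • y) ≤ ENNReal.ofReal (2 ^ n) * ∫⁻ y, G y := by
  have ht0 : 0 < t := by linarith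
  have h1 : ∫⁻ y, G (v + t • y) = ENNReal.ofReal (abs (t ^ n)⁻¹) * ∫⁻ y, G (v + y) := by
    have := lintegral_map (μ := (volume : Measure (E n))) (f := fun y => G (v + y))
      (g := fun y => t • y) (by fun_prop) (by fun_prop)
    rw [← this, Measure.map_addHaar_smul _ ht0.ne', lintegral_smul_measure,
      finrank_euclideanSpace_fin, smul_eq_mul]
  rw [h1, lintegral_add_left_eq_self (fun y => G y) v]
  gcongr
  rw [abs_of_nonneg (by positivity), ← inv_pow]
  gcongr
  rw [inv_le_comm₀ ht0 (by norm_num)]; linarith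

/-- The averages of a nonnegative function over the images of `B × B` under
`(x, y) ↦ (1 - t) x + t y` are controlled uniformly in `t`: one of the two
variables carries a coefficient at least `1 / 2`. -/
lemma lintegral_segment {n : ℕ} (F : E n → ℝ≥0∞) (hF : Measurable F) (z : E n) (R : ℝ)
    {t : ℝ} (ht : t ∈ Set.Icc (0 : ℝ) 1) :
    ∫⁻ x in ball z R, ∫⁻ y in ball z R, F ((1 - t) • x + t • y) ≤
      ENNReal.ofReal (2 ^ n) * volume (ball z R) * ∫⁻ x in ball z R, F x := by
  set B := ball z R
  have hB : MeasurableSet B := measurableSet_ball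
  set G := B.indicator F
  have hG : Measurable G := hF.indicator hB
  have e1 : ∫⁻ x in B, ∫⁻ y in B, F ((1 - t) • x + t • y) =
      ∫⁻ x in B, ∫⁻ y in B, G ((1 - t) • x + t • y) := by
    refine setLIntegral_congr_fun hB fun x hx => setLIntegral_congr_fun hB fun y hy => ?_
    have : (1 - t) • x + t • y ∈ B :=
      convex_ball z R hx hy (by linarith [ht.2]) ht.1 (by ring)
    simp [G, this]
  have e2 : ∫⁻ y, G y = ∫⁻ x in B, F x := lintegral_indicator hB F
  rw [e1, ← e2]
  have key : ∀ s : ℝ, 1 / 2 ≤ s →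
      ∫⁻ x in B, ∫⁻ y in B, G ((1 - s) • x + s • y) ≤
        ENNReal.ofReal (2 ^ n) * volume B * ∫⁻ y, G y := by
    intro s hs
    calc ∫⁻ x in B, ∫⁻ y in B, G ((1 - s) • x + s • y)
        ≤ ∫⁻ x in B, ENNReal.ofReal (2 ^ n) * ∫⁻ y, G y := by
          refine lintegral_mono fun x => ?_
          exact (setLIntegral_le_lintegral _ _).trans (lintegral_comp_affine G hG _ hs)
      _ = _ := by
          rw [lintegral_const, Measure.restrict_apply_univ]; ring
  rcases le_total (1 / 2) t with h | h
  · exact key t h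
  · rw [lintegral_lintegral_swap (by fun_prop)]
    have := key (1 - t) (by linarith)
    simp only [_root_.sub_sub_cancel] at this
    refine le_trans (le_of_eq ?_) this
    refine lintegral_congr fun x => lintegral_congr fun y => ?_
    rw [add_comm]

/-- Jensen's inequality along a segment. -/
lemma enorm_sub_rpow_le {n : ℕ} {q : ℝ} (hq : 1 ≤ q) {f : E n → ℝ} (hf : ContDiff ℝ 1 f)
    (x y : E n) :
    ‖f x - f y‖ₑ ^ q ≤ ‖x - y‖ₑ ^ q *
      ∫⁻ t in Set.Icc (0 : ℝ) 1, ‖fderiv ℝ f ((1 - t) • x + t • y)‖ₑ ^ q := by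
  have hq0 : 0 ≤ q := by linarith
  have hc : Continuous (fderiv ℝ f) := hf.continuous_fderiv one_ne_zero
  have hd : ∀ t : ℝ, HasDerivAt (fun t : ℝ => f ((1 - t) • x + t • y))
      (fderiv ℝ f ((1 - t) • x + t • y) (y - x)) t := by
    intro t
    have h1 : HasDerivAt (fun t : ℝ => (1 - t) • x + t • y) (y - x) t := by
      have := (((hasDerivAt_id t).const_sub 1).smul_const x).add ((hasDerivAt_id t).smul_const y)
      convert! this using 1
      simp [sub_eq_neg_add]
    exact ((hf.differentiable one_ne_zero _).hasFDerivAt).comp_hasDerivAt t h1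
  have hint := intervalIntegral.integral_eq_sub_of_hasDerivAt (a := 0) (b := 1)
    (fun t _ => hd t) (by apply Continuous.intervalIntegrable; fun_prop)
  simp only [sub_self, zero_smul, one_smul, zero_add, sub_zero, add_zero] at hint
  rw [intervalIntegral.integral_of_le zero_le_one, ← integral_Icc_eq_integral_Ioc] at hint
  have : IsProbabilityMeasure (volume.restrict (Set.Icc (0 : ℝ) 1)) := ⟨by simp⟩
  calc ‖f x - f y‖ₑ ^ q = ‖f y - f x‖ₑ ^ q := by rw [← enorm_neg, neg_sub]
    _ ≤ (∫⁻ t in Set.Icc (0 : ℝ) 1, ‖fderiv ℝ f ((1 - t) • x + t • y) (y - x)‖ₑ) ^ q := by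
        rw [← hint]; gcongr; exact enorm_integral_le_lintegral_enorm _
    _ ≤ (∫⁻ t in Set.Icc (0 : ℝ) 1, ‖x - y‖ₑ * ‖fderiv ℝ f ((1 - t) • x + t • y)‖ₑ) ^ q := by
        gcongr with t
        rw [mul_comm, ← enorm_neg (x - y), neg_sub]
        exact ContinuousLinearMap.le_opENorm _ _
    _ = ‖x - y‖ₑ ^ q * (∫⁻ t in Set.Icc (0 : ℝ) 1,
          ‖fderiv ℝ f ((1 - t) • x + t • y)‖ₑ) ^ q := by
        rw [lintegral_const_mul' _ _ enorm_ne_top, ENNReal.mul_rpow_of_nonneg _ _ hq0]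
    _ ≤ _ := by
        gcongr
        refine jensen _ hq ?_
        exact (Continuous.measurable (by fun_prop)).aemeasurable

lemma enorm_average_rpow_le {n : ℕ} {q : ℝ} (hq : 1 ≤ q) {h : E n → ℝ} (hh : Continuous h)
    (z : E n) {R : ℝ} (hR : 0 < R) :
    ‖⨍ y in ball z R, h y‖ₑ ^ q ≤ (volume (ball z R))⁻¹ * ∫⁻ y in ball z R, ‖h y‖ₑ ^ q := by
  have h0 : volume (ball z R) ≠ 0 := (measure_ball_pos _ _ hR).ne'
  have hne : NeZero (volume.restrict (ball z R)) := ⟨by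
    rw [Ne, Measure.restrict_eq_zero]; exact h0⟩
  have hfin : IsFiniteMeasure (volume.restrict (ball z R)) := ⟨by
    rw [Measure.restrict_apply_univ]; exact measure_ball_lt_top⟩
  have hp : IsProbabilityMeasure
    (((volume.restrict (ball z R)) Set.univ)⁻¹ • volume.restrict (ball z R)) := inferInstance
  rw [average]
  calc _ ≤ (∫⁻ y, ‖h y‖ₑ ∂(((volume.restrict (ball z R)) Set.univ)⁻¹ •
        volume.restrict (ball z R))) ^ q := by
        gcongr; exact enorm_integral_le_lintegral_enorm _
    _ ≤ _ := jensen _ hq (Continuous.measurable (by fun_prop)).aemeasurable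
    _ = _ := by rw [lintegral_smul_measure, Measure.restrict_apply_univ, smul_eq_mul]

lemma average_const_sub {n : ℕ} {f : E n → ℝ} (hf : Continuous f) (a : ℝ)
    (z : E n) {R : ℝ} (hR : 0 < R) :
    ⨍ y in ball z R, (a - f y) = a - ⨍ y in ball z R, f y := by
  have h0 : volume (ball z R) ≠ 0 := (measure_ball_pos _ _ hR).ne'
  have hi : IntegrableOn f (ball z R) :=
    (hf.continuousOn.integrableOn_compact (isCompact_closedBall z R)).mono_set
      ball_subset_closedBall
  have hr : (volume.real (ball z R)) ≠ 0 :=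
    (ENNReal.toReal_pos h0 measure_ball_lt_top.ne).ne'
  have hi' : IntegrableOn (fun _ => a) (ball z R) := integrableOn_const measure_ball_lt_top.ne
  rw [setAverage_eq, setAverage_eq, integral_sub hi' hi, setIntegral_const, smul_sub, smul_smul, inv_mul_cancel₀ hr, one_smul]

/-- The `L^q` Poincaré inequality on balls. -/
theorem poincare {n : ℕ} {q : ℝ} (hq : 1 ≤ q) {f : E n → ℝ} (hf : ContDiff ℝ 1 f)
    (z : E n) {R : ℝ} (hR : 0 < R) :
    ∫⁻ x in ball z R, ‖f x - ⨍ y in ball z R, f y‖ₑ ^ q ≤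
      ENNReal.ofReal (2 ^ n * (2 * R) ^ q) * ∫⁻ x in ball z R, ‖fderiv ℝ f x‖ₑ ^ q := by
  have hq0 : 0 ≤ q := by linarith
  set B := ball z R with hBdef
  have hB : MeasurableSet B := measurableSet_ball
  have h0 : volume B ≠ 0 := (measure_ball_pos _ _ hR).ne'
  have htop : volume B ≠ ∞ := measure_ball_lt_top.ne
  have hfc := hf.continuous
  have hc : Continuous (fderiv ℝ f) := hf.continuous_fderiv one_ne_zero
  set F : E n → ℝ≥0∞ := fun x => ‖fderiv ℝ f x‖ₑ ^ q with hFdef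
  have hF : Measurable F := Continuous.measurable (by fun_prop)
  calc ∫⁻ x in B, ‖f x - ⨍ y in B, f y‖ₑ ^ q
      ≤ ∫⁻ x in B, (volume B)⁻¹ * ∫⁻ y in B, ‖f x - f y‖ₑ ^ q := by
        refine lintegral_mono fun x => ?_
        simp only
        rw [hBdef, ← average_const_sub hfc (f x) z hR]
        exact enorm_average_rpow_le hq (by fun_prop) z hR
    _ ≤ ∫⁻ x in B, (volume B)⁻¹ * ∫⁻ y in B, ENNReal.ofReal ((2 * R) ^ q) *
          ∫⁻ t in Set.Icc (0 : ℝ) 1, F ((1 - t) • x + t • y) := by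
        refine setLIntegral_mono' hB fun x hx => ?_
        gcongr _ * ?_
        refine setLIntegral_mono' hB fun y hy => ?_
        refine (enorm_sub_rpow_le hq hf x y).trans ?_
        gcongr ?_ * _
        rw [← ENNReal.ofReal_rpow_of_nonneg (by positivity) hq0]
        gcongr
        rw [← ofReal_norm]
        gcongr
        rw [← dist_eq_norm]
        have := dist_triangle_right x y z
        rw [hBdef, mem_ball] at hx hy
        linarith
    _ = (volume B)⁻¹ * ENNReal.ofReal ((2 * R) ^ q) * ∫⁻ t in Set.Icc (0 : ℝ) 1,
          ∫⁻ x in B, ∫⁻ y in B, F ((1 - t) • x + t • y) := by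
        have hinv : (volume B)⁻¹ ≠ ∞ := ENNReal.inv_ne_top.2 h0
        rw [lintegral_const_mul' _ _ hinv, mul_assoc]
        congr 1
        simp_rw [lintegral_const_mul' _ _ ENNReal.ofReal_ne_top]
        congr 1
        have e1 : ∀ x, ∫⁻ y in B, ∫⁻ t in Set.Icc (0 : ℝ) 1, F ((1 - t) • x + t • y) =
            ∫⁻ t in Set.Icc (0 : ℝ) 1, ∫⁻ y in B, F ((1 - t) • x + t • y) := by
          intro x
          rw [lintegral_lintegral_swap (by fun_prop)]
        simp_rw [e1]
        rw [lintegral_lintegral_swap]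
        refine Measurable.aemeasurable ?_
        refine Measurable.lintegral_prod_right' (f := fun p : (E n × ℝ) × E n =>
          F ((1 - p.1.2) • p.1.1 + p.1.2 • p.2)) (by fun_prop)
    _ ≤ (volume B)⁻¹ * ENNReal.ofReal ((2 * R) ^ q) * ∫⁻ t in Set.Icc (0 : ℝ) 1,
          ENNReal.ofReal (2 ^ n) * volume B * ∫⁻ x in B, F x := by
        gcongr _ * ?_
        exact setLIntegral_mono' measurableSet_Icc fun t ht => lintegral_segment F hF z R ht
    _ = _ := by
        rw [lintegral_const, Measure.restrict_apply_univ, Real.volume_Icc, sub_zero,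
          ENNReal.ofReal_one, mul_one, ENNReal.ofReal_mul (by positivity)]
        calc _ = ((volume B)⁻¹ * volume B) * (ENNReal.ofReal (2 ^ n) *
              ENNReal.ofReal ((2 * R) ^ q) * ∫⁻ x in B, F x) := by ring
          _ = _ := by rw [ENNReal.inv_mul_cancel h0 htop, one_mul]

/-- Averages over two nested balls of comparable radii differ by at most a multiple of the
radius times `α`, provided the larger ball sees an average gradient at most `α`. -/
lemma abs_average_sub_le {n : ℕ} {q : ℝ} (hq : 1 ≤ q) {f : E n → ℝ} (hf : ContDiff ℝ 1 f)
    {w z : E n} {t R k α : ℝ} (ht : 0 < t) (hk : 1 ≤ k) (hα : 0 < α) (hR : R = k * t)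
    (hsub : ball w t ⊆ ball z R)
    (hF : ∫⁻ x in ball z R, ‖fderiv ℝ f x‖ₑ ^ q ≤
      ENNReal.ofReal (α ^ q) * volume (ball z R)) :
    |(⨍ y in ball w t, f y) - ⨍ y in ball z R, f y| ≤ (2 * k) ^ n * (2 * R * α) := by
  have hk0 : 0 < k := by linarith
  have hR0 : 0 < R := by rw [hR]; positivity
  have hq0 : 0 < q := by linarith
  set m := ⨍ y in ball z R, f y with hm
  have h0 : volume (ball w t) ≠ 0 := (measure_ball_pos _ _ ht).ne'
  have htop : volume (ball w t) ≠ ∞ := measure_ball_lt_top.ne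
  have hv : volume (ball z R) = ENNReal.ofReal (k ^ n) * volume (ball w t) := by
    rw [hR]; exact volume_ball_mul z w hk0
  have h1 : ‖(⨍ y in ball w t, f y) - m‖ₑ ^ q ≤ ENNReal.ofReal ((2 * k) ^ n * (2 * R * α) ^ q) := by
    calc ‖(⨍ y in ball w t, f y) - m‖ₑ ^ q = ‖⨍ y in ball w t, (m - f y)‖ₑ ^ q := by
          rw [average_const_sub hf.continuous m w ht, ← enorm_neg, neg_sub]
      _ ≤ (volume (ball w t))⁻¹ * ∫⁻ y in ball w t, ‖m - f y‖ₑ ^ q :=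
          enorm_average_rpow_le hq (continuous_const.sub hf.continuous) w ht
      _ ≤ (volume (ball w t))⁻¹ * ∫⁻ y in ball z R, ‖f y - m‖ₑ ^ q := by
          gcongr _ * ?_
          refine (lintegral_mono_set hsub).trans (lintegral_mono fun y => ?_)
          rw [← enorm_neg, neg_sub]
      _ ≤ (volume (ball w t))⁻¹ * (ENNReal.ofReal (2 ^ n * (2 * R) ^ q) *
            (ENNReal.ofReal (α ^ q) * (ENNReal.ofReal (k ^ n) * volume (ball w t)))) := by
          gcongr _ * ?_
          refine (poincare hq hf z hR0).trans ?_
          gcongr _ * ?_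
          rw [← hv]; exact hF
      _ = ((volume (ball w t))⁻¹ * volume (ball w t)) * (ENNReal.ofReal (2 ^ n * (2 * R) ^ q) *
            ENNReal.ofReal (α ^ q) * ENNReal.ofReal (k ^ n)) := by ring
      _ = _ := by
          rw [ENNReal.inv_mul_cancel h0 htop, one_mul, ← ENNReal.ofReal_mul (by positivity),
            ← ENNReal.ofReal_mul (by positivity), Real.mul_rpow (x := 2 * R) (y := α)
            (by positivity) hα.le, mul_pow]
          congr 1; ring
  have hk1 : 1 ≤ (2 * k) ^ n := one_le_pow₀ (by linarith)
  have h2 : ‖(⨍ y in ball w t, f y) - m‖ₑ ^ q ≤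
      ENNReal.ofReal (((2 * k) ^ n * (2 * R * α)) ^ q) := by
    refine h1.trans (ENNReal.ofReal_le_ofReal ?_)
    rw [Real.mul_rpow (x := (2 * k) ^ n) (by positivity) (by positivity)]
    gcongr
    exact Real.self_le_rpow_of_one_le hk1 hq
  rw [← ENNReal.ofReal_rpow_of_nonneg (by positivity) hq0.le,
    ENNReal.rpow_le_rpow_iff hq0, ← ofReal_norm,
    ENNReal.ofReal_le_ofReal_iff (by positivity)] at h2
  exact h2

/-! ### Stopping scale, covering and partition of unity -/

/-- The stopping scale. Call a ball `B(y, r)` bad if `F` has average at least `A` on it; then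
`ρ(x) = sup (2 r - |x - y|)⁺` over bad balls. It is `1`-Lipschitz as a supremum of `1`-Lipschitz
functions, no ball centred at `x` of radius `ρ(x)` or more is bad, and Vitali's covering
lemma bounds the measure of `{ρ > 0}`. -/
theorem exists_scale {n : ℕ} (hn : 1 ≤ n) (F : E n → ℝ≥0∞)
    (hI : ∫⁻ x, F x ≠ ∞) {A : ℝ} (hA : 0 < A) :
    ∃ (ρ : E n → ℝ) (R : ℝ), (∀ x, 0 ≤ ρ x) ∧ (∀ x, ρ x ≤ R) ∧
      (∀ x y, ρ x ≤ ρ y + dist x y) ∧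
      (∀ x s, 0 < s → ρ x ≤ s →
        ∫⁻ y in ball x s, F y ≤ ENNReal.ofReal A * volume (ball x s)) ∧
      ENNReal.ofReal A * volume {x | 0 < ρ x} ≤ ENNReal.ofReal (8 ^ n) * ∫⁻ x, F x := by
  set bad : Set (E n × ℝ) := {p | 0 < p.2 ∧
    ENNReal.ofReal A * volume (ball p.1 p.2) ≤ ∫⁻ y in ball p.1 p.2, F y} with hbad
  -- bad balls have bounded radii because `F` is integrable
  obtain ⟨R, hR0, hR⟩ : ∃ R : ℝ, 0 ≤ R ∧ ∀ p ∈ bad, p.2 ≤ R := by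
    set V := volume (ball (0 : E n) 1)
    have hV0 : V ≠ 0 := (measure_ball_pos _ _ one_pos).ne'
    have hVt : V ≠ ∞ := measure_ball_lt_top.ne
    have hA0 : ENNReal.ofReal A ≠ 0 := by simpa using hA
    have hfin : (∫⁻ x, F x) / (ENNReal.ofReal A * V) ≠ ∞ :=
      ENNReal.div_ne_top hI (mul_ne_zero hA0 hV0)
    refine ⟨max 1 ((∫⁻ x, F x) / (ENNReal.ofReal A * V)).toReal, by positivity, ?_⟩
    rintro ⟨y, r⟩ ⟨hr, hp⟩
    simp only at hr hp ⊢
    rcases le_total r 1 with h | h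
    · exact le_max_of_le_left h
    · refine le_max_of_le_right ?_
      have h1 : volume (ball y r) = ENNReal.ofReal (r ^ n) * V := by
        have := volume_ball_mul y 0 (r := 1) hr
        rwa [mul_one] at this
      have h2 : ENNReal.ofReal (r ^ n) ≤ (∫⁻ x, F x) / (ENNReal.ofReal A * V) := by
        rw [ENNReal.le_div_iff_mul_le (Or.inl (mul_ne_zero hA0 hV0))
          (Or.inl (ENNReal.mul_ne_top ENNReal.ofReal_ne_top hVt))]
        calc _ = ENNReal.ofReal A * volume (ball y r) := by rw [h1]; ring
          _ ≤ _ := hp.trans (setLIntegral_le_lintegral _ _)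
      exact (le_self_pow₀ h (by omega)).trans ((ENNReal.ofReal_le_iff_le_toReal hfin).1 h2)
  set ρ : E n → ℝ := fun x => ⨆ p : bad, max (2 * p.1.2 - dist x p.1.1) 0 with hρ
  have hle : ∀ x, ∀ p : bad, max (2 * p.1.2 - dist x p.1.1) 0 ≤ 2 * R := by
    intro x p
    have := hR p.1 p.2
    have h2 : 0 ≤ dist x p.1.1 := dist_nonneg
    exact max_le (by linarith) (by linarith)
  have hbdd : ∀ x, BddAbove (Set.range fun p : bad => max (2 * p.1.2 - dist x p.1.1) 0) :=
    fun x => ⟨2 * R, by rintro _ ⟨p, rfl⟩; exact hle x p⟩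
  have hnn : ∀ x, 0 ≤ ρ x := fun x => Real.iSup_nonneg fun p => le_max_right _ _
  have hlow : ∀ x, ∀ p ∈ bad, 2 * p.2 - dist x p.1 ≤ ρ x := fun x p hp =>
    (le_max_left _ _).trans (le_ciSup (hbdd x) (⟨p, hp⟩ : bad))
  refine ⟨ρ, 2 * R, hnn, fun x => Real.iSup_le (hle x) (by linarith), ?_, ?_, ?_⟩
  · intro x y
    refine Real.iSup_le (fun p => max_le ?_ ?_) (add_nonneg (hnn y) dist_nonneg)
    · have h1 := hlow y p.1 p.2
      have h2 := dist_triangle_left y p.1.1 x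
      linarith
    · exact add_nonneg (hnn y) dist_nonneg
  · intro x s hs hxs
    by_contra! hcon
    have h1 := hlow x (x, s) ⟨hs, hcon.le⟩
    simp only [dist_self] at h1
    linarith
  · have : Nonempty (Fin n) := ⟨⟨0, by omega⟩⟩
    obtain ⟨u, hu, hdisj, hcov⟩ := Vitali.exists_disjoint_subfamily_covering_enlargement_closedBall
      bad Prod.fst (fun p => 2 * p.2) (2 * R) (fun p hp => by linarith [hR p hp]) 4 (by norm_num)
    have hdisj' : u.PairwiseDisjoint fun p => ball p.1 p.2 := by
      refine hdisj.mono_on fun p hp => ball_subset_closedBall.trans (closedBall_subset_closedBall ?_)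
      have := (hu hp).1
      linarith
    have hcount : u.Countable := by
      refine hdisj'.countable_of_isOpen (fun p _ => isOpen_ball) fun p hp => ?_
      exact nonempty_ball.2 (hu hp).1
    have hsub : {x | 0 < ρ x} ⊆ ⋃ p ∈ u, closedBall p.1 (8 * p.2) := by
      intro x hx
      obtain ⟨p, hp⟩ : ∃ p : bad, 0 < max (2 * p.1.2 - dist x p.1.1) 0 := by
        by_contra! hcon
        exact absurd (Real.iSup_le hcon le_rfl) (not_le.2 hx)
      have hp' : dist x p.1.1 < 2 * p.1.2 := by
        rcases lt_max_iff.1 hp with h | h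
        · linarith
        · exact absurd h (lt_irrefl _)
      obtain ⟨b, hb, hsb⟩ := hcov p.1 p.2
      refine Set.mem_biUnion hb ?_
      have := hsb (mem_closedBall.2 hp'.le)
      rwa [← mul_assoc, show (4 * 2 : ℝ) = 8 by norm_num] at this
    calc ENNReal.ofReal A * volume {x | 0 < ρ x}
        ≤ ENNReal.ofReal A * ∑' p : u, volume (closedBall p.1.1 (8 * p.1.2)) := by
          gcongr
          exact (measure_mono hsub).trans (measure_biUnion_le _ hcount _)
      _ = ENNReal.ofReal (8 ^ n) * ∑' p : u, ENNReal.ofReal A * volume (ball p.1.1 p.1.2) := by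
          rw [← ENNReal.tsum_mul_left, ← ENNReal.tsum_mul_left]
          congr 1; ext p
          have := (hu p.2).1
          rw [Measure.addHaar_closedBall_eq_addHaar_ball, volume_ball_mul p.1.1 p.1.1 (by norm_num)]
          ring
      _ ≤ ENNReal.ofReal (8 ^ n) * ∑' p : u, ∫⁻ y in ball p.1.1 p.1.2, F y := by
          gcongr with p
          exact (hu p.2).2
      _ = ENNReal.ofReal (8 ^ n) * ∫⁻ y in ⋃ p ∈ u, ball p.1 p.2, F y := by
          rw [lintegral_biUnion hcount (fun p _ => measurableSet_ball) hdisj']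
      _ ≤ _ := by
          gcongr _ * ?_
          exact setLIntegral_le_lintegral _ _

/-- Vitali's lemma selects finitely many points whose balls at the scale of `ρ` cover
`{ρ > ε}`, their shrunken copies being disjoint. Finiteness comes from the
finite measure of `{ρ > 0}` and the lower bound `ε` on the scale. -/
theorem exists_cover {n : ℕ} {ρ : E n → ℝ} {R : ℝ} (hR : ∀ x, ρ x ≤ R)
    (hLip : ∀ x y, ρ x ≤ ρ y + dist x y) (hfin : volume {x | 0 < ρ x} ≠ ∞)
    {ε : ℝ} (hε : 0 < ε) :
    ∃ (m : ℕ) (p : ℕ → E n), (∀ i < m, ε < ρ (p i)) ∧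
      (∀ x, ε < ρ x → ∃ i < m, x ∈ closedBall (p i) (4 * (ρ (p i) / 100))) ∧
      (∀ i < m, ∀ j < m, i ≠ j →
        Disjoint (ball (p i) (ρ (p i) / 100)) (ball (p j) (ρ (p j) / 100))) := by
  obtain ⟨u, hu, hdisj, hcov⟩ := Vitali.exists_disjoint_subfamily_covering_enlargement_closedBall
    {x | ε < ρ x} id (fun x => ρ x / 100) (R / 100) (fun x _ => by
      have := hR x; linarith) 4 (by norm_num)
  simp only [id] at hdisj hcov
  have hdisj' : u.PairwiseDisjoint fun x => ball x (ρ x / 100) :=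
    hdisj.mono fun p => ball_subset_closedBall
  have hufin : Finite u := by
    have h1 := Measure.finite_const_le_meas_of_disjoint_iUnion (volume : Measure (E n))
      (ε := volume (ball (0 : E n) (ε / 100))) (measure_ball_pos _ _ (by positivity))
      (As := fun x : u => ball x.1 (ρ x.1 / 100)) (fun _ => measurableSet_ball)
      (fun x y hxy => hdisj' x.2 y.2 (fun h => hxy (Subtype.ext h))) (by
        refine ne_top_of_le_ne_top hfin (measure_mono ?_)
        refine Set.iUnion_subset fun x y hy => ?_
        have h1 : ε < ρ x.1 := hu x.2
        have h2 := hLip x.1 y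
        rw [mem_ball, dist_comm] at hy
        simp only [Set.mem_ofPred_eq]
        linarith)
    have h2 : {i : u | volume (ball (0 : E n) (ε / 100)) ≤ volume (ball i.1 (ρ i.1 / 100))} =
        Set.univ := by
      ext x
      have h1 : ε < ρ x.1 := hu x.2
      simp only [Set.mem_ofPred_eq, Set.mem_univ, iff_true]
      rw [Measure.addHaar_ball_center, Measure.addHaar_ball_center _ x.1]
      exact measure_mono (ball_subset_ball (by linarith))
    rw [h2] at h1
    exact Set.finite_univ_iff.1 h1
  obtain ⟨m, ⟨e⟩⟩ := Finite.exists_equiv_fin u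
  have hp : ∀ i (hi : i < m), (fun i => if h : i < m then (e.symm ⟨i, h⟩ : E n) else 0) i =
      (e.symm ⟨i, hi⟩ : E n) := fun i hi => by simp [hi]
  refine ⟨m, fun i => if h : i < m then (e.symm ⟨i, h⟩ : E n) else 0, ?_, ?_, ?_⟩
  · intro i hi
    rw [hp i hi]
    exact hu (e.symm ⟨i, hi⟩).2
  · intro x hx
    obtain ⟨b, hb, hsb⟩ := hcov x hx
    refine ⟨e ⟨b, hb⟩, (e ⟨b, hb⟩).2, ?_⟩
    rw [hp _ (e ⟨b, hb⟩).2]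
    simp only [Fin.eta, Equiv.symm_apply_apply]
    exact hsb (mem_closedBall_self (by linarith))
  · intro i hi j hj hij
    rw [hp i hi, hp j hj]
    refine hdisj' (e.symm ⟨i, hi⟩).2 (e.symm ⟨j, hj⟩).2 fun h => hij ?_
    have := e.symm.injective (Subtype.ext h)
    simpa using this

lemma exists_bump (n : ℕ) : ∃ A : ℝ, 0 < A ∧ ∀ (c : E n) (d : ℝ), 0 < d →
    ∃ φ : E n → ℝ, ContDiff ℝ 1 φ ∧ (∀ x, 0 ≤ φ x ∧ φ x ≤ 1) ∧
      (∀ x ∈ closedBall c (4 * (d / 10)), φ x = 1) ∧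
      (Function.support φ ⊆ closedBall c (8 * (d / 10))) ∧
      ∀ x, ‖fderiv ℝ φ x‖ ≤ (ball c d).indicator (fun _ => A / d) x := by
  let ψ : ContDiffBump (0 : E n) := ⟨4 / 10, 8 / 10, by norm_num, by norm_num⟩
  have hψ : ContDiff ℝ 1 ψ := ψ.contDiff
  obtain ⟨A, hA⟩ := (hψ.continuous_fderiv one_ne_zero).bounded_above_of_compact_support
    (ψ.hasCompactSupport.fderiv (𝕜 := ℝ))
  refine ⟨max A 1, by positivity, fun c d hd => ⟨fun x => ψ (d⁻¹ • (x - c)), ?_, ?_, ?_, ?_, ?_⟩⟩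
  · fun_prop
  · exact fun x => ⟨ψ.nonneg, ψ.le_one⟩
  · intro x hx
    refine ψ.one_of_mem_closedBall ?_
    rw [mem_closedBall, dist_eq_norm] at hx
    rw [mem_closedBall_zero_iff, norm_smul, norm_inv, Real.norm_of_nonneg hd.le,
      inv_mul_le_iff₀ hd]
    change _ ≤ d * (4 / 10)
    linarith
  · intro x hx
    have h1 : d⁻¹ • (x - c) ∈ Function.support ψ := hx
    rw [ψ.support_eq, mem_ball_zero_iff, norm_smul, norm_inv, Real.norm_of_nonneg hd.le,
      inv_mul_lt_iff₀ hd] at h1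
    change _ < d * (8 / 10) at h1
    rw [mem_closedBall, dist_eq_norm]
    linarith
  · intro x
    have hder : fderiv ℝ (fun x => ψ (d⁻¹ • (x - c))) x =
        d⁻¹ • fderiv ℝ ψ (d⁻¹ • (x - c)) := by
      have h1 : HasFDerivAt (fun x => d⁻¹ • (x - c)) (d⁻¹ • ContinuousLinearMap.id ℝ (E n)) x :=
        ((hasFDerivAt_id x).sub_const c).const_smul d⁻¹
      have h2 := ((hψ.differentiable one_ne_zero (d⁻¹ • (x - c))).hasFDerivAt).comp x h1
      have h3 := h2.fderiv
      rw [ContinuousLinearMap.comp_smul, ContinuousLinearMap.comp_id] at h3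
      exact h3
    rw [hder, norm_smul, norm_inv, Real.norm_of_nonneg hd.le]
    by_cases hx : x ∈ ball c d
    · rw [Set.indicator_of_mem hx, div_eq_inv_mul]
      gcongr
      exact (hA _).trans (le_max_left _ _)
    · rw [Set.indicator_of_notMem hx]
      have h1 : d⁻¹ • (x - c) ∉ tsupport ψ := by
        rw [ψ.tsupport_eq, mem_closedBall_zero_iff, norm_smul, norm_inv,
          Real.norm_of_nonneg hd.le, inv_mul_le_iff₀ hd]
        change ¬ (_ ≤ d * (8 / 10))
        rw [mem_ball, dist_eq_norm] at hx
        linarith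
      have h2 : fderiv ℝ ψ (d⁻¹ • (x - c)) = 0 :=
        image_eq_zero_of_notMem_tsupport fun h => h1 (tsupport_fderiv_subset ℝ h)
      simp [h2]

/-- Product rule for the telescoping product. -/
lemma norm_fderiv_prod_le {n : ℕ} (φ : ℕ → E n → ℝ) (k : ℕ)
    (hd : ∀ i < k, Differentiable ℝ (φ i)) (h01 : ∀ i < k, ∀ x, 0 ≤ φ i x ∧ φ i x ≤ 1) :
    Differentiable ℝ (fun x => ∏ j ∈ Finset.range k, (1 - φ j x)) ∧
    ∀ x, (0 ≤ ∏ j ∈ Finset.range k, (1 - φ j x) ∧ ∏ j ∈ Finset.range k, (1 - φ j x) ≤ 1) ∧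
      ‖fderiv ℝ (fun x => ∏ j ∈ Finset.range k, (1 - φ j x)) x‖ ≤
        ∑ j ∈ Finset.range k, ‖fderiv ℝ (φ j) x‖ := by
  induction k with
  | zero => simp
  | succ k ih =>
    obtain ⟨ih1, ih2⟩ := ih (fun i hi => hd i (by omega)) (fun i hi => h01 i (by omega))
    have hk := hd k (by omega)
    have h1k : Differentiable ℝ (fun x => 1 - φ k x) := hk.const_sub 1
    simp only [Finset.prod_range_succ, Finset.sum_range_succ]
    refine ⟨ih1.mul h1k, fun x => ?_⟩
    obtain ⟨⟨ha, hb⟩, hc⟩ := ih2 x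
    obtain ⟨h0, h1⟩ := h01 k (by omega) x
    refine ⟨⟨mul_nonneg ha (by linarith), mul_le_one₀ hb (by linarith) (by linarith)⟩, ?_⟩
    rw [fderiv_fun_mul (ih1 x) (h1k x), fderiv_const_sub]
    refine (norm_add_le _ _).trans ?_
    rw [norm_smul, norm_smul, norm_neg, add_comm, Real.norm_of_nonneg ha,
      Real.norm_of_nonneg (by linarith : 0 ≤ 1 - φ k x)]
    refine add_le_add ?_ ?_
    · exact (mul_le_of_le_one_left (norm_nonneg _) (by linarith)).trans hc
    · exact mul_le_of_le_one_left (norm_nonneg _) hb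

lemma sum_telescope (a : ℕ → ℝ) (m : ℕ) :
    ∑ i ∈ Finset.range m, a i * ∏ j ∈ Finset.range i, (1 - a j) =
      1 - ∏ j ∈ Finset.range m, (1 - a j) := by
  induction m with
  | zero => simp
  | succ m ih => rw [Finset.sum_range_succ, ih, Finset.prod_range_succ]; ring

/-- A smooth partition of unity subordinate to finitely many balls: from bump functions `φᵢ` put
`χᵢ = φᵢ ∏_{j < i} (1 - φⱼ)`, so that `∑ χᵢ = 1 - ∏ (1 - φⱼ)`. -/
theorem exists_partition (n : ℕ) : ∃ A : ℝ, 0 < A ∧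
    ∀ (m : ℕ) (p : ℕ → E n) (d : ℕ → ℝ), (∀ i < m, 0 < d i) →
    ∃ χ : ℕ → E n → ℝ, (∀ i < m, ContDiff ℝ 1 (χ i)) ∧ (∀ i < m, ∀ x, 0 ≤ χ i x ∧ χ i x ≤ 1) ∧
      (∀ i < m, Function.support (χ i) ⊆ closedBall (p i) (8 * (d i / 10))) ∧
      (∀ i < m, ∀ x, ‖fderiv ℝ (χ i) x‖ ≤
        ∑ j ∈ Finset.range m, (ball (p j) (d j)).indicator (fun _ => A / d j) x) ∧
      (∀ x, ∑ i ∈ Finset.range m, χ i x ≤ 1) ∧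
      (∀ x, ∀ j < m, x ∈ closedBall (p j) (4 * (d j / 10)) →
        ∑ i ∈ Finset.range m, χ i x = 1) := by
  obtain ⟨A, hA, hbump⟩ := exists_bump n
  refine ⟨A, hA, fun m p d hd => ?_⟩
  have : ∀ i, ∃ φ : E n → ℝ, i < m → ContDiff ℝ 1 φ ∧ (∀ x, 0 ≤ φ x ∧ φ x ≤ 1) ∧
      (∀ x ∈ closedBall (p i) (4 * (d i / 10)), φ x = 1) ∧
      (Function.support φ ⊆ closedBall (p i) (8 * (d i / 10))) ∧
      ∀ x, ‖fderiv ℝ φ x‖ ≤ (ball (p i) (d i)).indicator (fun _ => A / d i) x := by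
    intro i
    by_cases hi : i < m
    · obtain ⟨φ, hφ⟩ := hbump (p i) (d i) (hd i hi)
      exact ⟨φ, fun _ => hφ⟩
    · exact ⟨0, fun h => absurd h hi⟩
  choose φ hφ using this
  have hdiff : ∀ i < m, Differentiable ℝ (φ i) := fun i hi => (hφ i hi).1.differentiable one_ne_zero
  have h01 : ∀ i < m, ∀ x, 0 ≤ φ i x ∧ φ i x ≤ 1 := fun i hi => (hφ i hi).2.1
  have hprod : ∀ k ≤ m, _ := fun k hk => norm_fderiv_prod_le φ k
    (fun i hi => hdiff i (by omega)) (fun i hi => h01 i (by omega))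
  refine ⟨fun i x => φ i x * ∏ j ∈ Finset.range i, (1 - φ j x), ?_, ?_, ?_, ?_, ?_, ?_⟩
  · intro i hi
    refine (hφ i hi).1.mul (contDiff_prod fun j hj => ?_)
    exact contDiff_const.sub (hφ j ((Finset.mem_range.1 hj).trans hi)).1
  · intro i hi x
    obtain ⟨⟨ha, hb⟩, -⟩ := (hprod i hi.le).2 x
    obtain ⟨h0, h1⟩ := h01 i hi x
    exact ⟨mul_nonneg h0 ha, mul_le_one₀ h1 ha hb⟩
  · intro i hi
    exact (Function.support_mul_subset_left _ _).trans (hφ i hi).2.2.2.1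
  · intro i hi x
    obtain ⟨⟨ha, hb⟩, hc⟩ := (hprod i hi.le).2 x
    obtain ⟨h0, h1⟩ := h01 i hi x
    rw [fderiv_fun_mul (hdiff i hi x) ((hprod i hi.le).1 x)]
    calc _ ≤ ∑ j ∈ Finset.range (i + 1), ‖fderiv ℝ (φ j) x‖ := by
          refine (norm_add_le _ _).trans ?_
          rw [norm_smul, norm_smul, Real.norm_of_nonneg ha, Real.norm_of_nonneg h0,
            Finset.sum_range_succ]
          refine add_le_add ?_ ?_
          · exact (mul_le_of_le_one_left (norm_nonneg _) h1).trans hc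
          · exact mul_le_of_le_one_left (norm_nonneg _) hb
      _ ≤ ∑ j ∈ Finset.range m, ‖fderiv ℝ (φ j) x‖ :=
          Finset.sum_le_sum_of_subset_of_nonneg
            (Finset.range_subset_range.2 hi) fun _ _ _ => norm_nonneg _
      _ ≤ _ := Finset.sum_le_sum fun j hj => (hφ j (Finset.mem_range.1 hj)).2.2.2.2 x
  · intro x
    rw [sum_telescope fun i => φ i x]
    linarith [((hprod m le_rfl).2 x).1.1]
  · intro x j hj hx
    rw [sum_telescope fun i => φ i x, Finset.prod_eq_zero (Finset.mem_range.2 hj)]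
    · ring
    · rw [(hφ j hj).2.2.1 x hx]; ring

/-! ### Bounded overlap and the bad functions -/

lemma scale_comparable {n : ℕ} {ρ : E n → ℝ} (hLip : ∀ x y, ρ x ≤ ρ y + dist x y) {x c : E n}
    (hx : x ∈ ball c (ρ c / 10)) : 9 * (ρ c / 10) ≤ ρ x ∧ ρ x ≤ 11 * (ρ c / 10) := by
  have h1 := hLip x c
  have h2 := hLip c x
  rw [mem_ball] at hx
  rw [dist_comm] at h2
  constructor <;> linarith

open Classical in
/-- Bounded overlap: the balls containing `x` have radii comparable to `ρ x`, and their disjoint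
shrunken copies all lie in `B(x, 2 ρ x)`. -/
lemma card_overlap {n : ℕ} {ρ : E n → ℝ} (hLip : ∀ x y, ρ x ≤ ρ y + dist x y)
    {m : ℕ} {p : ℕ → E n} (hpos : ∀ i < m, 0 < ρ (p i))
    (hdisj : ∀ i < m, ∀ j < m, i ≠ j →
      Disjoint (ball (p i) (ρ (p i) / 100)) (ball (p j) (ρ (p j) / 100))) (x : E n) :
    ((Finset.range m).filter fun i => x ∈ ball (p i) (ρ (p i) / 10)).card ≤ 220 ^ n := by
  set S := (Finset.range m).filter fun i => x ∈ ball (p i) (ρ (p i) / 10) with hS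
  rcases S.eq_empty_or_nonempty with h | ⟨i₀, hi₀⟩
  · simp [h]
  have hmem : ∀ i ∈ S, i < m ∧ x ∈ ball (p i) (ρ (p i) / 10) := fun i hi => by
    simpa [hS] using hi
  have hx0 : 0 < ρ x := by
    have h1 := hpos i₀ (hmem i₀ hi₀).1
    have h2 := (scale_comparable hLip (hmem i₀ hi₀).2).1
    linarith
  set v := volume (ball x (ρ x / 110))
  have hv0 : v ≠ 0 := (measure_ball_pos _ _ (by positivity)).ne'
  have hvt : v ≠ ∞ := measure_ball_lt_top.ne
  have key : (S.card : ℝ≥0∞) * v ≤ ENNReal.ofReal (220 ^ n) * v := by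
    calc (S.card : ℝ≥0∞) * v = ∑ i ∈ S, v := by rw [Finset.sum_const, nsmul_eq_mul]
      _ ≤ ∑ i ∈ S, volume (ball (p i) (ρ (p i) / 100)) := by
          refine Finset.sum_le_sum fun i hi => ?_
          have h2 := (scale_comparable hLip (hmem i hi).2).2
          simp only [v]
          rw [Measure.addHaar_ball_center, Measure.addHaar_ball_center _ (p i)]
          exact measure_mono (ball_subset_ball (by linarith))
      _ = volume (⋃ i ∈ S, ball (p i) (ρ (p i) / 100)) := by
          rw [measure_biUnion_finset]
          · intro i hi j hj hij
            exact hdisj i (hmem i hi).1 j (hmem j hj).1 hij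
          · exact fun _ _ => measurableSet_ball
      _ ≤ volume (ball x (220 * (ρ x / 110))) := by
          refine measure_mono (Set.iUnion₂_subset fun i hi => ball_subset_ball' ?_)
          have h1 := hpos i (hmem i hi).1
          have h2 := (scale_comparable hLip (hmem i hi).2).1
          have h3 := (hmem i hi).2
          rw [mem_ball, dist_comm] at h3
          linarith
      _ = _ := volume_ball_mul x x (by norm_num)
  have h2 := (ENNReal.mul_le_mul_iff_left hv0 hvt).1 key
  have h3 : ENNReal.ofReal (220 ^ n) = ((220 ^ n : ℕ) : ℝ≥0∞) := by
    rw [← ENNReal.ofReal_natCast]; norm_num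
  rw [h3] at h2
  exact_mod_cast h2

open Classical in
lemma sum_indicator_le {n : ℕ} {ρ : E n → ℝ}
    (hLip : ∀ x y, ρ x ≤ ρ y + dist x y)
    {m : ℕ} {p : ℕ → E n} (hpos : ∀ i < m, 0 < ρ (p i)) {N : ℕ} {x : E n}
    (hcard : ((Finset.range m).filter fun i => x ∈ ball (p i) (ρ (p i) / 10)).card ≤ N)
    {A : ℝ} (hA : 0 < A) :
    (∑ j ∈ Finset.range m, (ball (p j) (ρ (p j) / 10)).indicator (fun _ => A / (ρ (p j) / 10)) x)
      * ρ x ≤ N * (11 * A) := by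
  simp only [Set.indicator_apply]
  rw [← Finset.sum_filter, Finset.sum_mul]
  calc _ ≤ ∑ j ∈ (Finset.range m).filter fun i => x ∈ ball (p i) (ρ (p i) / 10), 11 * A := by
        refine Finset.sum_le_sum fun i hi => ?_
        simp only [Finset.mem_filter, Finset.mem_range] at hi
        have h1 := hpos i hi.1
        have h2 := (scale_comparable hLip hi.2).2
        rw [div_mul_eq_mul_div, div_le_iff₀ (by positivity)]
        nlinarith
    _ ≤ _ := by
        rw [Finset.sum_const, nsmul_eq_mul]
        gcongr

lemma norm_sum_smul_le {V : Type*} [NormedAddCommGroup V] [NormedSpace ℝ V] {m N : ℕ}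
    {S : Finset ℕ} (hS : S ⊆ Finset.range m) (hN : S.card ≤ N) (a : ℕ → ℝ) (v : ℕ → V) {L T : ℝ}
    (hL : 0 ≤ L) (hT : 0 ≤ T)
    (h0 : ∀ i < m, i ∉ S → v i = 0) (h1 : ∀ i ∈ S, |a i| ≤ L) (h2 : ∀ i ∈ S, ‖v i‖ ≤ T) :
    ‖∑ i ∈ Finset.range m, a i • v i‖ ≤ N * (L * T) := by
  rw [← Finset.sum_subset hS fun i hi hi' => by rw [h0 i (Finset.mem_range.1 hi) hi', smul_zero]]
  calc _ ≤ ∑ i ∈ S, L * T := by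
        refine norm_sum_le_of_le _ fun i hi => ?_
        rw [norm_smul]
        exact mul_le_mul (h1 i hi) (h2 i hi) (norm_nonneg _) hL
    _ ≤ _ := by
        rw [Finset.sum_const, nsmul_eq_mul]
        gcongr

lemma fderiv_bad {n : ℕ} {f χ : E n → ℝ} (hf : ContDiff ℝ 1 f) (hχ : ContDiff ℝ 1 χ) (a : ℝ)
    (x : E n) : fderiv ℝ (fun x => χ x * (f x - a)) x =
      χ x • fderiv ℝ f x + (f x - a) • fderiv ℝ χ x := by
  rw [fderiv_fun_mul (hχ.differentiable one_ne_zero x)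
    ((hf.differentiable one_ne_zero x).sub_const a), fderiv_sub_const]

/-- The `L^q` bound on the gradient of a bad function: the product rule and Poincaré's
inequality. -/
lemma lintegral_fderiv_bad_le {n : ℕ} {q : ℝ} (hq : 1 ≤ q) {f χ : E n → ℝ} (hf : ContDiff ℝ 1 f)
    (hχ : ContDiff ℝ 1 χ) {c : E n} {d M : ℝ} (hd : 0 < d) (hM : 0 ≤ M)
    (h01 : ∀ x, 0 ≤ χ x ∧ χ x ≤ 1) (hg : ∀ x ∈ ball c d, ‖fderiv ℝ χ x‖ ≤ M / d) :
    ∫⁻ x in ball c d, ‖fderiv ℝ (fun x => χ x * (f x - ⨍ y in ball c d, f y)) x‖ₑ ^ q ≤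
      ENNReal.ofReal (2 ^ (q - 1) * (1 + 2 ^ n * (2 * M) ^ q)) *
        ∫⁻ x in ball c d, ‖fderiv ℝ f x‖ₑ ^ q := by
  have hq0 : 0 ≤ q := by linarith
  set a := ⨍ y in ball c d, f y with ha
  have hfc := hf.continuous
  have hc : Continuous (fderiv ℝ f) := hf.continuous_fderiv one_ne_zero
  calc _ ≤ ∫⁻ x in ball c d, ENNReal.ofReal (2 ^ (q - 1)) * (‖fderiv ℝ f x‖ₑ ^ q +
          ENNReal.ofReal ((M / d) ^ q) * ‖f x - a‖ₑ ^ q) := by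
        refine setLIntegral_mono' measurableSet_ball fun x hx => ?_
        have h1 : ‖fderiv ℝ (fun x => χ x * (f x - a)) x‖ₑ ≤
            ‖fderiv ℝ f x‖ₑ + ENNReal.ofReal (M / d) * ‖f x - a‖ₑ := by
          rw [fderiv_bad hf hχ]
          refine (enorm_add_le (χ x • fderiv ℝ f x) ((f x - a) • fderiv ℝ χ x)).trans (add_le_add ?_ ?_)
          · rw [← ofReal_norm, ← ofReal_norm, norm_smul, Real.norm_of_nonneg (h01 x).1]
            exact ENNReal.ofReal_le_ofReal (mul_le_of_le_one_left (norm_nonneg _) (h01 x).2)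
          · rw [← ofReal_norm, ← ofReal_norm, norm_smul, ← ENNReal.ofReal_mul (by positivity),
              mul_comm]
            exact ENNReal.ofReal_le_ofReal (mul_le_mul_of_nonneg_right (hg x hx) (norm_nonneg _))
        refine (ENNReal.rpow_le_rpow h1 hq0).trans ?_
        refine (ENNReal.rpow_add_le_mul_rpow_add_rpow _ _ hq).trans (le_of_eq ?_)
        rw [ENNReal.mul_rpow_of_nonneg _ _ hq0, ENNReal.ofReal_rpow_of_nonneg (by positivity) hq0,
          ← ENNReal.ofReal_rpow_of_nonneg (by norm_num : (0 : ℝ) ≤ 2) (by linarith)]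
        norm_num
    _ = ENNReal.ofReal (2 ^ (q - 1)) * ((∫⁻ x in ball c d, ‖fderiv ℝ f x‖ₑ ^ q) +
          ENNReal.ofReal ((M / d) ^ q) * ∫⁻ x in ball c d, ‖f x - a‖ₑ ^ q) := by
        rw [lintegral_const_mul' _ _ ENNReal.ofReal_ne_top, lintegral_add_left,
          lintegral_const_mul' _ _ ENNReal.ofReal_ne_top]
        exact Continuous.measurable (by fun_prop)
    _ ≤ ENNReal.ofReal (2 ^ (q - 1)) * ((∫⁻ x in ball c d, ‖fderiv ℝ f x‖ₑ ^ q) +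
          ENNReal.ofReal ((M / d) ^ q) * (ENNReal.ofReal (2 ^ n * (2 * d) ^ q) *
            ∫⁻ x in ball c d, ‖fderiv ℝ f x‖ₑ ^ q)) := by
        gcongr _ * (_ + _ * ?_)
        exact poincare hq hf c hd
    _ = _ := by
        rw [ENNReal.ofReal_mul (p := 2 ^ (q - 1)) (by positivity),
          ENNReal.ofReal_add (by positivity) (by positivity),
          ENNReal.ofReal_one]
        have : ENNReal.ofReal (2 ^ n * (2 * M) ^ q) =
            ENNReal.ofReal ((M / d) ^ q) * ENNReal.ofReal (2 ^ n * (2 * d) ^ q) := by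
          rw [← ENNReal.ofReal_mul (by positivity), mul_left_comm,
            ← Real.mul_rpow (by positivity) (by positivity)]
          congr 3
          field_simp
        rw [this]
        ring

lemma abs_sub_average_le {n : ℕ} {f : E n → ℝ} (hf : Continuous f) {c : E n} {d L a : ℝ}
    (hd : 0 < d) (h : ∀ y ∈ ball c d, |a - f y| ≤ L) : |a - ⨍ y in ball c d, f y| ≤ L := by
  have h0 : 0 < volume.real (ball c d) :=
    ENNReal.toReal_pos (measure_ball_pos _ _ hd).ne' measure_ball_lt_top.ne
  rw [← average_const_sub hf a c hd, setAverage_eq, ← Real.norm_eq_abs, norm_smul, norm_inv,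
    Real.norm_of_nonneg h0.le, inv_mul_le_iff₀ h0, mul_comm]
  exact norm_setIntegral_le_of_norm_le_const measure_ball_lt_top h

lemma fderiv_good {n : ℕ} {f : E n → ℝ} (hf : ContDiff ℝ 1 f) {m : ℕ} {χ : ℕ → E n → ℝ}
    (hχ : ∀ i < m, ContDiff ℝ 1 (χ i)) (a : ℕ → ℝ) (x : E n) :
    fderiv ℝ (fun x => f x - ∑ i ∈ Finset.range m, χ i x * (f x - a i)) x =
      (1 - ∑ i ∈ Finset.range m, χ i x) • fderiv ℝ f x -
        ∑ i ∈ Finset.range m, (f x - a i) • fderiv ℝ (χ i) x := by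
  have hd : ∀ i ∈ Finset.range m, DifferentiableAt ℝ (fun x => χ i x * (f x - a i)) x :=
    fun i hi => ((hχ i (Finset.mem_range.1 hi)).differentiable one_ne_zero x).mul
      ((hf.differentiable one_ne_zero x).sub_const _)
  rw [fderiv_fun_sub (hf.differentiable one_ne_zero x) (DifferentiableAt.fun_sum hd),
    fderiv_fun_sum hd,
    Finset.sum_congr rfl fun i hi => fderiv_bad hf (hχ i (Finset.mem_range.1 hi)) (a i) x,
    Finset.sum_add_distrib, ← Finset.sum_smul, sub_smul, one_smul]
  abel

/-! ### The good function -/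

lemma fderiv_eq_zero_of_support {n : ℕ} {h : E n → ℝ} {c : E n} {d : ℝ} (hd : 0 < d)
    (hs : Function.support h ⊆ closedBall c (8 * (d / 10))) {x : E n} (hx : x ∉ ball c d) :
    fderiv ℝ h x = 0 := by
  refine image_eq_zero_of_notMem_tsupport fun hm => hx ?_
  have h1 : x ∈ closedBall c (8 * (d / 10)) :=
    closure_minimal hs isClosed_closedBall (tsupport_fderiv_subset ℝ hm)
  rw [mem_closedBall] at h1
  rw [mem_ball]
  linarith

/-- Where the scale is at most `ε`, the average of `|∇f|^q` over `B(x, ε)` is at most `α^q`, so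
uniform continuity of `∇f` gives a pointwise bound near `x`. -/
lemma norm_fderiv_le_of_average {n : ℕ} {q : ℝ} (hq : 1 ≤ q) {f : E n → ℝ} (hf : ContDiff ℝ 1 f)
    {α ε : ℝ} (hα : 0 < α) (hε : 0 < ε)
    (huc : ∀ y z, dist y z < 2 * ε → ‖fderiv ℝ f y - fderiv ℝ f z‖ ≤ α) {x : E n}
    (havg : ∫⁻ y in ball x ε, ‖fderiv ℝ f y‖ₑ ^ q ≤ ENNReal.ofReal (α ^ q) * volume (ball x ε))
    {y : E n} (hy : y ∈ ball x ε) : ‖fderiv ℝ f y‖ ≤ 2 * α := by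
  have hq0 : 0 < q := by linarith
  have hc : Continuous (fderiv ℝ f) := hf.continuous_fderiv one_ne_zero
  obtain ⟨z, hz, hzα⟩ : ∃ z ∈ ball x ε, ‖fderiv ℝ f z‖ ≤ α := by
    by_contra! hcon
    have h1 : ∫⁻ y in ball x ε, ENNReal.ofReal (α ^ q) < ∫⁻ y in ball x ε, ‖fderiv ℝ f y‖ₑ ^ q := by
      refine setLIntegral_strict_mono measurableSet_ball (measure_ball_pos _ _ hε).ne'
        (Continuous.measurable (by fun_prop)) ?_ (Filter.Eventually.of_forall fun y hy => ?_)
      · rw [lintegral_const, Measure.restrict_apply_univ]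
        exact ENNReal.mul_ne_top ENNReal.ofReal_ne_top measure_ball_lt_top.ne
      · rw [← ENNReal.ofReal_rpow_of_nonneg hα.le hq0.le, ENNReal.rpow_lt_rpow_iff hq0,
          ← ofReal_norm]
        exact (ENNReal.ofReal_lt_ofReal_iff (hα.trans (hcon y hy))).2 (hcon y hy)
    rw [lintegral_const, Measure.restrict_apply_univ] at h1
    exact absurd havg (not_le.2 h1)
  have h1 : dist y z < 2 * ε := by
    have := dist_triangle_right y z x
    rw [mem_ball] at hy hz
    linarith
  have h2 := huc y z h1
  have h3 : fderiv ℝ f y = (fderiv ℝ f y - fderiv ℝ f z) + fderiv ℝ f z := by abel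
  rw [h3]
  exact (norm_add_le _ _).trans (by linarith)

open Classical in
/-- The gradient bound for the good function. Where `ρ > ε` the partition sums to `1`, so
`∇g = ∑ (cᵢ - c) ∇χᵢ` for any constant `c`, and the averages `cᵢ` are all close to the average
of `f` over `B(x, ρ x)`. Where `ρ ≤ ε` the gradient of `f` is itself bounded by `2 α`. -/
theorem norm_fderiv_good_le {n : ℕ} {q : ℝ} (hq : 1 ≤ q) {f : E n → ℝ} (hf : ContDiff ℝ 1 f)
    {α ε : ℝ} (hα : 0 < α) (hε : 0 < ε)
    (huc : ∀ y z, dist y z < 2 * ε → ‖fderiv ℝ f y - fderiv ℝ f z‖ ≤ α)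
    {ρ : E n → ℝ} (hnn : ∀ x, 0 ≤ ρ x) (hLip : ∀ x y, ρ x ≤ ρ y + dist x y)
    (havg : ∀ x s, 0 < s → ρ x ≤ s → ∫⁻ y in ball x s, ‖fderiv ℝ f y‖ₑ ^ q ≤
      ENNReal.ofReal (α ^ q) * volume (ball x s))
    {m : ℕ} {p : ℕ → E n} (hpos : ∀ i < m, 0 < ρ (p i))
    (hcov : ∀ x, ε < ρ x → ∃ i < m, x ∈ closedBall (p i) (4 * (ρ (p i) / 10 / 10)))
    {N : ℕ} (hcard : ∀ x,
      ((Finset.range m).filter fun i => x ∈ ball (p i) (ρ (p i) / 10)).card ≤ N)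
    {A : ℝ} (hA : 0 < A) {χ : ℕ → E n → ℝ} (hχ : ∀ i < m, ContDiff ℝ 1 (χ i))
    (h01 : ∀ i < m, ∀ x, 0 ≤ χ i x ∧ χ i x ≤ 1)
    (hsupp : ∀ i < m, Function.support (χ i) ⊆ closedBall (p i) (8 * (ρ (p i) / 10 / 10)))
    (hgrad : ∀ i < m, ∀ x, ‖fderiv ℝ (χ i) x‖ ≤ ∑ j ∈ Finset.range m,
      (ball (p j) (ρ (p j) / 10)).indicator (fun _ => A / (ρ (p j) / 10)) x)
    (hle : ∀ x, ∑ i ∈ Finset.range m, χ i x ≤ 1)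
    (hone : ∀ x, ∀ j < m, x ∈ closedBall (p j) (4 * (ρ (p j) / 10 / 10)) →
        ∑ i ∈ Finset.range m, χ i x = 1) (x : E n) :
    ‖fderiv ℝ (fun x => f x - ∑ i ∈ Finset.range m,
        χ i x * (f x - ⨍ y in ball (p i) (ρ (p i) / 10), f y)) x‖ ≤
      (2 + N * (22 ^ n * 2 * (N * (11 * A)))) * α := by
  set S := (Finset.range m).filter fun i => x ∈ ball (p i) (ρ (p i) / 10) with hS
  set T := ∑ j ∈ Finset.range m,
    (ball (p j) (ρ (p j) / 10)).indicator (fun _ => A / (ρ (p j) / 10)) x with hTdef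
  set a : ℕ → ℝ := fun i => ⨍ y in ball (p i) (ρ (p i) / 10), f y with ha
  have hT0 : 0 ≤ T := Finset.sum_nonneg fun j hj => Set.indicator_nonneg
    (fun _ _ => by have := hpos j (Finset.mem_range.1 hj); positivity) x
  have hTρ : T * ρ x ≤ N * (11 * A) := sum_indicator_le hLip hpos (hcard x) hA
  have hSm : ∀ i ∈ S, i < m ∧ x ∈ ball (p i) (ρ (p i) / 10) := fun i hi => by simpa [hS] using hi
  have hzero : ∀ i < m, i ∉ S → fderiv ℝ (χ i) x = 0 := fun i hi hiS =>
    fderiv_eq_zero_of_support (by have := hpos i hi; positivity) (hsupp i hi) fun hx => hiS (by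
      simp only [hS, Finset.mem_filter, Finset.mem_range]; exact ⟨hi, hx⟩)
  have hsubset : S ⊆ Finset.range m := Finset.filter_subset _ _
  have hρx := hnn x
  have h22 : (1 : ℝ) ≤ 22 ^ n := one_le_pow₀ (by norm_num)
  rw [fderiv_good hf hχ a x]
  rcases lt_or_ge ε (ρ x) with hx | hx
  · have hρpos : 0 < ρ x := hε.trans hx
    have hcont : Continuous ρ := by
      refine LipschitzWith.continuous (K := 1) (LipschitzWith.of_le_add hLip)
    have hev : (fun x => ∑ i ∈ Finset.range m, χ i x) =ᶠ[nhds x] fun _ => 1 := by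
      filter_upwards [(isOpen_lt continuous_const hcont).mem_nhds hx] with y hy
      obtain ⟨j, hj, hyj⟩ := hcov y hy
      exact hone y j hj hyj
    have hsum0 : ∑ i ∈ Finset.range m, fderiv ℝ (χ i) x = 0 := by
      rw [← fderiv_fun_sum fun i hi =>
        (hχ i (Finset.mem_range.1 hi)).differentiable one_ne_zero x, hev.fderiv_eq]
      simp
    set c := ⨍ y in ball x (ρ x), f y with hc
    have e1 : ∑ i ∈ Finset.range m, (f x - a i) • fderiv ℝ (χ i) x =
        ∑ i ∈ Finset.range m, (c - a i) • fderiv ℝ (χ i) x := by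
      have : ∀ i, (f x - a i) • fderiv ℝ (χ i) x =
          (c - a i) • fderiv ℝ (χ i) x + (f x - c) • fderiv ℝ (χ i) x := by
        intro i; rw [← add_smul]; congr 1; ring
      simp_rw [this]
      rw [Finset.sum_add_distrib, ← Finset.smul_sum, hsum0, smul_zero, add_zero]
    have e2 : ∑ i ∈ Finset.range m, χ i x = 1 := hev.eq_of_nhds
    rw [e1, e2, sub_self, zero_smul, zero_sub, norm_neg]
    refine (norm_sum_smul_le hsubset (hcard x) _ _ (L := 22 ^ n * (2 * ρ x * α)) (T := T)
      (by positivity) hT0 hzero ?_ fun i hi => hgrad i (hSm i hi).1 x).trans ?_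
    · intro i hi
      obtain ⟨him, hxi⟩ := hSm i hi
      have hpi := hpos i him
      obtain ⟨hc1, hc2⟩ := scale_comparable hLip hxi
      set d := ρ (p i) / 10 with hd
      have hd0 : 0 < d := by positivity
      have hk1 : 1 ≤ ρ x / d := by rw [le_div_iff₀ hd0]; linarith
      have hk2 : ρ x / d ≤ 11 := by rw [div_le_iff₀ hd0]; linarith
      rw [abs_sub_comm]
      refine (abs_average_sub_le hq hf hd0 hk1 hα (z := x) (R := ρ x) (by field_simp) ?_
        (havg x (ρ x) hρpos le_rfl)).trans ?_
      · refine ball_subset_ball' ?_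
        rw [mem_ball, dist_comm] at hxi
        linarith
      · gcongr
        linarith
    · calc (N : ℝ) * (22 ^ n * (2 * ρ x * α) * T) = N * (22 ^ n * 2 * (T * ρ x)) * α := by ring
        _ ≤ N * (22 ^ n * 2 * (N * (11 * A))) * α := by gcongr
        _ ≤ _ := by gcongr; linarith
  · have hbd : ∀ y ∈ ball x ε, ‖fderiv ℝ f y‖ ≤ 2 * α := fun y hy =>
      norm_fderiv_le_of_average hq hf hα hε huc (havg x ε hε hx) hy
    have hsum0 : 0 ≤ ∑ i ∈ Finset.range m, χ i x :=
      Finset.sum_nonneg fun i hi => (h01 i (Finset.mem_range.1 hi) x).1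
    have h1 : ‖(1 - ∑ i ∈ Finset.range m, χ i x) • fderiv ℝ f x‖ ≤ 2 * α := by
      rw [norm_smul, Real.norm_of_nonneg (by linarith [hle x])]
      exact (mul_le_of_le_one_left (norm_nonneg _) (by linarith)).trans
        (hbd x (mem_ball_self hε))
    have h2 : ‖∑ i ∈ Finset.range m, (f x - a i) • fderiv ℝ (χ i) x‖ ≤ N * (2 * ρ x * α * T) := by
      refine norm_sum_smul_le hsubset (hcard x) _ _ (L := 2 * ρ x * α) (T := T)
        (by positivity) hT0 hzero ?_ fun i hi => hgrad i (hSm i hi).1 x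
      intro i hi
      obtain ⟨him, hxi⟩ := hSm i hi
      have hpi := hpos i him
      obtain ⟨hc1, hc2⟩ := scale_comparable hLip hxi
      refine abs_sub_average_le hf.continuous (by positivity) fun y hy => ?_
      have hxy : dist y x < ρ x := by
        have := dist_triangle_right y x (p i)
        rw [mem_ball] at hxi hy
        linarith
      have h3 := (convex_ball x ε).norm_image_sub_le_of_norm_fderiv_le (𝕜 := ℝ) (f := f)
        (fun z _ => hf.differentiable one_ne_zero z) hbd
        (show y ∈ ball x ε from mem_ball.2 (hxy.trans_le hx)) (mem_ball_self hε)
      rw [← Real.norm_eq_abs]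
      refine h3.trans ?_
      rw [← dist_eq_norm, dist_comm]
      nlinarith
    refine (norm_sub_le _ _).trans ((add_le_add h1 h2).trans ?_)
    calc 2 * α + N * (2 * ρ x * α * T) = (2 + N * (1 * 2 * (T * ρ x))) * α := by ring
      _ ≤ _ := by gcongr

/-! ### Summation in `L^q` -/

open Classical in
/-- Summing the local `L^q` bounds: at most `N` summands are nonzero at each point, and the balls
overlap at most `N` times. -/
lemma lintegral_sum_rpow_le {n : ℕ} {q : ℝ} (hq : 1 ≤ q) {m N : ℕ} {B : ℕ → Set (E n)}
    (hB : ∀ i, MeasurableSet (B i))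
    (hcard : ∀ x, ((Finset.range m).filter fun i => x ∈ B i).card ≤ N)
    {v : ℕ → E n → ℝ≥0∞} (hv : ∀ i < m, Measurable (v i)) (hv0 : ∀ i < m, ∀ x, x ∉ B i → v i x = 0)
    {F : E n → ℝ≥0∞} (hF : Measurable F) {K : ℝ≥0∞}
    (hint : ∀ i < m, ∫⁻ x in B i, v i x ^ q ≤ K * ∫⁻ x in B i, F x) :
    ∫⁻ x, (∑ i ∈ Finset.range m, v i x) ^ q ≤ (N : ℝ≥0∞) ^ q * K * ∫⁻ x, F x := by
  have hq0 : 0 < q := by linarith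
  have hNtop : (N : ℝ≥0∞) ^ (q - 1) ≠ ∞ :=
    ENNReal.rpow_ne_top_of_nonneg (by linarith) (ENNReal.natCast_ne_top N)
  calc ∫⁻ x, (∑ i ∈ Finset.range m, v i x) ^ q
      ≤ ∫⁻ x, (N : ℝ≥0∞) ^ (q - 1) * ∑ i ∈ Finset.range m, v i x ^ q := by
        refine lintegral_mono fun x => ?_
        simp only
        set S := (Finset.range m).filter fun i => x ∈ B i with hS
        have hsub : S ⊆ Finset.range m := Finset.filter_subset _ _
        rw [← Finset.sum_subset hsub fun i hi hi' => hv0 i (Finset.mem_range.1 hi) x fun hx =>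
          hi' (Finset.mem_filter.2 ⟨hi, hx⟩)]
        refine (ENNReal.rpow_sum_le_const_mul_sum_rpow S (fun i => v i x) hq).trans ?_
        refine mul_le_mul' (ENNReal.rpow_le_rpow ?_ (by linarith))
          (Finset.sum_le_sum_of_subset hsub)
        exact_mod_cast hcard x
    _ = (N : ℝ≥0∞) ^ (q - 1) * ∑ i ∈ Finset.range m, ∫⁻ x in B i, v i x ^ q := by
        rw [lintegral_const_mul' _ _ hNtop, lintegral_finsetSum]
        · congr 1
          refine Finset.sum_congr rfl fun i hi => ?_
          rw [← lintegral_indicator (hB i)]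
          refine lintegral_congr fun x => ?_
          by_cases hx : x ∈ B i
          · simp [hx]
          · simp [hx, hv0 i (Finset.mem_range.1 hi) x hx, hq0]
        · exact fun i hi => (hv i (Finset.mem_range.1 hi)).pow_const q
    _ ≤ (N : ℝ≥0∞) ^ (q - 1) * ∑ i ∈ Finset.range m, K * ∫⁻ x in B i, F x := by
        gcongr _ * ?_
        exact Finset.sum_le_sum fun i hi => hint i (Finset.mem_range.1 hi)
    _ = (N : ℝ≥0∞) ^ (q - 1) * (K * ∫⁻ x, ∑ i ∈ Finset.range m, (B i).indicator F x) := by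
        rw [lintegral_finsetSum _ fun i _ => hF.indicator (hB i), ← Finset.mul_sum]
        simp_rw [lintegral_indicator (hB _)]
    _ ≤ (N : ℝ≥0∞) ^ (q - 1) * (K * ∫⁻ x, N * F x) := by
        gcongr with x
        simp only [Set.indicator_apply]
        rw [← Finset.sum_filter, Finset.sum_const, nsmul_eq_mul]
        gcongr
        exact hcard x
    _ = _ := by
        rw [lintegral_const_mul' _ _ (ENNReal.natCast_ne_top N)]
        have : (N : ℝ≥0∞) ^ q = (N : ℝ≥0∞) ^ (q - 1) * N := by
          rcases eq_or_ne N 0 with rfl | h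
          · simp [hq0]
          · conv_rhs => rw [← ENNReal.rpow_one (N : ℝ≥0∞), ← ENNReal.rpow_mul, one_mul]
            rw [← ENNReal.rpow_add _ _ (by exact_mod_cast h) (ENNReal.natCast_ne_top N)]
            simp
        rw [this]
        ring

/-- The balls of radius `ρ / 100` are disjoint and contained in `{ρ > 0}`, which bounds the total
volume of the balls of radius `ρ / 10`. -/
lemma sum_volume_le {n : ℕ} {ρ : E n → ℝ} (hLip : ∀ x y, ρ x ≤ ρ y + dist x y)
    {m : ℕ} {p : ℕ → E n} (hpos : ∀ i < m, 0 < ρ (p i))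
    (hdisj : ∀ i < m, ∀ j < m, i ≠ j →
      Disjoint (ball (p i) (ρ (p i) / 100)) (ball (p j) (ρ (p j) / 100))) :
    ∑ i ∈ Finset.range m, volume (ball (p i) (ρ (p i) / 10)) ≤
      ENNReal.ofReal (10 ^ n) * volume {x | 0 < ρ x} := by
  calc _ = ENNReal.ofReal (10 ^ n) * ∑ i ∈ Finset.range m, volume (ball (p i) (ρ (p i) / 100)) := by
        rw [Finset.mul_sum]
        refine Finset.sum_congr rfl fun i _ => ?_
        rw [← volume_ball_mul (p i) (p i) (by norm_num)]
        congr 2; ring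
    _ = ENNReal.ofReal (10 ^ n) * volume (⋃ i ∈ Finset.range m, ball (p i) (ρ (p i) / 100)) := by
        rw [measure_biUnion_finset]
        · intro i hi j hj hij
          exact hdisj i (by simpa using hi) j (by simpa using hj) hij
        · exact fun _ _ => measurableSet_ball
    _ ≤ _ := by
        gcongr
        refine Set.iUnion₂_subset fun i hi x hx => ?_
        have h1 := hpos i (Finset.mem_range.1 hi)
        have h2 := hLip (p i) x
        rw [mem_ball, dist_comm] at hx
        simp only [Set.mem_ofPred_eq]
        linarith

/-- The threshold below which the stopping scale may be ignored: `∇f` is uniformly continuous, so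
on balls of radius `ε` it oscillates by at most `α`. -/
lemma exists_radius {n : ℕ} {f : E n → ℝ} (hf : ContDiff ℝ 1 f) (hfs : HasCompactSupport f)
    {α : ℝ} (hα : 0 < α) :
    ∃ ε : ℝ, 0 < ε ∧ ∀ y z, dist y z < 2 * ε → ‖fderiv ℝ f y - fderiv ℝ f z‖ ≤ α := by
  have hc : Continuous (fderiv ℝ f) := hf.continuous_fderiv one_ne_zero
  have huc := (hfs.fderiv (𝕜 := ℝ)).uniformContinuous_of_continuous hc
  obtain ⟨δ, hδ, h⟩ := Metric.uniformContinuous_iff.1 huc α hα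
  refine ⟨δ / 2, by positivity, fun y z hyz => ?_⟩
  rw [← dist_eq_norm]
  exact (h (by linarith)).le

lemma lintegral_fderiv_ne_top {n : ℕ} {q : ℝ} (hq : 1 ≤ q) {f : E n → ℝ} (hf : ContDiff ℝ 1 f)
    (hfs : HasCompactSupport f) : ∫⁻ x, ‖fderiv ℝ f x‖ₑ ^ q ≠ ∞ := by
  have hq0 : 0 < q := by linarith
  have hc : Continuous (fderiv ℝ f) := hf.continuous_fderiv one_ne_zero
  have h1 := (hc.memLp_of_hasCompactSupport (μ := volume) (p := ENNReal.ofReal q)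
    (hfs.fderiv (𝕜 := ℝ)))
  have h2 := lintegral_rpow_enorm_lt_top_of_eLpNorm_lt_top (p := ENNReal.ofReal q) (by simpa using hq0)
    ENNReal.ofReal_ne_top h1.eLpNorm_lt_top
  rw [ENNReal.toReal_ofReal hq0.le] at h2
  exact h2.ne

end CZSobolev

/-! ### The decomposition -/

open CZSobolev

/-- in the Calderón–Zygmund decomposition for Sobolev functions,
one can moreover ensure that `Σᵢ |∇bᵢ|` lies in `L^q` with
`‖Σᵢ |∇bᵢ|‖_q ≤ C ‖|∇f|‖_q` and consequently
`‖|∇g|‖_q ≤ (C+1) ‖|∇f|‖_q`. -/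
theorem statement6 (n : ℕ) (hn : 1 ≤ n) (q : ℝ) (hq1 : 1 ≤ q) :
    ∃ (C : ℝ) (N : ℕ), 0 < C ∧
      ∀ f : EuclideanSpace ℝ (Fin n) → ℝ, ContDiff ℝ (⊤ : ℕ∞) f → HasCompactSupport f →
      ∀ α : ℝ, 0 < α →
      ∃ (c : ℕ → EuclideanSpace ℝ (Fin n)) (rad : ℕ → ℝ)
        (b : ℕ → EuclideanSpace ℝ (Fin n) → ℝ) (g : EuclideanSpace ℝ (Fin n) → ℝ),
        (∀ i, 0 ≤ rad i) ∧
        (∀ᵐ x ∂volume, f x = g x + ∑' i, b i x) ∧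
        (∀ᵐ x ∂volume, DifferentiableAt ℝ g x ∧ ‖fderiv ℝ g x‖ ≤ C * α) ∧
        (∀ i, ContDiff ℝ 1 (b i)) ∧
        (∀ i, Function.support (b i) ⊆ ball (c i) (rad i)) ∧
        (∀ i, ∫⁻ x in ball (c i) (rad i), (‖fderiv ℝ (b i) x‖₊ : ℝ≥0∞) ^ q ≤
          ENNReal.ofReal (C * α ^ q) * volume (ball (c i) (rad i))) ∧
        (∑' i, volume (ball (c i) (rad i)) ≤
          ENNReal.ofReal (C * α ^ (-q)) * ∫⁻ x, (‖fderiv ℝ f x‖₊ : ℝ≥0∞) ^ q) ∧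
        (∀ x, ∑' i, (ball (c i) (rad i)).indicator (fun _ => (1 : ℝ≥0∞)) x ≤ N) ∧
        -- moreover: ‖Σᵢ |∇bᵢ|‖_q ≤ C ‖|∇f|‖_q (in particular Σᵢ ∇bᵢ converges in L^q)
        ((∫⁻ x, (∑' i, (‖fderiv ℝ (b i) x‖₊ : ℝ≥0∞)) ^ q) ^ (1 / q) ≤
          ENNReal.ofReal C * (∫⁻ x, (‖fderiv ℝ f x‖₊ : ℝ≥0∞) ^ q) ^ (1 / q)) ∧
        -- and consequently ‖|∇g|‖_q ≤ (C+1) ‖|∇f|‖_q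
        ((∫⁻ x, (‖fderiv ℝ g x‖₊ : ℝ≥0∞) ^ q) ^ (1 / q) ≤
          ENNReal.ofReal (C + 1) * (∫⁻ x, (‖fderiv ℝ f x‖₊ : ℝ≥0∞) ^ q) ^ (1 / q)) := by
  classical
  have hq0 : 0 < q := by linarith
  obtain ⟨A, hA, hpart⟩ := exists_partition n
  set N : ℕ := 220 ^ n with hN
  have hN1 : (1 : ℝ) ≤ N := by exact_mod_cast Nat.one_le_pow _ _ (by norm_num)
  set M : ℝ := 2 * (N * A) with hM
  have hM0 : 0 ≤ M := by positivity
  set K : ℝ := 2 ^ (q - 1) * (1 + 2 ^ n * (2 * M) ^ q) with hK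
  have hK1 : 1 ≤ K := by
    refine one_le_mul_of_one_le_of_one_le (Real.one_le_rpow (by norm_num) (by linarith)) ?_
    have : 0 ≤ (2 : ℝ) ^ n * (2 * M) ^ q := by positivity
    linarith
  set C₁ : ℝ := 2 + N * (22 ^ n * 2 * (N * (11 * A))) with hC₁
  have hC₁0 : 0 < C₁ := by positivity
  set C : ℝ := C₁ + 80 ^ n * K + N * K with hC
  have hC0 : 0 < C := by positivity
  have hCa : C₁ ≤ C := by
    have : 0 ≤ 80 ^ n * K := by positivity
    have : 0 ≤ N * K := by positivity
    linarith
  have hCb : 80 ^ n * K ≤ C := by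
    have : 0 ≤ N * K := by positivity
    linarith
  have hCc : N * K ≤ C := by
    have : 0 ≤ 80 ^ n * K := by positivity
    linarith
  refine ⟨C, N, hC0, fun f hf' hfs α hα => ?_⟩
  have hf : ContDiff ℝ 1 f := hf'.of_le (by exact_mod_cast le_top)
  have hfc : Continuous (fderiv ℝ f) := hf.continuous_fderiv one_ne_zero
  set F : E n → ℝ≥0∞ := fun x => ‖fderiv ℝ f x‖ₑ ^ q with hFdef
  have hFm : Measurable F := Continuous.measurable (by fun_prop)
  have hI : ∫⁻ x, F x ≠ ∞ := lintegral_fderiv_ne_top hq1 hf hfs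
  have hαq : 0 < α ^ q := by positivity
  obtain ⟨ρ, R, hnn, hR, hLip, havg, hvol⟩ := exists_scale hn F hI hαq
  obtain ⟨ε, hε, huc⟩ := exists_radius hf hfs hα
  have hvol' : volume {x | 0 < ρ x} ≤
      ENNReal.ofReal (α ^ (-q)) * (ENNReal.ofReal (8 ^ n) * ∫⁻ x, F x) := by
    rw [Real.rpow_neg hα.le, ENNReal.ofReal_inv_of_pos hαq, mul_comm, ← div_eq_mul_inv,
      ENNReal.le_div_iff_mul_le (Or.inl (by simpa using hαq)) (Or.inl ENNReal.ofReal_ne_top),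
      mul_comm]
    exact hvol
  have hfin : volume {x | 0 < ρ x} ≠ ∞ := ne_top_of_le_ne_top (by finiteness) hvol'
  obtain ⟨m, p, hpε, hcov, hdisj⟩ := exists_cover hR hLip hfin hε
  have hpos : ∀ i < m, 0 < ρ (p i) := fun i hi => hε.trans (hpε i hi)
  have hd : ∀ i < m, 0 < ρ (p i) / 10 := fun i hi => by have := hpos i hi; positivity
  have hcov' : ∀ x, ε < ρ x → ∃ i < m, x ∈ closedBall (p i) (4 * (ρ (p i) / 10 / 10)) := by
    intro x hx
    obtain ⟨i, hi, hxi⟩ := hcov x hx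
    refine ⟨i, hi, ?_⟩
    rwa [div_div, show (10 * 10 : ℝ) = 100 by norm_num]
  have hcard := card_overlap hLip hpos hdisj
  obtain ⟨χ, hχ, h01, hsupp, hgrad, hle, hone⟩ := hpart m p (fun i => ρ (p i) / 10) hd
  set a : ℕ → ℝ := fun i => ⨍ y in ball (p i) (ρ (p i) / 10), f y with ha
  set rad : ℕ → ℝ := fun i => if i < m then ρ (p i) / 10 else 0 with hrad
  set b : ℕ → E n → ℝ := fun i => if i < m then (fun x => χ i x * (f x - a i)) else 0 with hb
  set g : E n → ℝ := fun x => f x - ∑ i ∈ Finset.range m, χ i x * (f x - a i) with hg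
  have hrad1 : ∀ i < m, rad i = ρ (p i) / 10 := fun i hi => if_pos hi
  have hrad0 : ∀ i, ¬ i < m → rad i = 0 := fun i hi => if_neg hi
  have hb1 : ∀ i < m, b i = fun x => χ i x * (f x - a i) := fun i hi => if_pos hi
  have hb0 : ∀ i, ¬ i < m → b i = 0 := fun i hi => if_neg hi
  have hbC : ∀ i, ContDiff ℝ 1 (b i) := by
    intro i
    by_cases hi : i < m
    · rw [hb1 i hi]; exact (hχ i hi).mul (hf.sub contDiff_const)
    · rw [hb0 i hi]; exact contDiff_const
  have hbsupp : ∀ i < m, Function.support (b i) ⊆ closedBall (p i) (8 * (ρ (p i) / 10 / 10)) := by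
    intro i hi
    rw [hb1 i hi]
    exact (Function.support_mul_subset_left _ _).trans (hsupp i hi)
  have hgC : ContDiff ℝ 1 g := hf.sub (ContDiff.sum fun i hi =>
    (hχ i (Finset.mem_range.1 hi)).mul (hf.sub contDiff_const))
  -- the local `L^q` bound for the bad functions, with `∇χᵢ` of size `M / dᵢ` on the `i`-th ball
  have hbint : ∀ i < m, ∫⁻ x in ball (p i) (ρ (p i) / 10), ‖fderiv ℝ (b i) x‖ₑ ^ q ≤
      ENNReal.ofReal K * ∫⁻ x in ball (p i) (ρ (p i) / 10), F x := by
    intro i hi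
    rw [hb1 i hi]
    refine lintegral_fderiv_bad_le hq1 hf (hχ i hi) (hd i hi) hM0 (h01 i hi) fun x hx => ?_
    refine (hgrad i hi x).trans ?_
    have h1 := sum_indicator_le hLip hpos (hcard x) hA
    have h2 := (scale_comparable hLip hx).1
    have hT0 : 0 ≤ ∑ j ∈ Finset.range m,
        (ball (p j) (ρ (p j) / 10)).indicator (fun _ => A / (ρ (p j) / 10)) x :=
      Finset.sum_nonneg fun j hj => Set.indicator_nonneg
        (fun _ _ => by have := hd j (Finset.mem_range.1 hj); positivity) x
    rw [le_div_iff₀ (hd i hi)]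
    have h3 := mul_le_mul_of_nonneg_left h2 hT0
    have h4 : 0 ≤ (N : ℝ) * A := by positivity
    linarith
  clear_value K
  have htsum : ∀ x, ∑' i, ‖fderiv ℝ (b i) x‖ₑ = ∑ i ∈ Finset.range m, ‖fderiv ℝ (b i) x‖ₑ := by
    intro x
    refine tsum_eq_sum fun i hi => ?_
    rw [hb0 i (by simpa using hi), ← ofReal_norm]
    simp
  have hbm : ∀ i, Measurable fun x => ‖fderiv ℝ (b i) x‖ₑ := fun i =>
    ((hbC i).continuous_fderiv one_ne_zero).enorm.measurable
  have hLq : (∫⁻ x, (∑' i, ‖fderiv ℝ (b i) x‖ₑ) ^ q) ^ (1 / q) ≤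
      ENNReal.ofReal C * (∫⁻ x, F x) ^ (1 / q) := by
    simp_rw [htsum]
    have h1 := lintegral_sum_rpow_le hq1 (B := fun i => ball (p i) (ρ (p i) / 10))
      (fun _ => measurableSet_ball) hcard (fun i _ => hbm i)
      (fun i hi x hx => by
        rw [fderiv_eq_zero_of_support (hd i hi) (hbsupp i hi) hx, ← ofReal_norm]; simp)
      hFm hbint
    have h2 : (N : ℝ≥0∞) ^ q * ENNReal.ofReal K ≤ ENNReal.ofReal C ^ q := by
      calc (N : ℝ≥0∞) ^ q * ENNReal.ofReal K ≤ (N : ℝ≥0∞) ^ q * ENNReal.ofReal K ^ q := by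
            gcongr
            exact ENNReal.le_rpow_self_of_one_le (by simpa using hK1) hq1
        _ = ENNReal.ofReal (N * K) ^ q := by
            rw [← ENNReal.mul_rpow_of_nonneg _ _ hq0.le, ENNReal.ofReal_mul (p := (N : ℝ)) (by positivity),
              ENNReal.ofReal_natCast]
        _ ≤ _ := by gcongr
    calc _ ≤ (ENNReal.ofReal C ^ q * ∫⁻ x, F x) ^ (1 / q) := by
          refine ENNReal.rpow_le_rpow (h1.trans ?_) (by positivity)
          gcongr
      _ = _ := by
          rw [ENNReal.mul_rpow_of_nonneg _ _ (by positivity), ← ENNReal.rpow_mul,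
            mul_one_div_cancel hq0.ne', ENNReal.rpow_one]
  refine ⟨p, rad, b, g, ?_, ?_, ?_, hbC, ?_, ?_, ?_, ?_, hLq, ?_⟩
  · intro i
    by_cases hi : i < m
    · rw [hrad1 i hi]; exact (hd i hi).le
    · rw [hrad0 i hi]
  · refine Filter.Eventually.of_forall fun x => ?_
    rw [tsum_eq_sum (s := Finset.range m) fun i hi => by rw [hb0 i (by simpa using hi)]; rfl]
    rw [Finset.sum_congr rfl fun i hi => by rw [hb1 i (Finset.mem_range.1 hi)]]
    simp [hg]
  · refine Filter.Eventually.of_forall fun x => ⟨hgC.differentiable one_ne_zero x, ?_⟩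
    refine (norm_fderiv_good_le hq1 hf hα hε huc hnn hLip havg hpos hcov' hcard hA hχ h01 hsupp
      hgrad hle hone x).trans ?_
    gcongr
  · intro i
    by_cases hi : i < m
    · rw [hrad1 i hi]
      refine (hbsupp i hi).trans (closedBall_subset_ball ?_)
      have := hd i hi
      linarith
    · rw [hb0 i hi]; simp
  · intro i
    by_cases hi : i < m
    · rw [hrad1 i hi]
      refine (hbint i hi).trans ?_
      have h1 : ∫⁻ x in ball (p i) (ρ (p i) / 10), F x ≤
          ENNReal.ofReal (α ^ q) * (ENNReal.ofReal (10 ^ n) * volume (ball (p i) (ρ (p i) / 10))) := by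
        rw [← volume_ball_mul (p i) (p i) (by norm_num), mul_div_cancel₀ _ (by norm_num)]
        refine le_trans (lintegral_mono_set (ball_subset_ball ?_)) (havg (p i) _ (hpos i hi) le_rfl)
        have := hpos i hi
        linarith
      calc _ ≤ ENNReal.ofReal K * (ENNReal.ofReal (α ^ q) *
            (ENNReal.ofReal (10 ^ n) * volume (ball (p i) (ρ (p i) / 10)))) := by gcongr
        _ = ENNReal.ofReal (10 ^ n * K * α ^ q) * volume (ball (p i) (ρ (p i) / 10)) := by
            rw [ENNReal.ofReal_mul (p := 10 ^ n * K) (by positivity),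
              ENNReal.ofReal_mul (p := 10 ^ n) (by positivity)]
            ring
        _ ≤ _ := by
            gcongr
            refine le_trans ?_ hCb
            gcongr
            norm_num
    · rw [hrad0 i hi]; simp
  · rw [tsum_eq_sum (s := Finset.range m) fun i hi => by rw [hrad0 i (by simpa using hi)]; simp]
    rw [Finset.sum_congr rfl fun i hi => by rw [hrad1 i (Finset.mem_range.1 hi)]]
    calc _ ≤ ENNReal.ofReal (10 ^ n) *
          (ENNReal.ofReal (α ^ (-q)) * (ENNReal.ofReal (8 ^ n) * ∫⁻ x, F x)) :=
          (sum_volume_le hLip hpos hdisj).trans (by gcongr)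
      _ = ENNReal.ofReal (10 ^ n * 8 ^ n * α ^ (-q)) * ∫⁻ x, F x := by
          rw [ENNReal.ofReal_mul (by positivity), ENNReal.ofReal_mul (by positivity)]; ring
      _ ≤ _ := by
          change _ ≤ ENNReal.ofReal (C * α ^ (-q)) * ∫⁻ x, F x
          gcongr
          refine le_trans ?_ hCb
          rw [← mul_pow, show (10 * 8 : ℝ) = 80 by norm_num]
          exact le_mul_of_one_le_right (by positivity) hK1
  · intro x
    rw [tsum_eq_sum (s := Finset.range m) fun i hi => by rw [hrad0 i (by simpa using hi)]; simp]
    rw [Finset.sum_congr rfl fun i hi => by rw [hrad1 i (Finset.mem_range.1 hi)]]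
    simp only [Set.indicator_apply]
    rw [← Finset.sum_filter, Finset.sum_const, nsmul_eq_mul, mul_one]
    exact_mod_cast hcard x
  · have hpt : ∀ x, ‖fderiv ℝ g x‖ₑ ≤ ‖fderiv ℝ f x‖ₑ + ∑' i, ‖fderiv ℝ (b i) x‖ₑ := by
      intro x
      have hgb : g = fun x => f x - ∑ i ∈ Finset.range m, b i x := by
        funext y
        rw [Finset.sum_congr rfl fun i hi => by rw [hb1 i (Finset.mem_range.1 hi)]]
      have hdb : ∀ i ∈ Finset.range m, DifferentiableAt ℝ (b i) x :=
        fun i _ => (hbC i).differentiable one_ne_zero x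
      rw [hgb, fderiv_fun_sub (hf.differentiable one_ne_zero x) (DifferentiableAt.fun_sum hdb),
        fderiv_fun_sum hdb, htsum]
      refine (enorm_sub_le).trans ?_
      gcongr
      simp only [enorm_eq_nnnorm]
      exact_mod_cast nnnorm_sum_le (Finset.range m) fun i => fderiv ℝ (b i) x
    have hbt : Measurable fun x => ∑' i, ‖fderiv ℝ (b i) x‖ₑ := Measurable.tsum hbm
    calc (∫⁻ x, ‖fderiv ℝ g x‖ₑ ^ q) ^ (1 / q)
        ≤ (∫⁻ x, (((fun x => ‖fderiv ℝ f x‖ₑ) + fun x => ∑' i, ‖fderiv ℝ (b i) x‖ₑ) x) ^ q)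
          ^ (1 / q) := by
          gcongr with x
          exact hpt x
      _ ≤ (∫⁻ x, ‖fderiv ℝ f x‖ₑ ^ q) ^ (1 / q) +
          (∫⁻ x, (∑' i, ‖fderiv ℝ (b i) x‖ₑ) ^ q) ^ (1 / q) :=
          ENNReal.lintegral_Lp_add_le hfc.enorm.measurable.aemeasurable hbt.aemeasurable hq1
      _ ≤ (∫⁻ x, F x) ^ (1 / q) + ENNReal.ofReal C * (∫⁻ x, F x) ^ (1 / q) := by
          gcongr
      _ = ENNReal.ofReal (C + 1) * (∫⁻ x, F x) ^ (1 / q) := by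
          rw [ENNReal.ofReal_add hC0.le one_pos.le, ENNReal.ofReal_one]; ring
end

section
/- In the Calderón–Zygmund decomposition for Sobolev functions on ℝⁿ at height α with exponent q (where 1 ≤ q < ∞, f ∈ C_c^∞(ℝⁿ), α > 0, f = g + Σ_i b_i), the function g can be chosen to agree almost everywhere with a Lipschitz function whose Lipschitz constant is at most Cα: that is, |g(x) − g(y)| ≤ C·α·|x − y| for almost every x, y ∈ ℝⁿ, where C depends only on n and q. -/
open MeasureTheory Metric ENNReal

/-!
Let `F` be the set where the uncentred maximal function of `|∇f|^q` is at most `α^q`.  Its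
complement is open, and the Vitali covering lemma (weak type `(1,1)`, `CZ.vol_bigSet`) bounds the
measure of that complement by a multiple of `α^{-q} ∫ |∇f|^q`.

For `y ∈ F`, integrating `∇f` along the rays issued from `y`, and applying Jensen and Tonelli, gives
`∫_{B(y,R)} |f - f(y)|^q ≤ (R α)^q |B(y,R)|` (`CZ.poincare`).  Comparing two points `x, y ∈ F` through
the ball centred at their midpoint then shows that `f` is `Cα`-Lipschitz on `F`
(`CZ.lipschitz_good`).

Off `F`, take Whitney balls `B_i` of radius comparable to the distance to `F`, a subordinate
partition of unity `φ_i`, and points `y_i ∈ F` nearest to the centres.  The bad parts are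
`b_i = (f - f(y_i)) φ_i`, and `g = f - ∑ b_i` equals `f` on `F` and `∑ f(y_i) φ_i` off `F`.
The bound for `∇b_i` follows from `CZ.poincare` at `y_i` and `|∇φ_i| ≤ C / dist(·, F)`.
The function `g` is itself `Cα`-Lipschitz (`CZ.good_lip`): far apart points are compared through a
nearby point of `F`, and for close points one uses
`g(x) - g(x') = ∑ (f(y_i) - f(z)) (φ_i(x) - φ_i(x'))` with `z ∈ F` nearest to `x`, a sum with a
bounded number of nonzero terms.  Rademacher's theorem yields differentiability almost everywhere.
-/

/-- Euclidean space `ℝⁿ`. -/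
abbrev Eu (n : ℕ) := EuclideanSpace ℝ (Fin n)

namespace CZ
variable {n : ℕ}

/-! ### Volumes of balls and coverings -/

lemma nontriv (hn : 1 ≤ n) : Nontrivial (Eu n) := by
  have : Nonempty (Fin n) := ⟨⟨0, hn⟩⟩
  infer_instance

lemma vol_scale (c c' : Eu n) {k : ℝ} (hk : 0 < k) (r : ℝ) :
    volume (ball c (k * r)) = ENNReal.ofReal (k ^ n) * volume (ball c' r) := by
  rw [Measure.addHaar_ball_mul_of_pos volume c hk r, finrank_euclideanSpace_fin,
    Measure.addHaar_ball_center volume c' r]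

lemma vol_ball_pos (c : Eu n) {r : ℝ} (hr : 0 < r) : 0 < volume (ball c r) := measure_ball_pos _ _ hr
lemma vol_ball_ne_top (c : Eu n) (r : ℝ) : volume (ball c r) ≠ ∞ := measure_ball_lt_top.ne

/-- A bound on the measure of a ball bounds its radius. -/
lemma radius_bound (hn : 1 ≤ n) (A : ℝ≥0∞) (hA : A ≠ ∞) :
    ∃ R : ℝ, ∀ (c : Eu n) (r : ℝ), volume (ball c r) ≤ A → r ≤ R := by
  have h1 := vol_ball_pos (0 : Eu n) one_pos
  have h1' := vol_ball_ne_top (0 : Eu n) 1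
  set V := volume (ball (0 : Eu n) 1)
  refine ⟨max 1 (A / V).toReal, fun c r h => ?_⟩
  by_contra! hr
  obtain ⟨h2, h3⟩ := max_lt_iff.1 hr
  have h4 := vol_scale c (0 : Eu n) (k := r) (by linarith) 1
  rw [mul_one] at h4
  rw [h4] at h
  have h5 : ENNReal.ofReal (r ^ n) ≤ A / V :=
    (ENNReal.le_div_iff_mul_le (Or.inl h1.ne') (Or.inl h1')).2 h
  have h6 : A / V ≠ ∞ := ENNReal.div_ne_top hA h1.ne'
  have h7 := (ENNReal.ofReal_le_iff_le_toReal h6).1 h5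
  have h8 : r ≤ r ^ n := le_self_pow₀ h2.le (by lia)
  linarith

lemma sum_disjoint_le (c : ℕ → Eu n) (ρ : ℕ → ℝ)
    (hd : ∀ i j, i ≠ j → Disjoint (ball (c i) (ρ i)) (ball (c j) (ρ j)))
    (T : Set (Eu n)) (hT : ∀ i, ball (c i) (ρ i) ⊆ T) :
    ∑' i, volume (ball (c i) (ρ i)) ≤ volume T := by
  rw [← measure_iUnion (fun i j h => hd i j h) (fun i => measurableSet_ball)]
  exact measure_mono (Set.iUnion_subset hT)

/-- Vitali covering in sequence form: the selected balls are indexed by `ℕ`, with unused indices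
carrying radius zero. -/
lemma vitali_seq (t : Set (Eu n × ℝ)) (ht : ∀ p ∈ t, 0 < p.2) (R : ℝ) (hR : ∀ p ∈ t, p.2 ≤ R) :
    ∃ (c : ℕ → Eu n) (ρ : ℕ → ℝ), (∀ i, 0 ≤ ρ i) ∧ (∀ i, 0 < ρ i → (c i, ρ i) ∈ t) ∧
      (∀ i j, i ≠ j → Disjoint (ball (c i) (ρ i)) (ball (c j) (ρ j))) ∧
      (∀ p ∈ t, ∃ i, 0 < ρ i ∧ closedBall p.1 p.2 ⊆ closedBall (c i) (5 * ρ i)) := by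
  obtain ⟨u, hut, hd, hc⟩ := Vitali.exists_disjoint_subfamily_covering_enlargement_closedBall t
    Prod.fst Prod.snd R hR 5 (by norm_num)
  have hcount : u.Countable := by
    refine hd.countable_of_nonempty_interior fun p hp => ⟨p.1, ?_⟩
    exact ball_subset_interior_closedBall (mem_ball_self (ht p (hut hp)))
  have := hcount.to_subtype
  obtain ⟨e, he⟩ := exists_injective_nat u
  refine ⟨Function.extend e (fun p => p.1.1) 0, Function.extend e (fun p => p.1.2) 0, ?_, ?_, ?_, ?_⟩
  · intro i
    by_cases h : ∃ a, e a = i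
    · obtain ⟨a, rfl⟩ := h
      rw [he.extend_apply]
      exact (ht _ (hut a.2)).le
    · rw [Function.extend_apply' _ _ _ h]; rfl
  · intro i hi
    by_cases h : ∃ a, e a = i
    · obtain ⟨a, rfl⟩ := h
      rw [he.extend_apply, he.extend_apply]
      exact hut a.2
    · rw [Function.extend_apply' _ _ _ h] at hi; simp at hi
  · intro i j hij
    by_cases h : ∃ a, e a = i
    · by_cases h' : ∃ a, e a = j
      · obtain ⟨a, rfl⟩ := h
        obtain ⟨a', rfl⟩ := h'
        simp only [he.extend_apply]
        have : a.1 ≠ a'.1 := fun h => hij (by rw [Subtype.ext h])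
        exact (hd a.2 a'.2 this).mono ball_subset_closedBall ball_subset_closedBall
      · rw [Function.extend_apply' (fun p : u => p.1.2) _ _ h']; simp
    · rw [Function.extend_apply' (fun p : u => p.1.2) _ _ h]; simp
  · intro p hp
    obtain ⟨b, hb, hsub⟩ := hc p hp
    refine ⟨e ⟨b, hb⟩, ?_⟩
    simp only [he.extend_apply]
    exact ⟨ht _ (hut hb), hsub⟩

lemma vol_closedBall (hn : 1 ≤ n) (c : Eu n) (r : ℝ) :
    volume (closedBall c r) = volume (ball c r) := by
  have := nontriv hn
  exact Measure.addHaar_closedBall_eq_addHaar_ball _ _ _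

/-- A Whitney-type covering of the complement of a closed set, by Vitali selection among the balls
of radius `infDist x F / 100`, whose radii are bounded because `Fᶜ` has finite measure. -/
lemma whitney (hn : 1 ≤ n) (F : Set (Eu n)) (hF : IsClosed F) (hne : F.Nonempty)
    (hvol : volume Fᶜ ≠ ∞) :
    ∃ (c : ℕ → Eu n) (ρ : ℕ → ℝ), (∀ i, 0 ≤ ρ i) ∧ (∀ i, 0 < ρ i → infDist (c i) F = 100 * ρ i) ∧
      (∀ i j, i ≠ j → Disjoint (ball (c i) (ρ i)) (ball (c j) (ρ j))) ∧
      (∀ x ∉ F, ∃ i, 0 < ρ i ∧ dist x (c i) ≤ 5 * ρ i) := by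
  obtain ⟨R, hR⟩ := radius_bound hn _ hvol
  let t : Set (Eu n × ℝ) := {p | 0 < p.2 ∧ infDist p.1 F = 100 * p.2}
  have hRt : ∀ p ∈ t, p.2 ≤ R := by
    rintro ⟨x, r⟩ ⟨h1, h2⟩
    refine hR x r (measure_mono fun z hz hzF => ?_)
    have := infDist_le_dist_of_mem (x := x) hzF
    rw [mem_ball'] at hz
    simp only at h1 h2
    linarith
  obtain ⟨c, ρ, h0, h1, h2, h3⟩ := vitali_seq t (fun p hp => hp.1) R hRt
  refine ⟨c, ρ, h0, fun i hi => (h1 i hi).2, h2, fun x hx => ?_⟩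
  have hpos : 0 < infDist x F := (hF.notMem_iff_infDist_pos hne).1 hx
  obtain ⟨i, hi, hs⟩ := h3 (x, infDist x F / 100) ⟨by simpa using hpos, by simp; ring⟩
  exact ⟨i, hi, hs (mem_closedBall_self (by positivity))⟩

/-! ### The maximal function -/

/-- The open set where the uncentred maximal function of `H` exceeds `A`. -/
def bigSet (H : Eu n → ℝ≥0∞) (A : ℝ≥0∞) : Set (Eu n) :=
  ⋃ p ∈ {p : Eu n × ℝ | 0 < p.2 ∧ A * volume (ball p.1 p.2) < ∫⁻ x in ball p.1 p.2, H x},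
    ball p.1 p.2

lemma isOpen_bigSet (H : Eu n → ℝ≥0∞) (A : ℝ≥0∞) : IsOpen (bigSet H A) :=
  isOpen_biUnion fun _ _ => isOpen_ball

lemma avg_le_of_notMem {H : Eu n → ℝ≥0∞} {A : ℝ≥0∞} {y : Eu n} (hy : y ∉ bigSet H A)
    {r : ℝ} : ∫⁻ x in ball y r, H x ≤ A * volume (ball y r) := by
  rcases le_or_gt r 0 with hr | hr
  · simp [ball_eq_empty.2 hr]
  by_contra! h
  exact hy (Set.mem_biUnion (x := (y, r)) ⟨hr, h⟩ (mem_ball_self hr))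

/-- The weak type `(1,1)` bound for the maximal function. -/
lemma vol_bigSet (hn : 1 ≤ n) (H : Eu n → ℝ≥0∞) (A : ℝ≥0∞) (hA : A ≠ 0) (hA' : A ≠ ∞)
    (hH : ∫⁻ x, H x ≠ ∞) :
    volume (bigSet H A) ≤ ENNReal.ofReal (5 ^ n) * (A⁻¹ * ∫⁻ x, H x) := by
  let t := {p : Eu n × ℝ | 0 < p.2 ∧ A * volume (ball p.1 p.2) < ∫⁻ x in ball p.1 p.2, H x}
  have key : ∀ p ∈ t, volume (ball p.1 p.2) ≤ A⁻¹ * ∫⁻ x in ball p.1 p.2, H x := by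
    intro p hp
    rw [mul_comm, ← div_eq_mul_inv, ENNReal.le_div_iff_mul_le (Or.inl hA) (Or.inl hA'), mul_comm]
    exact hp.2.le
  obtain ⟨R, hR⟩ := radius_bound hn (A⁻¹ * ∫⁻ x, H x)
    (ENNReal.mul_ne_top (ENNReal.inv_ne_top.2 hA) hH)
  obtain ⟨c, ρ, h0, h1, h2, h3⟩ := vitali_seq t (fun p hp => hp.1) R
    (fun p hp => hR _ _ ((key p hp).trans (by gcongr; exact Measure.restrict_le_self)))
  have hsub : bigSet H A ⊆ ⋃ i, closedBall (c i) (5 * ρ i) := by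
    refine Set.iUnion₂_subset fun p hp => ?_
    obtain ⟨i, -, hi⟩ := h3 p hp
    exact (ball_subset_closedBall.trans hi).trans (Set.subset_iUnion (fun i => closedBall (c i) (5 * ρ i)) i)
  calc volume (bigSet H A) ≤ ∑' i, volume (closedBall (c i) (5 * ρ i)) :=
        (measure_mono hsub).trans (measure_iUnion_le _)
    _ = ENNReal.ofReal (5 ^ n) * ∑' i, volume (ball (c i) (ρ i)) := by
        rw [← ENNReal.tsum_mul_left]
        congr 1; ext i
        rw [vol_closedBall hn, vol_scale (c i) (c i) (by norm_num)]
    _ ≤ ENNReal.ofReal (5 ^ n) * ∑' i, (A⁻¹ * ∫⁻ x in ball (c i) (ρ i), H x) := by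
        refine mul_le_mul_right (ENNReal.tsum_le_tsum fun i => ?_) _
        rcases (h0 i).eq_or_lt with h | h
        · simp [← h]
        · exact key (c i, ρ i) (h1 i h)
    _ = ENNReal.ofReal (5 ^ n) * (A⁻¹ * ∫⁻ x in ⋃ i, ball (c i) (ρ i), H x) := by
        rw [ENNReal.tsum_mul_left, lintegral_iUnion (fun i => measurableSet_ball) (fun i j h => h2 i j h)]
    _ ≤ _ := by gcongr; exact Measure.restrict_le_self

/-! ### Estimates for `f` around points with bounded maximal function -/

lemma map_homothety (y : Eu n) {t : ℝ} (ht : 0 < t) :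
    Measure.map (fun x : Eu n => y + t • (x - y)) volume = ENNReal.ofReal (t ^ n)⁻¹ • volume := by
  have h1 : (fun x : Eu n => y + t • (x - y)) = (fun x => y + x) ∘ (t • ·) ∘ (fun x => x - y) := rfl
  rw [h1, ← Measure.map_map (by fun_prop) (by fun_prop), ← Measure.map_map (by fun_prop) (by fun_prop),
    map_sub_right_eq_self volume y, Measure.map_addHaar_smul volume ht.ne', Measure.map_smul,
    map_add_left_eq_self, finrank_euclideanSpace_fin, abs_of_pos (by positivity)]

lemma setLIntegral_homothety (y : Eu n) {t : ℝ} (ht : 0 < t) (R : ℝ) (G : Eu n → ℝ≥0∞)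
    (hG : Measurable G) :
    ∫⁻ x in ball y R, G (y + t • (x - y)) =
      ENNReal.ofReal (t ^ n)⁻¹ * ∫⁻ x in ball y (t * R), G x := by
  have h := setLIntegral_map (μ := volume) (g := fun x : Eu n => y + t • (x - y))
    (s := ball y (t * R)) measurableSet_ball hG (by fun_prop)
  have hp : (fun x : Eu n => y + t • (x - y)) ⁻¹' ball y (t * R) = ball y R := by
    ext x
    simp [dist_eq_norm, norm_smul, abs_of_pos ht, ht]
  rw [hp, map_homothety y ht, Measure.restrict_smul, lintegral_smul_measure] at h
  exact h.symm

/-- Fundamental theorem of calculus on the segment from `y` to `x`, followed by Jensen's inequality. -/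
lemma ray_bound {f : Eu n → ℝ} (hf : ContDiff ℝ 1 f) {q : ℝ} (hq : 1 ≤ q) (x y : Eu n) :
    ‖f x - f y‖ₑ ^ q ≤ ‖x - y‖ₑ ^ q *
      ∫⁻ t in Set.Ioc (0 : ℝ) 1, ‖fderiv ℝ f (y + t • (x - y))‖ₑ ^ q := by
  have hq0 : 0 < q := by linarith
  let γ : ℝ → ℝ := fun t => f (y + t • (x - y))
  have hγ : ContDiff ℝ 1 γ := hf.comp (by fun_prop)
  have h1 := enorm_sub_le_lintegral_deriv_of_contDiffOn_Icc (a := 0) (b := 1) hγ.contDiffOn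
    zero_le_one
  have h2 : γ 1 - γ 0 = f x - f y := by simp [γ]
  rw [h2] at h1
  have hcont : Continuous fun t : ℝ => fderiv ℝ f (y + t • (x - y)) :=
    (hf.continuous_fderiv one_ne_zero).comp (by fun_prop)
  have h3 : ∀ t, ‖deriv γ t‖ₑ ≤ ‖x - y‖ₑ * ‖fderiv ℝ f (y + t • (x - y))‖ₑ := by
    intro t
    have hd : HasDerivAt (fun t : ℝ => y + t • (x - y)) (x - y) t := by
      simpa using ((hasDerivAt_id t).smul_const (x - y)).const_add y
    have := ((hf.differentiable one_ne_zero) (y + t • (x - y))).hasFDerivAt.comp_hasDerivAt t hd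
    have h4 : deriv γ t = fderiv ℝ f (y + t • (x - y)) (x - y) := this.deriv
    rw [h4, mul_comm]
    exact ContinuousLinearMap.le_opENorm _ _
  have : IsProbabilityMeasure (volume.restrict (Set.Ioc (0 : ℝ) 1)) := ⟨by simp⟩
  have hJ := eLpNorm'_le_eLpNorm'_of_exponent_le one_pos hq (volume.restrict (Set.Ioc (0 : ℝ) 1))
    hcont.aestronglyMeasurable
  simp only [eLpNorm', rpow_one, div_one] at hJ
  have hJ' := ENNReal.rpow_le_rpow hJ hq0.le
  rw [← ENNReal.rpow_mul, one_div, inv_mul_cancel₀ hq0.ne', rpow_one] at hJ'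
  calc ‖f x - f y‖ₑ ^ q
      ≤ (‖x - y‖ₑ * ∫⁻ t in Set.Ioc (0 : ℝ) 1, ‖fderiv ℝ f (y + t • (x - y))‖ₑ) ^ q := by
        gcongr
        refine h1.trans ?_
        rw [← restrict_Ioc_eq_restrict_Icc, ← lintegral_const_mul' _ _ enorm_ne_top]
        exact lintegral_mono h3
    _ ≤ _ := by
        rw [ENNReal.mul_rpow_of_nonneg _ _ hq0.le]
        gcongr

/-- Poincaré inequality at a point `y` where all averages of `|∇f|^q` over balls centred at `y` are at
most `A`. After Tonelli, the factor `t^{-n}` from the dilation by `t` about `y` cancels the volume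
of the dilated ball, so no singular kernel appears. -/
lemma poincare {f : Eu n → ℝ} (hf : ContDiff ℝ 1 f) {q : ℝ} (hq : 1 ≤ q) {A : ℝ≥0∞} {y : Eu n}
    (hy : y ∉ bigSet (fun x => ‖fderiv ℝ f x‖ₑ ^ q) A) {R : ℝ} :
    ∫⁻ x in ball y R, ‖f x - f y‖ₑ ^ q ≤ ENNReal.ofReal R ^ q * (A * volume (ball y R)) := by
  have hq0 : 0 < q := by linarith
  set H : Eu n → ℝ≥0∞ := fun x => ‖fderiv ℝ f x‖ₑ ^ q with hH
  have hHc : Continuous H :=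
    ENNReal.continuous_rpow_const.comp (hf.continuous_fderiv one_ne_zero).enorm
  calc ∫⁻ x in ball y R, ‖f x - f y‖ₑ ^ q
      ≤ ∫⁻ x in ball y R, ENNReal.ofReal R ^ q * ∫⁻ t in Set.Ioc (0 : ℝ) 1, H (y + t • (x - y)) := by
        refine setLIntegral_mono' measurableSet_ball fun x hx => (ray_bound hf hq x y).trans ?_
        gcongr
        rw [← ofReal_norm, ← dist_eq_norm]
        exact ENNReal.ofReal_le_ofReal (mem_ball.1 hx).le
    _ = ENNReal.ofReal R ^ q * ∫⁻ t in Set.Ioc (0 : ℝ) 1, ∫⁻ x in ball y R, H (y + t • (x - y)) := by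
        rw [lintegral_const_mul' _ _ (by finiteness), lintegral_lintegral_swap]
        apply Continuous.aemeasurable
        exact hHc.comp (by fun_prop)
    _ ≤ ENNReal.ofReal R ^ q * ∫⁻ t in Set.Ioc (0 : ℝ) 1, A * volume (ball y R) := by
        refine mul_le_mul_right (setLIntegral_mono' measurableSet_Ioc fun t ht => ?_) _
        rw [setLIntegral_homothety y ht.1 R H hHc.measurable]
        calc _ ≤ ENNReal.ofReal (t ^ n)⁻¹ * (A * volume (ball y (t * R))) := by
              gcongr; exact avg_le_of_notMem hy
          _ = (ENNReal.ofReal (t ^ n)⁻¹ * ENNReal.ofReal (t ^ n)) * (A * volume (ball y R)) := by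
              rw [vol_scale y y ht.1]; ring
          _ = _ := by
              have : 0 < t ^ n := pow_pos ht.1 n
              rw [← ENNReal.ofReal_mul (by positivity), inv_mul_cancel₀ this.ne', ofReal_one, one_mul]
    _ = _ := by simp

/-- `f` is Lipschitz on the set where the maximal function of `|∇f|^q` is at most `α^q`. Averaging
`|f x - f y| ≤ |f z - f x| + |f z - f y|` over `z` in the ball having `x, y` as antipodal points
reduces this to `poincare` at `x` and at `y`. -/
lemma lipschitz_good {f : Eu n → ℝ} (hf : ContDiff ℝ 1 f) {q : ℝ} (hq : 1 ≤ q) {α : ℝ}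
    (hα : 0 < α) {x y : Eu n}
    (hx : x ∉ bigSet (fun x => ‖fderiv ℝ f x‖ₑ ^ q) (ENNReal.ofReal (α ^ q)))
    (hy : y ∉ bigSet (fun x => ‖fderiv ℝ f x‖ₑ ^ q) (ENNReal.ofReal (α ^ q))) :
    |f x - f y| ≤ 2 ^ (n + 1) * α * dist x y := by
  have hq0 : 0 < q := by linarith
  rcases eq_or_ne x y with rfl | hxy
  · simp
  set R := dist x y with hR
  have hR0 : 0 < R := dist_pos.2 hxy
  set m := midpoint ℝ x y
  have hm1 : dist m x = R / 2 := by
    rw [dist_midpoint_left]; simp; ring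
  have hm2 : dist m y = R / 2 := by
    rw [dist_midpoint_right]; simp; ring
  set B := ball m (R / 2)
  have hBx : B ⊆ ball x R := ball_subset_ball' (by linarith)
  have hBy : B ⊆ ball y R := ball_subset_ball' (by linarith)
  have hV : volume (ball m R) = ENNReal.ofReal (2 ^ n) * volume B := by
    rw [← vol_scale m m two_pos]; congr 2; ring
  have hVx : volume (ball x R) = volume (ball m R) := by
    rw [Measure.addHaar_ball_center volume x, Measure.addHaar_ball_center volume m]
  have hVy : volume (ball y R) = volume (ball m R) := by
    rw [Measure.addHaar_ball_center volume y, Measure.addHaar_ball_center volume m]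
  have hpx := poincare hf hq hx (R := R)
  have hpy := poincare hf hq hy (R := R)
  rw [hVx] at hpx
  rw [hVy] at hpy
  set K := ENNReal.ofReal R ^ q * (ENNReal.ofReal (α ^ q) * volume (ball m R)) with hK
  have hB0 : volume B ≠ 0 := (vol_ball_pos m (by positivity)).ne'
  have hBt : volume B ≠ ∞ := vol_ball_ne_top _ _
  have hmeas : ∀ y, Measurable fun z => ‖f z - f y‖ₑ ^ q := fun y =>
    (ENNReal.continuous_rpow_const.comp
      (hf.continuous.sub continuous_const).enorm).measurable
  have h1 : ‖f x - f y‖ₑ ^ q * volume B ≤ 2 ^ (q - 1) * (K + K) := by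
    calc ‖f x - f y‖ₑ ^ q * volume B = ∫⁻ z in B, ‖f x - f y‖ₑ ^ q := by simp
      _ ≤ ∫⁻ z in B, 2 ^ (q - 1) * (‖f z - f x‖ₑ ^ q + ‖f z - f y‖ₑ ^ q) := by
          refine lintegral_mono fun z => le_trans ?_ (rpow_add_le_mul_rpow_add_rpow _ _ hq)
          gcongr
          have : f x - f y = -(f z - f x) + (f z - f y) := by ring
          rw [this]
          refine (enorm_add_le _ _).trans ?_
          rw [enorm_neg]
      _ = 2 ^ (q - 1) * ((∫⁻ z in B, ‖f z - f x‖ₑ ^ q) + ∫⁻ z in B, ‖f z - f y‖ₑ ^ q) := by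
          rw [lintegral_const_mul' _ _ (by finiteness), lintegral_add_left (hmeas x)]
      _ ≤ _ := by
          gcongr
          · exact (lintegral_mono_set hBx).trans hpx
          · exact (lintegral_mono_set hBy).trans hpy
  have h2 : 2 ^ (q - 1) * (K + K) =
      ENNReal.ofReal (2 ^ q * 2 ^ n * (R * α) ^ q) * volume B := by
    have e1 : (2 : ℝ≥0∞) ^ (q - 1) * (K + K) = 2 ^ q * K := by
      have : (2 : ℝ≥0∞) ^ q = 2 ^ (q - 1) * 2 := by
        conv_lhs => rw [show q = (q - 1) + 1 by ring]
        rw [ENNReal.rpow_add _ _ (by norm_num) (by norm_num), rpow_one]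
      rw [this]; ring
    have e2 : (2 : ℝ≥0∞) ^ q = ENNReal.ofReal (2 ^ q) := by
      rw [← ENNReal.ofReal_rpow_of_pos two_pos]; simp
    rw [e1, hK, hV, e2, ENNReal.ofReal_rpow_of_pos hR0, Real.mul_rpow hR0.le hα.le,
      ENNReal.ofReal_mul (by positivity), ENNReal.ofReal_mul (by positivity),
      ENNReal.ofReal_mul (by positivity)]
    ring
  rw [h2, ENNReal.mul_le_mul_iff_left hB0 hBt, Real.enorm_eq_ofReal_abs,
    ENNReal.ofReal_rpow_of_nonneg (abs_nonneg _) hq0.le,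
    ENNReal.ofReal_le_ofReal_iff (by positivity)] at h1
  have h3 : (2 : ℝ) ^ q * 2 ^ n * (R * α) ^ q ≤ (2 ^ (n + 1) * α * R) ^ q := by
    have : (2 : ℝ) ^ n ≤ ((2 : ℝ) ^ n) ^ q :=
      Real.self_le_rpow_of_one_le (one_le_pow₀ one_le_two) hq
    rw [show (2 : ℝ) ^ (n + 1) * α * R = 2 * 2 ^ n * (R * α) by ring,
      Real.mul_rpow (x := 2 * 2 ^ n) (by positivity) (by positivity),
      Real.mul_rpow (x := 2) (by positivity) (by positivity)]
    gcongr
  exact (Real.rpow_le_rpow_iff (abs_nonneg _) (by positivity) hq0).1 (h1.trans h3)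

/-! ### Whitney covering -/

/-- A smooth cutoff profile: equal to `1` on the ball of radius `5`, supported in the ball of
radius `10`, with values in `[0, 1]` and Lipschitz constant `L`. -/
structure Profile (η : Eu n → ℝ) (L : ℝ) : Prop where
  smooth : ContDiff ℝ 1 η
  nonneg : ∀ x, 0 ≤ η x
  le_one : ∀ x, η x ≤ 1
  eq_one : ∀ x, ‖x‖ ≤ 5 → η x = 1
  supp : ∀ x, η x ≠ 0 → ‖x‖ < 10
  pos : 0 < L
  lip : ∀ x y, |η x - η y| ≤ L * dist x y

lemma exists_profile (n : ℕ) : ∃ (η : Eu n → ℝ) (L : ℝ), Profile η L := by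
  let b : ContDiffBump (0 : Eu n) := ⟨5, 10, by norm_num, by norm_num⟩
  have hs : ContDiff ℝ 1 b := b.contDiff
  obtain ⟨L, hL⟩ := hs.lipschitzWith_of_hasCompactSupport b.hasCompactSupport one_ne_zero
  refine ⟨b, L + 1, hs, fun x => b.nonneg, fun x => b.le_one, fun x hx => ?_, fun x hx => ?_,
    by positivity, fun x y => ?_⟩
  · exact b.one_of_mem_closedBall (by simpa [b] using hx)
  · have : x ∈ Function.support b := hx
    rw [b.support_eq] at this
    simpa [b] using this
  · have := hL.dist_le_mul x y
    rw [Real.dist_eq] at this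
    refine this.trans ?_
    gcongr
    linarith

/-- The covering of the complement of `F` by balls of radius comparable to the distance to `F`,
together with points `y i` of `F` nearest to the centres. An index with `ρ i = 0` is unused. -/
structure Whitney (F : Set (Eu n)) (c : ℕ → Eu n) (ρ : ℕ → ℝ) (y : ℕ → Eu n) : Prop where
  nonneg : ∀ i, 0 ≤ ρ i
  infDist_eq : ∀ i, 0 < ρ i → infDist (c i) F = 100 * ρ i
  disj : ∀ i j, i ≠ j → Disjoint (ball (c i) (ρ i)) (ball (c j) (ρ j))
  cover : ∀ x ∉ F, ∃ i, 0 < ρ i ∧ dist x (c i) ≤ 5 * ρ i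
  mem : ∀ i, y i ∈ F
  dist_eq : ∀ i, infDist (c i) F = dist (c i) (y i)

section
variable {F : Set (Eu n)} {c : ℕ → Eu n} {ρ : ℕ → ℝ} {y : ℕ → Eu n}

lemma radius_pos {i : ℕ} {x : Eu n} (hx : x ∈ ball (c i) (10 * ρ i)) : 0 < ρ i := by
  have := pos_of_mem_ball hx
  linarith

variable (W : Whitney F c ρ y)
include W

lemma Whitney.le_infDist {i : ℕ} {x : Eu n} (hx : x ∈ ball (c i) (10 * ρ i)) :
    90 * ρ i ≤ infDist x F := by
  have h1 := W.infDist_eq i (radius_pos hx)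
  have h2 := infDist_le_infDist_add_dist (s := F) (x := c i) (y := x)
  have h3 := mem_ball'.1 hx
  linarith

lemma Whitney.infDist_le {i : ℕ} {x : Eu n} (hx : x ∈ ball (c i) (10 * ρ i)) :
    infDist x F ≤ 110 * ρ i := by
  have h1 := W.infDist_eq i (radius_pos hx)
  have h2 := infDist_le_infDist_add_dist (s := F) (x := x) (y := c i)
  have h3 := mem_ball.1 hx
  linarith

lemma Whitney.notMem {i : ℕ} {x : Eu n} (hx : x ∈ ball (c i) (10 * ρ i)) : x ∉ F := by
  intro h
  have h1 := W.le_infDist hx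
  rw [infDist_zero_of_mem h] at h1
  have := radius_pos hx
  linarith

/-- Bounded overlap, by comparing volumes of the disjoint small balls. -/
lemma Whitney.card_le (x : Eu n) (S : Finset ℕ) (hS : ∀ i ∈ S, x ∈ ball (c i) (10 * ρ i)) :
    S.card ≤ 110 ^ n := by
  rcases S.eq_empty_or_nonempty with rfl | ⟨i₀, hi₀⟩
  · simp
  have hd : 0 < infDist x F := by
    have := W.le_infDist (hS i₀ hi₀)
    have := radius_pos (hS i₀ hi₀)
    linarith
  set d := infDist x F
  have hv0 := vol_ball_pos x (r := d / 110) (by positivity)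
  have hvt := vol_ball_ne_top x (d / 110)
  have hbig : volume (ball x d) = ENNReal.ofReal (110 ^ n) * volume (ball x (d / 110)) := by
    rw [← vol_scale x x (by norm_num)]; congr 2; ring
  have h1 : (S.card : ℝ≥0∞) * volume (ball x (d / 110)) ≤
      ENNReal.ofReal (110 ^ n) * volume (ball x (d / 110)) := by
    calc (S.card : ℝ≥0∞) * volume (ball x (d / 110))
        = ∑ i ∈ S, volume (ball x (d / 110)) := by simp
      _ ≤ ∑ i ∈ S, volume (ball (c i) (ρ i)) := by
          refine Finset.sum_le_sum fun i hi => ?_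
          rw [Measure.addHaar_ball_center volume x, ← Measure.addHaar_ball_center volume (c i)]
          refine measure_mono (ball_subset_ball ?_)
          have := W.infDist_le (hS i hi)
          linarith
      _ = volume (⋃ i ∈ S, ball (c i) (ρ i)) :=
          (measure_biUnion_finset (fun i _ j _ h => W.disj i j h)
            fun i _ => measurableSet_ball).symm
      _ ≤ volume (ball x d) := by
          refine measure_mono (Set.iUnion₂_subset fun i hi => ball_subset_ball' ?_)
          have h1 := W.le_infDist (hS i hi)
          have h2 := mem_ball'.1 (hS i hi)
          have h3 := radius_pos (hS i hi)
          linarith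
      _ = _ := hbig
  rw [ENNReal.mul_le_mul_iff_left hv0.ne' hvt] at h1
  have h2 : ENNReal.ofReal (110 ^ n) = ((110 ^ n : ℕ) : ℝ≥0∞) := by
    rw [← ENNReal.ofReal_natCast]; norm_num
  rw [h2] at h1
  exact_mod_cast h1

lemma Whitney.exists_finset (x : Eu n) :
    ∃ J : Finset ℕ, (∀ i, i ∈ J ↔ x ∈ ball (c i) (10 * ρ i)) ∧ J.card ≤ 110 ^ n := by
  have hfin : {i | x ∈ ball (c i) (10 * ρ i)}.Finite := by
    by_contra h
    obtain ⟨t, ht, hc⟩ := Set.Infinite.exists_subset_card_eq h (110 ^ n + 1)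
    have := W.card_le x t (fun i hi => ht hi)
    lia
  refine ⟨hfin.toFinset, by simp, W.card_le x _ (by simp)⟩

lemma Whitney.overlap (x : Eu n) :
    ∑' i, (ball (c i) (10 * ρ i)).indicator (fun _ => (1 : ℝ≥0∞)) x ≤ (110 ^ n : ℕ) := by
  obtain ⟨J, hJ, hc⟩ := W.exists_finset x
  rw [tsum_eq_sum (s := J) (fun i hi => Set.indicator_of_notMem (by rwa [hJ] at hi) _)]
  calc ∑ i ∈ J, (ball (c i) (10 * ρ i)).indicator (fun _ => (1 : ℝ≥0∞)) x
      ≤ ∑ i ∈ J, (1 : ℝ≥0∞) := Finset.sum_le_sum fun i _ => Set.indicator_le_self _ (fun _ => 1) x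
    _ = J.card := by simp
    _ ≤ (110 ^ n : ℕ) := by exact_mod_cast hc

lemma Whitney.sum_vol_le :
    ∑' i, volume (ball (c i) (10 * ρ i)) ≤ ENNReal.ofReal (10 ^ n) * volume Fᶜ := by
  calc _ = ENNReal.ofReal (10 ^ n) * ∑' i, volume (ball (c i) (ρ i)) := by
        rw [← ENNReal.tsum_mul_left]
        exact tsum_congr fun i => vol_scale _ _ (by norm_num) _
    _ ≤ _ := by
        gcongr
        refine sum_disjoint_le c ρ W.disj _ fun i x hx => W.notMem (i := i) ?_
        exact ball_subset_ball (by linarith [W.nonneg i]) hx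

end

/-! ### Partition of unity -/

/-- The cutoff function adapted to the `i`-th ball. -/
noncomputable def psi (η : Eu n → ℝ) (c : ℕ → Eu n) (ρ : ℕ → ℝ) (i : ℕ) (x : Eu n) : ℝ :=
  if 0 < ρ i then η ((ρ i)⁻¹ • (x - c i)) else 0

/-- The part of the constant `1` left over by the first `i` cutoffs. -/
noncomputable def rem (η : Eu n → ℝ) (c : ℕ → Eu n) (ρ : ℕ → ℝ) (i : ℕ) (x : Eu n) : ℝ :=
  ∏ j ∈ Finset.range i, (1 - psi η c ρ j x)

/-- The partition of unity `φ_i = ψ_i ∏_{j<i} (1 - ψ_j)`, written as a difference of consecutive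
remainders so that its sum telescopes. -/
noncomputable def phi (η : Eu n → ℝ) (c : ℕ → Eu n) (ρ : ℕ → ℝ) (i : ℕ) (x : Eu n) : ℝ :=
  rem η c ρ i x - rem η c ρ (i + 1) x

section
variable {η : Eu n → ℝ} {L : ℝ} (P : Profile η L)
  {F : Set (Eu n)} {c : ℕ → Eu n} {ρ : ℕ → ℝ} {y : ℕ → Eu n}
include P

lemma psi_smooth (i : ℕ) : ContDiff ℝ 1 (psi η c ρ i) := by
  unfold psi
  split_ifs
  · exact P.smooth.comp (by fun_prop)
  · exact contDiff_const

lemma rem_smooth (i : ℕ) : ContDiff ℝ 1 (rem η c ρ i) := by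
  unfold rem
  exact contDiff_prod fun j _ => contDiff_const.sub (psi_smooth P j)

lemma phi_smooth (i : ℕ) : ContDiff ℝ 1 (phi η c ρ i) :=
  (rem_smooth P i).sub (rem_smooth P (i + 1))

lemma psi_nonneg (i : ℕ) (x : Eu n) : 0 ≤ psi η c ρ i x := by
  unfold psi
  split_ifs
  · exact P.nonneg _
  · rfl

lemma psi_le_one (i : ℕ) (x : Eu n) : psi η c ρ i x ≤ 1 := by
  unfold psi
  split_ifs
  · exact P.le_one _
  · exact zero_le_one

lemma psi_supp {i : ℕ} {x : Eu n} (h : psi η c ρ i x ≠ 0) : x ∈ ball (c i) (10 * ρ i) := by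
  unfold psi at h
  split_ifs at h with h0
  · have := P.supp _ h
    rw [norm_smul, norm_inv, Real.norm_of_nonneg h0.le, inv_mul_lt_iff₀ h0] at this
    rw [mem_ball, dist_eq_norm]
    linarith
  · simp at h

lemma psi_eq_one {i : ℕ} {x : Eu n} (h0 : 0 < ρ i) (h : dist x (c i) ≤ 5 * ρ i) :
    psi η c ρ i x = 1 := by
  unfold psi
  rw [if_pos h0]
  apply P.eq_one
  rw [norm_smul, norm_inv, Real.norm_of_nonneg h0.le, inv_mul_le_iff₀ h0, ← dist_eq_norm]
  linarith

lemma rem_nonneg (i : ℕ) (x : Eu n) : 0 ≤ rem η c ρ i x :=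
  Finset.prod_nonneg fun j _ => sub_nonneg.2 (psi_le_one P j x)

lemma rem_le_one (i : ℕ) (x : Eu n) : rem η c ρ i x ≤ 1 :=
  Finset.prod_le_one (fun j _ => sub_nonneg.2 (psi_le_one P j x))
    fun j _ => by linarith [psi_nonneg P (c := c) (ρ := ρ) j x]

omit P in
lemma phi_eq (i : ℕ) (x : Eu n) : phi η c ρ i x = rem η c ρ i x * psi η c ρ i x := by
  unfold phi
  rw [rem, rem, Finset.prod_range_succ]; ring

lemma phi_nonneg (i : ℕ) (x : Eu n) : 0 ≤ phi η c ρ i x := by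
  rw [phi_eq]; exact mul_nonneg (rem_nonneg P i x) (psi_nonneg P i x)

lemma phi_le_one (i : ℕ) (x : Eu n) : phi η c ρ i x ≤ 1 := by
  rw [phi_eq]; exact mul_le_one₀ (rem_le_one P i x) (psi_nonneg P i x) (psi_le_one P i x)

lemma phi_supp {i : ℕ} {x : Eu n} (h : phi η c ρ i x ≠ 0) : x ∈ ball (c i) (10 * ρ i) := by
  rw [phi_eq] at h
  exact psi_supp P (right_ne_zero_of_mul h)

lemma psi_lip {i : ℕ} (hi : 0 < ρ i) (x x' : Eu n) :
    |psi η c ρ i x - psi η c ρ i x'| ≤ L / ρ i * dist x x' := by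
  unfold psi
  rw [if_pos hi, if_pos hi]
  refine (P.lip _ _).trans (le_of_eq ?_)
  rw [dist_eq_norm, ← smul_sub, norm_smul, norm_inv, Real.norm_of_nonneg hi.le, dist_eq_norm]
  rw [sub_sub_sub_cancel_right]
  field_simp

lemma rem_diff (i : ℕ) (x x' : Eu n) : |rem η c ρ i x - rem η c ρ i x'| ≤
    ∑ j ∈ Finset.range i, |psi η c ρ j x - psi η c ρ j x'| := by
  induction i with
  | zero => simp [rem]
  | succ i ih =>
    have e : ∀ z, rem η c ρ (i + 1) z = rem η c ρ i z * (1 - psi η c ρ i z) := fun z => by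
      rw [rem, rem, Finset.prod_range_succ]
    rw [Finset.sum_range_succ, e, e]
    have h : rem η c ρ i x * (1 - psi η c ρ i x) - rem η c ρ i x' * (1 - psi η c ρ i x') =
      (rem η c ρ i x - rem η c ρ i x') * (1 - psi η c ρ i x) +
        rem η c ρ i x' * (psi η c ρ i x' - psi η c ρ i x) := by ring
    rw [h]
    refine (abs_add_le _ _).trans ?_
    rw [abs_mul, abs_mul, abs_of_nonneg (sub_nonneg.2 (psi_le_one P i x)),
      abs_of_nonneg (rem_nonneg P i x'), abs_sub_comm (psi η c ρ i x')]
    have h1 := mul_le_of_le_one_right (abs_nonneg (rem η c ρ i x - rem η c ρ i x'))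
      (show 1 - psi η c ρ i x ≤ 1 by linarith [psi_nonneg P (c := c) (ρ := ρ) i x])
    have h2 := mul_le_of_le_one_left (abs_nonneg (psi η c ρ i x - psi η c ρ i x'))
      (rem_le_one P (c := c) (ρ := ρ) i x')
    linarith

variable (W : Whitney F c ρ y)
include W

/-- Only indices whose ball contains `x` or `x'` contribute, and for these `ρ j` is comparable to the
distance from `x` to `F`. -/
lemma sum_psi_diff {x x' : Eu n} (hxx : dist x x' ≤ infDist x F / 10) (i : ℕ) :
    ∑ j ∈ Finset.range i, |psi η c ρ j x - psi η c ρ j x'| ≤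
      250 * 110 ^ n * L / infDist x F * dist x x' := by
  rcases eq_or_ne x x' with rfl | hne
  · simp
  have hd : 0 < infDist x F := by
    have := dist_pos.2 hne
    linarith
  obtain ⟨J, hJ, hc⟩ := W.exists_finset x
  obtain ⟨J', hJ', hc'⟩ := W.exists_finset x'
  have hL := P.pos
  have hterm : ∀ j ∈ J ∪ J', |psi η c ρ j x - psi η c ρ j x'| ≤ 125 * L / infDist x F * dist x x' := by
    intro j hj
    have hr : 0 < ρ j ∧ infDist x F ≤ 125 * ρ j := by
      rcases Finset.mem_union.1 hj with h | h
      · rw [hJ] at h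
        have := radius_pos h
        have := W.infDist_le h
        exact ⟨radius_pos h, by linarith⟩
      · rw [hJ'] at h
        have := radius_pos h
        have h2 := W.infDist_le h
        have h3 := infDist_le_infDist_add_dist (s := F) (x := x) (y := x')
        exact ⟨radius_pos h, by linarith⟩
    refine (psi_lip P hr.1 x x').trans ?_
    refine mul_le_mul_of_nonneg_right ?_ dist_nonneg
    rw [div_le_div_iff₀ hr.1 hd]
    nlinarith [mul_le_mul_of_nonneg_left hr.2 hL.le]
  calc ∑ j ∈ Finset.range i, |psi η c ρ j x - psi η c ρ j x'|
      ≤ ∑ j ∈ Finset.range i ∪ (J ∪ J'), |psi η c ρ j x - psi η c ρ j x'| :=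
        Finset.sum_le_sum_of_subset_of_nonneg Finset.subset_union_left fun _ _ _ => abs_nonneg _
    _ = ∑ j ∈ J ∪ J', |psi η c ρ j x - psi η c ρ j x'| := by
        refine (Finset.sum_subset Finset.subset_union_right fun j _ hj => ?_).symm
        rw [Finset.mem_union, not_or, hJ, hJ'] at hj
        rw [not_imp_comm.1 (psi_supp P) hj.1, not_imp_comm.1 (psi_supp P) hj.2]
        simp
    _ ≤ (J ∪ J').card • (125 * L / infDist x F * dist x x') := Finset.sum_le_card_nsmul _ _ _ hterm
    _ ≤ (2 * 110 ^ n : ℕ) • (125 * L / infDist x F * dist x x') := by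
        gcongr
        exact (Finset.card_union_le _ _).trans (by lia)
    _ = _ := by
        rw [nsmul_eq_mul]; push_cast; ring

lemma phi_diff {x x' : Eu n} (hxx : dist x x' ≤ infDist x F / 10) (i : ℕ) :
    |phi η c ρ i x - phi η c ρ i x'| ≤ 500 * 110 ^ n * L / infDist x F * dist x x' := by
  have h1 := (rem_diff P i x x').trans (sum_psi_diff P W hxx i)
  have h2 := (rem_diff P (i + 1) x x').trans (sum_psi_diff P W hxx (i + 1))
  have h : phi η c ρ i x - phi η c ρ i x' =
    (rem η c ρ i x - rem η c ρ i x') - (rem η c ρ (i + 1) x - rem η c ρ (i + 1) x') := by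
    unfold phi; ring
  rw [h]
  refine (abs_sub _ _).trans ((add_le_add h1 h2).trans (le_of_eq ?_))
  ring

lemma sum_phi {x : Eu n} (hx : x ∉ F) {J : Finset ℕ} (hJ : ∀ i, x ∈ ball (c i) (10 * ρ i) → i ∈ J) :
    ∑ i ∈ J, phi η c ρ i x = 1 := by
  obtain ⟨j, hj0, hj⟩ := W.cover x hx
  obtain ⟨M, hM⟩ := Finset.exists_nat_subset_range (insert j J)
  have hjM : j ∈ Finset.range M := hM (Finset.mem_insert_self _ _)
  rw [Finset.sum_subset ((Finset.subset_insert j J).trans hM)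
    (fun i _ hi => not_imp_comm.1 (fun h => hJ i (phi_supp P h)) hi)]
  unfold phi
  rw [Finset.sum_range_sub']
  have h0 : rem η c ρ M x = 0 := by
    unfold rem
    exact Finset.prod_eq_zero hjM (by rw [psi_eq_one P hj0 hj, sub_self])
  rw [h0]
  simp [rem]

lemma norm_fderiv_phi {x : Eu n} (hx : x ∉ F) (hF : IsClosed F) (i : ℕ) :
    ‖fderiv ℝ (phi η c ρ i) x‖ ≤ 500 * 110 ^ n * L / infDist x F := by
  have hd : 0 < infDist x F := (hF.notMem_iff_infDist_pos ⟨y 0, W.mem 0⟩).1 hx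
  have hL := P.pos
  refine norm_fderiv_le_of_lip' ℝ (by positivity) ?_
  filter_upwards [closedBall_mem_nhds x (show 0 < infDist x F / 10 by positivity)] with x' hx'
  rw [Real.norm_eq_abs, abs_sub_comm, ← dist_eq_norm, dist_comm]
  exact phi_diff P W (mem_closedBall'.1 hx') i

end

/-! ### The decomposition -/

/-- The `i`-th bad part `(f - f (y i)) φ_i`. -/
noncomputable def bad (f η : Eu n → ℝ) (c : ℕ → Eu n) (ρ : ℕ → ℝ) (y : ℕ → Eu n) (i : ℕ)
    (x : Eu n) : ℝ :=
  (f x - f (y i)) * phi η c ρ i x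

/-- The good part, which equals `f` on `F` and `∑ f (y i) φ_i` off `F`. -/
noncomputable def good (f η : Eu n → ℝ) (c : ℕ → Eu n) (ρ : ℕ → ℝ) (y : ℕ → Eu n) (x : Eu n) : ℝ :=
  f x - ∑' i, bad f η c ρ y i x

variable {η : Eu n → ℝ} {L : ℝ} (P : Profile η L)
  {F : Set (Eu n)} {c : ℕ → Eu n} {ρ : ℕ → ℝ} {y : ℕ → Eu n} (W : Whitney F c ρ y)
include P W

lemma good_sub (f : Eu n → ℝ) {x : Eu n} (hx : x ∉ F) {J : Finset ℕ}
    (hJ : ∀ i, x ∈ ball (c i) (10 * ρ i) → i ∈ J) (a : ℝ) :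
    good f η c ρ y x - a = ∑ i ∈ J, (f (y i) - a) * phi η c ρ i x := by
  have h1 := sum_phi P W hx hJ
  have h2 : ∑' i, bad f η c ρ y i x = ∑ i ∈ J, bad f η c ρ y i x :=
    tsum_eq_sum fun i hi => by
      rw [bad, not_imp_comm.1 (fun h => hJ i (phi_supp P h)) hi, mul_zero]
  rw [good, h2]
  simp only [bad, sub_mul, Finset.sum_sub_distrib, ← Finset.mul_sum, h1]
  ring

lemma good_of_mem (f : Eu n → ℝ) {x : Eu n} (hx : x ∈ F) : good f η c ρ y x = f x := by
  have h : ∀ i, bad f η c ρ y i x = 0 := fun i => by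
    have : phi η c ρ i x = 0 := by
      by_contra h
      exact W.notMem (phi_supp P h) hx
    rw [bad, this, mul_zero]
  simp [good, h]

omit P in
lemma dist_y_le {i : ℕ} {x : Eu n} (hx : x ∈ ball (c i) (10 * ρ i)) (z : Eu n) :
    dist (y i) z ≤ 11 / 9 * infDist x F + dist x z := by
  have h1 := W.le_infDist hx
  have h2 := W.dist_eq i
  rw [W.infDist_eq i (radius_pos hx), dist_comm] at h2
  have h3 := mem_ball'.1 hx
  have h4 := dist_triangle4 (y i) (c i) x z
  linarith

variable {f : Eu n → ℝ} {K : ℝ} (hK : 0 ≤ K)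
  (hfK : ∀ x ∈ F, ∀ y ∈ F, |f x - f y| ≤ K * dist x y)
include hK hfK

lemma good_sub_le (x : Eu n) {z : Eu n} (hz : z ∈ F) :
    |good f η c ρ y x - f z| ≤ 3 * K * dist x z := by
  by_cases hx : x ∈ F
  · rw [good_of_mem P W f hx]
    refine (hfK x hx z hz).trans ?_
    gcongr; linarith
  obtain ⟨J, hJ, -⟩ := W.exists_finset x
  rw [good_sub P W f hx (fun i hi => (hJ i).2 hi)]
  calc |∑ i ∈ J, (f (y i) - f z) * phi η c ρ i x|
      ≤ ∑ i ∈ J, |(f (y i) - f z) * phi η c ρ i x| := Finset.abs_sum_le_sum_abs _ _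
    _ ≤ ∑ i ∈ J, 3 * K * dist x z * phi η c ρ i x := by
        refine Finset.sum_le_sum fun i hi => ?_
        rw [abs_mul, abs_of_nonneg (phi_nonneg P i x)]
        refine mul_le_mul_of_nonneg_right ?_ (phi_nonneg P i x)
        refine (hfK _ (W.mem i) _ hz).trans ?_
        have h1 := dist_y_le W ((hJ i).1 hi) z
        have h2 := infDist_le_dist_of_mem (x := x) hz
        have h3 : dist (y i) z ≤ 3 * dist x z := by
          have := dist_nonneg (x := x) (y := z)
          linarith
        nlinarith [mul_le_mul_of_nonneg_left h3 hK]
    _ = 3 * K * dist x z := by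
        rw [← Finset.mul_sum, sum_phi P W hx (fun i hi => (hJ i).2 hi), mul_one]

lemma good_lip (hF : IsClosed F) (x x' : Eu n) :
    |good f η c ρ y x - good f η c ρ y x'| ≤
      K * (63 + 6 * 110 ^ n * (500 * 110 ^ n * L)) * dist x x' := by
  have hL := P.pos
  have hD := dist_nonneg (x := x) (y := x')
  obtain ⟨z, hz, hxz⟩ := hF.exists_infDist_eq_dist ⟨y 0, W.mem 0⟩ x
  have hd0 : 0 ≤ infDist x F := infDist_nonneg
  rcases lt_or_ge (infDist x F / 10) (dist x x') with hfar | hnear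
  · -- the distance to `F` is dominated by `dist x x'`, so compare both values with `f z`
    have h1 := good_sub_le P W hK hfK x hz
    have h2 := good_sub_le P W hK hfK x' hz
    have h3 := abs_sub_le (good f η c ρ y x) (f z) (good f η c ρ y x')
    rw [abs_sub_comm (f z)] at h3
    have h4 := dist_triangle_left x' z x
    have h5 : 3 * (dist x z + dist x' z) ≤ 63 * dist x x' := by linarith
    have h6 := mul_le_mul_of_nonneg_left h5 hK
    have h7 : 0 ≤ K * (6 * 110 ^ n * (500 * 110 ^ n * L)) * dist x x' := by positivity
    linarith
  by_cases hx : x ∈ F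
  · rw [infDist_zero_of_mem hx, zero_div] at hnear
    rw [dist_le_zero.1 hnear]; simp
  have hd : 0 < infDist x F := (hF.notMem_iff_infDist_pos ⟨y 0, W.mem 0⟩).1 hx
  have hdd := infDist_le_infDist_add_dist (s := F) (x := x) (y := x')
  have hdd' := infDist_le_infDist_add_dist (s := F) (x := x') (y := x)
  rw [dist_comm x'] at hdd'
  have hx' : x' ∉ F := (hF.notMem_iff_infDist_pos ⟨y 0, W.mem 0⟩).2 (by linarith)
  obtain ⟨J, hJ, hc⟩ := W.exists_finset x
  obtain ⟨J', hJ', hc'⟩ := W.exists_finset x'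
  have e : good f η c ρ y x - good f η c ρ y x' =
      ∑ i ∈ J ∪ J', (f (y i) - f z) * (phi η c ρ i x - phi η c ρ i x') := by
    have h1 := good_sub P W f hx (J := J ∪ J')
      (fun i hi => Finset.mem_union_left _ ((hJ i).2 hi)) (f z)
    have h2 := good_sub P W f hx' (J := J ∪ J')
      (fun i hi => Finset.mem_union_right _ ((hJ' i).2 hi)) (f z)
    simp only [mul_sub, Finset.sum_sub_distrib, ← h1, ← h2]
    ring
  rw [e]
  have hterm : ∀ i ∈ J ∪ J', |(f (y i) - f z) * (phi η c ρ i x - phi η c ρ i x')| ≤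
      3 * K * (500 * 110 ^ n * L) * dist x x' := by
    intro i hi
    have hyz : dist (y i) z ≤ 3 * infDist x F := by
      rcases Finset.mem_union.1 hi with h | h
      · have := dist_y_le W ((hJ i).1 h) z
        linarith
      · have := dist_y_le W ((hJ' i).1 h) z
        have := dist_triangle_left x' z x
        linarith
    rw [abs_mul]
    calc |f (y i) - f z| * |phi η c ρ i x - phi η c ρ i x'|
        ≤ (K * (3 * infDist x F)) * (500 * 110 ^ n * L / infDist x F * dist x x') := by
          gcongr
          · exact (hfK _ (W.mem i) _ hz).trans (by gcongr)
          · exact phi_diff P W hnear i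
      _ = _ := by field_simp
  calc _ ≤ ∑ i ∈ J ∪ J', |(f (y i) - f z) * (phi η c ρ i x - phi η c ρ i x')| :=
        Finset.abs_sum_le_sum_abs _ _
    _ ≤ (J ∪ J').card • (3 * K * (500 * 110 ^ n * L) * dist x x') :=
        Finset.sum_le_card_nsmul _ _ _ hterm
    _ ≤ (2 * 110 ^ n : ℕ) • (3 * K * (500 * 110 ^ n * L) * dist x x') := by
        gcongr
        exact (Finset.card_union_le _ _).trans (by lia)
    _ = K * (6 * 110 ^ n * (500 * 110 ^ n * L)) * dist x x' := by
        rw [nsmul_eq_mul]; push_cast; ring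
    _ ≤ _ := by
        gcongr; linarith

omit hK hfK

lemma bad_fderiv (hF : IsClosed F) (hf : ContDiff ℝ 1 f) (i : ℕ) {x : Eu n}
    (hx : x ∈ ball (c i) (10 * ρ i)) :
    ‖fderiv ℝ (bad f η c ρ y i) x‖ₑ ≤ ‖fderiv ℝ f x‖ₑ +
      ENNReal.ofReal (500 * 110 ^ n * L / (90 * ρ i)) * ‖f x - f (y i)‖ₑ := by
  have hL := P.pos
  have hρ := radius_pos hx
  have hxF := W.notMem hx
  have h1 : HasFDerivAt (fun x => f x - f (y i)) (fderiv ℝ f x) x :=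
    ((hf.differentiable one_ne_zero) x).hasFDerivAt.sub_const _
  have h2 : HasFDerivAt (phi η c ρ i) (fderiv ℝ (phi η c ρ i) x) x :=
    (((phi_smooth P i).differentiable one_ne_zero) x).hasFDerivAt
  have h3 : fderiv ℝ (bad f η c ρ y i) x = (f x - f (y i)) • fderiv ℝ (phi η c ρ i) x +
      phi η c ρ i x • fderiv ℝ f x := (h1.mul h2).fderiv
  have h4 := norm_fderiv_phi P W hxF hF i
  have h5 : 500 * 110 ^ n * L / infDist x F ≤ 500 * 110 ^ n * L / (90 * ρ i) := by
    gcongr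
    exact W.le_infDist hx
  have h6 : ‖fderiv ℝ (bad f η c ρ y i) x‖ ≤ ‖fderiv ℝ f x‖ +
      500 * 110 ^ n * L / (90 * ρ i) * ‖f x - f (y i)‖ := by
    rw [h3, add_comm]
    refine (norm_add_le _ _).trans ?_
    rw [norm_smul, norm_smul, mul_comm ‖f x - f (y i)‖]
    gcongr
    · rw [Real.norm_of_nonneg (phi_nonneg P i x)]
      exact mul_le_of_le_one_left (norm_nonneg _) (phi_le_one P i x)
    · exact h4.trans h5
  rw [← ofReal_norm, ← ofReal_norm, ← ofReal_norm, ← ENNReal.ofReal_mul (by positivity),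
    ← ENNReal.ofReal_add (by positivity) (by positivity)]
  exact ENNReal.ofReal_le_ofReal h6

lemma bad_lintegral (hF : IsClosed F) (hf : ContDiff ℝ 1 f) {q : ℝ} (hq : 1 ≤ q) {α : ℝ}
    (hFb : ∀ z ∈ F, z ∉ bigSet (fun x => ‖fderiv ℝ f x‖ₑ ^ q) (ENNReal.ofReal (α ^ q))) (i : ℕ) :
    ∫⁻ x in ball (c i) (10 * ρ i), ‖fderiv ℝ (bad f η c ρ y i) x‖ₑ ^ q ≤
      ENNReal.ofReal ((2 ^ (q - 1) * (1 + (2 * (500 * 110 ^ n * L)) ^ q) * 12 ^ n) * α ^ q) *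
        volume (ball (c i) (10 * ρ i)) := by
  have hL := P.pos
  have hq0 : 0 < q := by linarith
  rcases (W.nonneg i).eq_or_lt with h0 | hρ
  · simp [← h0]
  set Λ : ℝ := 500 * 110 ^ n * L with hΛ
  have hΛ0 : 0 < Λ := by positivity
  set B := ball (c i) (10 * ρ i)
  set R := 120 * ρ i with hR
  have hsub : B ⊆ ball (y i) R := by
    refine ball_subset_ball' ?_
    rw [← W.dist_eq i, W.infDist_eq i hρ]
    linarith
  have hvol : volume (ball (y i) R) = ENNReal.ofReal (12 ^ n) * volume B := by
    rw [← vol_scale (y i) (c i) (by norm_num)]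
    congr 2; rw [hR]; ring
  have hyi := hFb _ (W.mem i)
  have hA := avg_le_of_notMem hyi (r := R)
  have hB := poincare hf hq hyi (R := R)
  have hmeas : Measurable fun x => ‖fderiv ℝ f x‖ₑ ^ q :=
    (ENNReal.continuous_rpow_const.comp (hf.continuous_fderiv one_ne_zero).enorm).measurable
  calc ∫⁻ x in B, ‖fderiv ℝ (bad f η c ρ y i) x‖ₑ ^ q
      ≤ ∫⁻ x in B, 2 ^ (q - 1) * (‖fderiv ℝ f x‖ₑ ^ q +
          ENNReal.ofReal (Λ / (90 * ρ i)) ^ q * ‖f x - f (y i)‖ₑ ^ q) := by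
        refine setLIntegral_mono' measurableSet_ball fun x hx => ?_
        rw [← ENNReal.mul_rpow_of_nonneg _ _ hq0.le]
        refine le_trans ?_ (rpow_add_le_mul_rpow_add_rpow _ _ hq)
        gcongr
        exact bad_fderiv P W hF hf i hx
    _ = 2 ^ (q - 1) * ((∫⁻ x in B, ‖fderiv ℝ f x‖ₑ ^ q) +
          ENNReal.ofReal (Λ / (90 * ρ i)) ^ q * ∫⁻ x in B, ‖f x - f (y i)‖ₑ ^ q) := by
        rw [lintegral_const_mul' _ _ (by finiteness), lintegral_add_left hmeas,
          lintegral_const_mul' _ _ (by finiteness)]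
    _ ≤ 2 ^ (q - 1) * (ENNReal.ofReal (α ^ q) * volume (ball (y i) R) +
          ENNReal.ofReal (Λ / (90 * ρ i)) ^ q *
            (ENNReal.ofReal R ^ q * (ENNReal.ofReal (α ^ q) * volume (ball (y i) R)))) := by
        refine mul_le_mul_right (add_le_add ?_ (mul_le_mul_right ?_ _)) _
        · exact (lintegral_mono_set hsub).trans hA
        · exact (lintegral_mono_set hsub).trans hB
    _ = 2 ^ (q - 1) * ((1 + ENNReal.ofReal (Λ / (90 * ρ i) * R) ^ q) *
          (ENNReal.ofReal (α ^ q) * (ENNReal.ofReal (12 ^ n) * volume B))) := by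
        rw [hvol, ENNReal.ofReal_mul (p := Λ / (90 * ρ i)) (by positivity),
          ENNReal.mul_rpow_of_nonneg _ _ hq0.le]
        ring
    _ ≤ 2 ^ (q - 1) * ((1 + ENNReal.ofReal (2 * Λ) ^ q) *
          (ENNReal.ofReal (α ^ q) * (ENNReal.ofReal (12 ^ n) * volume B))) := by
        have hle : Λ / (90 * ρ i) * R ≤ 2 * Λ := by
          have : Λ / (90 * ρ i) * (120 * ρ i) = 4 / 3 * Λ := by field_simp; norm_num
          rw [hR, this]
          linarith
        gcongr _ * ((1 + ENNReal.ofReal ?_ ^ _) * _)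
    _ = _ := by
        have e2 : (2 : ℝ≥0∞) ^ (q - 1) = ENNReal.ofReal (2 ^ (q - 1)) := by
          rw [← ENNReal.ofReal_rpow_of_pos two_pos]; simp
        rw [e2, ENNReal.ofReal_rpow_of_pos (by positivity), ENNReal.ofReal_mul (by positivity),
          ENNReal.ofReal_mul (by positivity), ENNReal.ofReal_mul (by positivity),
          ENNReal.ofReal_add (by positivity) (by positivity), ofReal_one]
        ring

end CZ

/-- in the Calderón–Zygmund decomposition for Sobolev functions,
the good part `g` can moreover be chosen to agree almost everywhere with a
Lipschitz function of Lipschitz constant at most `Cα`: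
`|g(x) − g(y)| ≤ C α |x − y|` for a.e. `x, y`. -/
theorem statement7 (n : ℕ) (hn : 1 ≤ n) (q : ℝ) (hq1 : 1 ≤ q) :
    ∃ (C : ℝ) (N : ℕ), 0 < C ∧
      ∀ f : EuclideanSpace ℝ (Fin n) → ℝ, ContDiff ℝ (⊤ : ℕ∞) f → HasCompactSupport f →
      ∀ α : ℝ, 0 < α →
      ∃ (c : ℕ → EuclideanSpace ℝ (Fin n)) (rad : ℕ → ℝ)
        (b : ℕ → EuclideanSpace ℝ (Fin n) → ℝ) (g : EuclideanSpace ℝ (Fin n) → ℝ),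
        (∀ i, 0 ≤ rad i) ∧
        (∀ᵐ x ∂volume, f x = g x + ∑' i, b i x) ∧
        (∀ᵐ x ∂volume, DifferentiableAt ℝ g x ∧ ‖fderiv ℝ g x‖ ≤ C * α) ∧
        (∀ i, ContDiff ℝ 1 (b i)) ∧
        (∀ i, Function.support (b i) ⊆ ball (c i) (rad i)) ∧
        (∀ i, ∫⁻ x in ball (c i) (rad i), (‖fderiv ℝ (b i) x‖₊ : ℝ≥0∞) ^ q ≤
          ENNReal.ofReal (C * α ^ q) * volume (ball (c i) (rad i))) ∧
        (∑' i, volume (ball (c i) (rad i)) ≤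
          ENNReal.ofReal (C * α ^ (-q)) * ∫⁻ x, (‖fderiv ℝ f x‖₊ : ℝ≥0∞) ^ q) ∧
        (∀ x, ∑' i, (ball (c i) (rad i)).indicator (fun _ => (1 : ℝ≥0∞)) x ≤ N) ∧
        -- moreover: g agrees a.e. with a Lipschitz function of constant ≤ C α
        (∃ g' : EuclideanSpace ℝ (Fin n) → ℝ,
          (∀ x y, |g' x - g' y| ≤ C * α * dist x y) ∧ g =ᵐ[volume] g') := by
  obtain ⟨η, L, P⟩ := CZ.exists_profile n
  have hL := P.pos
  have hq0 : 0 < q := by linarith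
  -- the three constants: Lipschitz bound, gradient of the bad parts, total volume of the balls
  set C₁ : ℝ := 2 ^ (n + 1) * (63 + 6 * 110 ^ n * (500 * 110 ^ n * L)) with hC₁
  set C₂ : ℝ := 2 ^ (q - 1) * (1 + (2 * (500 * 110 ^ n * L)) ^ q) * 12 ^ n with hC₂
  set C₃ : ℝ := 10 ^ n * 5 ^ n with hC₃
  have h1 : 0 < C₁ := by positivity
  have h2 : 0 < C₂ := by positivity
  have h3 : 0 < C₃ := by positivity
  refine ⟨C₁ + C₂ + C₃, 110 ^ n, by positivity, fun f hf hfc α hα => ?_⟩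
  have hf1 : ContDiff ℝ 1 f := hf.of_le (by exact_mod_cast le_top)
  have hαq : 0 < α ^ q := Real.rpow_pos_of_pos hα q
  let H : Eu n → ℝ≥0∞ := fun x => ‖fderiv ℝ f x‖ₑ ^ q
  let A : ℝ≥0∞ := ENNReal.ofReal (α ^ q)
  have hA0 : A ≠ 0 := by simpa [A] using hαq
  have hHfin : ∫⁻ x, H x ≠ ∞ := by
    have hm : MemLp (fderiv ℝ f) (ENNReal.ofReal q) volume :=
      (hf1.continuous_fderiv one_ne_zero).memLp_of_hasCompactSupport (hfc.fderiv ℝ)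
    have := lintegral_rpow_enorm_lt_top_of_eLpNorm_lt_top (by simpa using hq0) (by simp) hm.2
    rw [ENNReal.toReal_ofReal hq0.le] at this
    exact this.ne
  have hvol := CZ.vol_bigSet hn H A hA0 (by simp [A]) hHfin
  set F : Set (Eu n) := (CZ.bigSet H A)ᶜ with hFdef
  have hF : IsClosed F := (CZ.isOpen_bigSet H A).isClosed_compl
  have hFc : Fᶜ = CZ.bigSet H A := compl_compl _
  have hvolt : volume Fᶜ ≠ ∞ := by
    rw [hFc]
    refine ne_top_of_le_ne_top ?_ hvol
    exact ENNReal.mul_ne_top (by simp) (ENNReal.mul_ne_top (ENNReal.inv_ne_top.2 hA0) hHfin)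
  have hne : F.Nonempty := by
    by_contra h
    rw [Set.not_nonempty_iff_eq_empty] at h
    have := CZ.nontriv hn
    have := NormedSpace.noncompactSpace ℝ (Eu n)
    rw [h, Set.compl_empty, measure_univ_of_isAddLeftInvariant] at hvolt
    exact hvolt rfl
  obtain ⟨c, ρ, w1, w2, w3, w4⟩ := CZ.whitney hn F hF hne hvolt
  choose y hyF hyd using fun i => hF.exists_infDist_eq_dist hne (c i)
  have W : CZ.Whitney F c ρ y := ⟨w1, w2, w3, w4, hyF, hyd⟩
  have hFb : ∀ z ∈ F, z ∉ CZ.bigSet H A := fun z hz => hz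
  have hlip : ∀ x x', |CZ.good f η c ρ y x - CZ.good f η c ρ y x'| ≤
      (C₁ + C₂ + C₃) * α * dist x x' := by
    intro x x'
    refine (CZ.good_lip P W (K := 2 ^ (n + 1) * α) (by positivity)
      (fun x hx z hz => CZ.lipschitz_good hf1 hq1 hα (hFb x hx) (hFb z hz)) hF x x').trans ?_
    refine mul_le_mul_of_nonneg_right ?_ dist_nonneg
    have : 2 ^ (n + 1) * α * (63 + 6 * 110 ^ n * (500 * 110 ^ n * L)) = C₁ * α := by
      rw [hC₁]; ring
    rw [this]
    gcongr
    linarith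
  have hlip' : LipschitzWith (Real.toNNReal ((C₁ + C₂ + C₃) * α)) (CZ.good f η c ρ y) :=
    LipschitzWith.of_dist_le_mul fun x x' => by
      rw [Real.coe_toNNReal _ (by positivity), Real.dist_eq]
      exact hlip x x'
  refine ⟨c, fun i => 10 * ρ i, CZ.bad f η c ρ y, CZ.good f η c ρ y,
    fun i => mul_nonneg (by norm_num) (w1 i), ?_, ?_, ?_, ?_, ?_, ?_, W.overlap, _, hlip, by rfl⟩
  · exact Filter.Eventually.of_forall fun x => (sub_add_cancel _ _).symm
  · filter_upwards [hlip'.ae_differentiableAt] with x hx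
    refine ⟨hx, (norm_fderiv_le_of_lipschitz ℝ hlip').trans ?_⟩
    rw [Real.coe_toNNReal _ (by positivity)]
  · exact fun i => (hf1.sub contDiff_const).mul (CZ.phi_smooth P i)
  · exact fun i x hx => CZ.phi_supp P (right_ne_zero_of_mul hx)
  · intro i
    refine (CZ.bad_lintegral P W hF hf1 hq1 hFb i).trans ?_
    gcongr
    linarith
  · refine W.sum_vol_le.trans ?_
    rw [hFc]
    calc ENNReal.ofReal (10 ^ n) * volume (CZ.bigSet H A)
        ≤ ENNReal.ofReal (10 ^ n) * (ENNReal.ofReal (5 ^ n) * (A⁻¹ * ∫⁻ x, H x)) := by gcongr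
      _ = ENNReal.ofReal (C₃ * α ^ (-q)) * ∫⁻ x, H x := by
          rw [Real.rpow_neg hα.le, ENNReal.ofReal_mul h3.le, hC₃, ENNReal.ofReal_mul (by positivity),
            ENNReal.ofReal_inv_of_pos hαq]
          ring
      _ ≤ ENNReal.ofReal ((C₁ + C₂ + C₃) * α ^ (-q)) * ∫⁻ x, H x := by
          gcongr
          linarith
end

section
/- For every dimension n ≥ 1 there exist ε ∈ (0,1) and a constant C, depending only on n, such that for every ball B = B(x,r) in ℝⁿ and every function u harmonic on the ball 3B = B(x,3r), one has ((1/|B|)∫_{B} |∇u|² dx)^{1/2} ≤ C·((1/|2B|)∫_{2B} |∇u|^{2−ε} dx)^{1/(2−ε)}. -/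
/-!
Harmonic functions satisfy a mean value property with respect to the radial weight
`φ(z) = (r² - |z|²)₊`: since `φ(z) z = ∇ψ(z)` with `ψ = -(r² - |z|²)₊² / 4`, the derivative in `t`
of `∫ φ(z) v(y - t z) dz` is `-∫ ∇ψ(z) · ∇v(y - t z) dz`, which integration by parts turns into a
multiple of `∫ ψ(z) Δv(y - t z) dz = 0` (`weighted_mean_value`). Differentiating the resulting
identity `∫ φ(z) v(y - z) dz = (∫ φ) v(y)` in `y` gives the same mean value property for `∇v`,
without any regularity beyond `C²` (`weighted_mean_value_fderiv`). As `φ ≤ r²`, and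
`φ ≥ 3r²/4` on the ball of radius `r/2`, it follows that on `B(x,r)` the gradient is bounded
pointwise by `(4/3) 4ⁿ` times its average over `B(x,2r)` (`enorm_fderiv_le_average`). Jensen's
inequality then yields the theorem, with `ε = 1/2`.

A function harmonic on `B(x,3r)` is multiplied by a cutoff equal to `1` on `B(x,2r)`, so that all
integrals involve globally `C²`, compactly supported functions.
-/

open MeasureTheory Metric ENNReal

/-- `u` is harmonic on `U`: it is `C²` on `U` and `Δu = Σⱼ ∂²u/∂xⱼ² = 0` on `U`. -/
def IsHarmonicOn {n : ℕ} (u : EuclideanSpace ℝ (Fin n) → ℝ)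
    (U : Set (EuclideanSpace ℝ (Fin n))) : Prop :=
  ContDiffOn ℝ 2 u U ∧ ∀ x ∈ U,
    ∑ j : Fin n,
      fderiv ℝ (fun y => fderiv ℝ u y (EuclideanSpace.single j (1 : ℝ))) x
        (EuclideanSpace.single j (1 : ℝ)) = 0

open Topology Filter

/-! ### The radial weight and its potential -/

/-- The radial weight `(r² - |z|²)₊`. -/
noncomputable def phi {n : ℕ} (r : ℝ) (z : EuclideanSpace ℝ (Fin n)) : ℝ :=
  max (r ^ 2 - ‖z‖ ^ 2) 0

/-- A potential of the radial field `φ(z) z`: a compactly supported `C¹` function with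
`∇ψ(z) = φ(z) z`. -/
noncomputable def psi {n : ℕ} (r : ℝ) (z : EuclideanSpace ℝ (Fin n)) : ℝ :=
  -(1 / 4) * (max (r ^ 2 - ‖z‖ ^ 2) 0) ^ 2

lemma hasDerivAt_max_sq (s : ℝ) : HasDerivAt (fun s : ℝ => (max s 0) ^ 2) (2 * max s 0) s := by
  rcases lt_trichotomy s 0 with h | h | h
  · have h1 : (fun s : ℝ => (max s 0) ^ 2) =ᶠ[𝓝 s] fun _ => 0 := by
      filter_upwards [gt_mem_nhds h] with a ha
      simp [max_eq_right ha.le]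
    rw [max_eq_right h.le, mul_zero]
    exact (hasDerivAt_const s (0 : ℝ)).congr_of_eventuallyEq h1
  · subst h
    have h1 : (fun s : ℝ => (max s 0) ^ 2) =O[𝓝 0] fun x => ‖x - 0‖ ^ 2 := by
      refine Asymptotics.IsBigO.of_bound 1 (Eventually.of_forall fun a => ?_)
      simp only [sub_zero, norm_pow, one_mul, Real.norm_eq_abs, sq_abs]
      rcases le_total a 0 with h | h
      · simp [max_eq_right h, sq_nonneg]
      · simp [max_eq_left h]
    have h2 : HasFDerivAt (fun s : ℝ => (max s 0) ^ 2) (0 : ℝ →L[ℝ] ℝ) 0 :=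
      h1.hasFDerivAt (by norm_num)
    simpa using h2.hasDerivAt
  · have h1 : (fun s : ℝ => (max s 0) ^ 2) =ᶠ[𝓝 s] fun s => s ^ 2 := by
      filter_upwards [lt_mem_nhds h] with a ha
      simp [max_eq_left ha.le]
    rw [max_eq_left h.le]
    simpa using (hasDerivAt_pow 2 s).congr_of_eventuallyEq h1

section weights

variable {n : ℕ} {r : ℝ}

lemma phi_nonneg (z : EuclideanSpace ℝ (Fin n)) : 0 ≤ phi r z := le_max_right _ _

lemma phi_le (z : EuclideanSpace ℝ (Fin n)) : phi r z ≤ r ^ 2 :=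
  max_le (by nlinarith [sq_nonneg ‖z‖]) (sq_nonneg r)

lemma phi_eq_zero (hr : 0 < r) {z : EuclideanSpace ℝ (Fin n)} (hz : z ∉ ball 0 r) :
    phi r z = 0 := by
  simp only [mem_ball_zero_iff, not_lt] at hz
  exact max_eq_right (by nlinarith)

lemma psi_eq (z : EuclideanSpace ℝ (Fin n)) : psi r z = -(1 / 4) * phi r z ^ 2 := rfl

lemma continuous_phi : Continuous (phi (n := n) r) := by
  unfold phi; fun_prop

lemma hasCompactSupport_phi (hr : 0 < r) : HasCompactSupport (phi (n := n) r) :=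
  HasCompactSupport.intro (isCompact_closedBall 0 r) fun _ hz =>
    phi_eq_zero hr fun h => hz (ball_subset_closedBall h)

lemma hasCompactSupport_psi (hr : 0 < r) : HasCompactSupport (psi (n := n) r) :=
  HasCompactSupport.intro (isCompact_closedBall 0 r) fun _ hz => by
    rw [psi_eq, phi_eq_zero hr fun h => hz (ball_subset_closedBall h)]; simp

lemma continuous_psi : Continuous (psi (n := n) r) := by
  unfold psi; fun_prop

lemma hasFDerivAt_psi (z : EuclideanSpace ℝ (Fin n)) :
    HasFDerivAt (psi r) (phi r z • innerSL ℝ z) z := by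
  have h1 : HasFDerivAt (fun z : EuclideanSpace ℝ (Fin n) => r ^ 2 - ‖z‖ ^ 2)
      (-(2 • innerSL ℝ z)) z := by
    simpa using (hasStrictFDerivAt_norm_sq z).hasFDerivAt.const_sub (r ^ 2)
  have h2 := ((hasDerivAt_max_sq (r ^ 2 - ‖z‖ ^ 2)).comp_hasFDerivAt z h1).const_mul (-(1 / 4 : ℝ))
  refine h2.congr_fderiv ?_
  ext w
  simp [phi]
  ring

lemma fderiv_psi (z : EuclideanSpace ℝ (Fin n)) (j : Fin n) :
    fderiv ℝ (psi r) z (EuclideanSpace.single j 1) = phi r z * z j := by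
  rw [(hasFDerivAt_psi z).fderiv]
  simp [EuclideanSpace.inner_single_right]

/-! ### Weighted mean value properties -/

/-- The Laplacian in the form used by `IsHarmonicOn`. -/
noncomputable def lap (u : EuclideanSpace ℝ (Fin n) → ℝ) (x : EuclideanSpace ℝ (Fin n)) : ℝ :=
  ∑ j : Fin n, fderiv ℝ (fun y => fderiv ℝ u y (EuclideanSpace.single j (1 : ℝ))) x
    (EuclideanSpace.single j (1 : ℝ))

/-- Integration by parts against the potential `ψ`: the weighted integral of the radial derivative
of `v` vanishes where `v` is harmonic. -/
lemma integral_radial_deriv_eq_zero (hr : 0 < r) {v : EuclideanSpace ℝ (Fin n) → ℝ}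
    (hv : ContDiff ℝ 2 v) (y : EuclideanSpace ℝ (Fin n)) (t : ℝ)
    (hlap : ∀ z ∈ ball (0 : EuclideanSpace ℝ (Fin n)) r, lap v (y - t • z) = 0) :
    ∫ z, phi r z * fderiv ℝ v (y - t • z) (-z) = 0 := by
  have hd : ∀ e : EuclideanSpace ℝ (Fin n), ContDiff ℝ 1 (fun x => fderiv ℝ v x e) := fun e =>
    (hv.fderiv_right (m := 1) (by norm_num)).clm_apply contDiff_const
  have hdt : ∀ e : EuclideanSpace ℝ (Fin n), ContDiff ℝ 1 (fun z => fderiv ℝ v (y - t • z) e) :=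
    fun e => (hd e).comp (by fun_prop : ContDiff ℝ 1 fun z : EuclideanSpace ℝ (Fin n) => y - t • z)
  have hcpsi := hasCompactSupport_psi (n := n) hr
  have hcphi := hasCompactSupport_phi (n := n) hr
  have hchain : ∀ (j : Fin n) (z : EuclideanSpace ℝ (Fin n)),
      fderiv ℝ (fun z => fderiv ℝ v (y - t • z) (EuclideanSpace.single j (1 : ℝ))) z
        (EuclideanSpace.single j (1 : ℝ)) =
      -t * fderiv ℝ (fun x => fderiv ℝ v x (EuclideanSpace.single j (1 : ℝ))) (y - t • z)
        (EuclideanSpace.single j (1 : ℝ)) := by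
    intro j z
    have h1 : HasFDerivAt (fun z : EuclideanSpace ℝ (Fin n) => y - t • z)
        (-(t • ContinuousLinearMap.id ℝ _)) z :=
      ((hasFDerivAt_id z).const_smul t).const_sub y
    have h2 := (((hd (EuclideanSpace.single j (1 : ℝ))).differentiable (by norm_num))
      (y - t • z)).hasFDerivAt.comp z h1
    have h3 := h2.fderiv
    simp only [Function.comp_def] at h3
    rw [h3]
    simp
  have hibp : ∀ j : Fin n,
      ∫ z, psi r z * fderiv ℝ (fun z => fderiv ℝ v (y - t • z) (EuclideanSpace.single j (1 : ℝ))) z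
        (EuclideanSpace.single j (1 : ℝ)) =
      -∫ z, phi r z * z j * fderiv ℝ v (y - t • z) (EuclideanSpace.single j (1 : ℝ)) := by
    intro j
    have hc := (hdt (EuclideanSpace.single j (1 : ℝ))).continuous
    have hc' := ((hdt (EuclideanSpace.single j (1 : ℝ))).continuous_fderiv (by norm_num)).clm_apply
      (continuous_const (y := EuclideanSpace.single j (1 : ℝ)))
    simp_rw [← fderiv_psi]
    refine integral_mul_fderiv_eq_neg_fderiv_mul_of_integrable ?_ ?_ ?_ ?_ ?_
    · simp_rw [fderiv_psi]
      refine Continuous.integrable_of_hasCompactSupport ?_ ?_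
      · have := continuous_phi (n := n) (r := r)
        fun_prop
      · exact (hcphi.mul_right).mul_right
    · exact (continuous_psi.mul hc').integrable_of_hasCompactSupport hcpsi.mul_right
    · exact (continuous_psi.mul hc).integrable_of_hasCompactSupport hcpsi.mul_right
    · exact fun z _ => (hasFDerivAt_psi z).differentiableAt
    · exact fun z _ => (hdt _).differentiable (by norm_num) z
  have hexp : ∀ z : EuclideanSpace ℝ (Fin n), phi r z * fderiv ℝ v (y - t • z) (-z) =
      ∑ j, -(phi r z * z j * fderiv ℝ v (y - t • z) (EuclideanSpace.single j (1 : ℝ))) := by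
    intro z
    have hz : z = ∑ j, z j • EuclideanSpace.single j (1 : ℝ) := by
      simpa using ((EuclideanSpace.basisFun (Fin n) ℝ).sum_repr z).symm
    have h1 : fderiv ℝ v (y - t • z) z =
        ∑ j, z j * fderiv ℝ v (y - t • z) (EuclideanSpace.single j (1 : ℝ)) := by
      generalize fderiv ℝ v (y - t • z) = L
      conv_lhs => rw [hz]
      simp
    rw [map_neg, h1, Finset.sum_neg_distrib, mul_neg, Finset.mul_sum]
    simp only [mul_assoc]
  simp_rw [hexp]
  rw [integral_finsetSum]
  · simp_rw [integral_neg, ← hibp, hchain]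
    rw [← integral_finsetSum]
    · refine integral_eq_zero_of_ae (Eventually.of_forall fun z => ?_)
      simp only [Pi.zero_apply]
      by_cases hz : z ∈ ball (0 : EuclideanSpace ℝ (Fin n)) r
      · have h0 := hlap z hz
        unfold lap at h0
        rw [← Finset.mul_sum, ← Finset.mul_sum, h0]
        simp
      · rw [← Finset.mul_sum, psi_eq, phi_eq_zero hr hz]
        simp
    · intro j _
      refine Continuous.integrable_of_hasCompactSupport (continuous_psi.mul ?_) hcpsi.mul_right
      refine continuous_const.mul ?_
      have := ((hd (EuclideanSpace.single j (1 : ℝ))).continuous_fderiv (by norm_num)).clm_apply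
        (continuous_const (y := EuclideanSpace.single j (1 : ℝ)))
      exact this.comp (by fun_prop)
  · intro j _
    refine (Continuous.integrable_of_hasCompactSupport ?_ (hcphi.mul_right).mul_right).neg
    have h1 := continuous_phi (n := n) (r := r)
    have h2 := (hdt (EuclideanSpace.single j (1 : ℝ))).continuous
    fun_prop

lemma weighted_mean_value (hr : 0 < r) {v : EuclideanSpace ℝ (Fin n) → ℝ}
    (hv : ContDiff ℝ 2 v) (hvc : HasCompactSupport v) (y : EuclideanSpace ℝ (Fin n))
    (hlap : ∀ z ∈ ball y r, lap v z = 0) :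
    ∫ z, phi r z * v (y - z) = (∫ z, phi (n := n) r z) * v y := by
  have hcphi := hasCompactSupport_phi (n := n) hr
  have hphi := continuous_phi (n := n) (r := r)
  have hdc : Continuous (fderiv ℝ v) := hv.continuous_fderiv (by norm_num)
  have hvcont := hv.continuous
  obtain ⟨M, hM⟩ := (hvc.fderiv (𝕜 := ℝ)).exists_bound_of_continuous hdc
  have hderiv : ∀ t : ℝ, HasDerivAt (fun t : ℝ => ∫ z, phi r z * v (y - t • z))
      (∫ z, phi r z * fderiv ℝ v (y - t • z) (-z)) t := by
    intro t
    refine (hasDerivAt_integral_of_dominated_loc_of_deriv_le (s := Set.univ)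
      (F := fun (t : ℝ) z => phi r z * v (y - t • z))
      (F' := fun (t : ℝ) z => phi r z * fderiv ℝ v (y - t • z) (-z))
      (bound := fun z => phi r z * (M * ‖z‖))
      univ_mem ?_ ?_ ?_ ?_ ?_ ?_).2
    · refine Eventually.of_forall fun s => Continuous.aestronglyMeasurable ?_
      fun_prop
    · refine Continuous.integrable_of_hasCompactSupport ?_ hcphi.mul_right
      fun_prop
    · refine Continuous.aestronglyMeasurable (hphi.mul ?_)
      exact (hdc.comp (by fun_prop)).clm_apply continuous_neg
    · refine Eventually.of_forall fun z s _ => ?_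
      rw [norm_mul, Real.norm_of_nonneg (phi_nonneg z)]
      refine mul_le_mul_of_nonneg_left ?_ (phi_nonneg z)
      refine ((fderiv ℝ v (y - s • z)).le_opNorm _).trans ?_
      rw [norm_neg]
      exact mul_le_mul_of_nonneg_right (hM _) (norm_nonneg z)
    · refine Continuous.integrable_of_hasCompactSupport ?_ hcphi.mul_right
      fun_prop
    · refine Eventually.of_forall fun z s _ => HasDerivAt.const_mul _ ?_
      have h1 : HasDerivAt (fun s : ℝ => y - s • z) (-z) s := by
        simpa using ((hasDerivAt_id s).smul_const z).const_sub y
      exact ((hv.differentiable (by norm_num)) (y - s • z)).hasFDerivAt.comp_hasDerivAt s h1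
  have hconst := constant_of_has_deriv_right_zero (a := (0 : ℝ)) (b := 1)
    (f := fun t : ℝ => ∫ z, phi r z * v (y - t • z))
    (fun t _ => (hderiv t).continuousAt.continuousWithinAt)
    (fun t ht => by
      have h := hderiv t
      rw [integral_radial_deriv_eq_zero hr hv y t ?_] at h
      · exact h.hasDerivWithinAt
      · intro z hz
        refine hlap _ ?_
        rw [mem_ball_zero_iff] at hz
        rw [mem_ball_iff_norm]
        have : ‖y - t • z - y‖ = t * ‖z‖ := by
          rw [sub_sub_cancel_left, norm_neg, norm_smul, Real.norm_of_nonneg ht.1]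
        rw [this]
        nlinarith [ht.1, ht.2, norm_nonneg z])
    1 (by simp)
  simp only [one_smul, zero_smul, sub_zero] at hconst
  rw [hconst, integral_mul_const]

lemma weighted_mean_value_fderiv (hr : 0 < r) {v : EuclideanSpace ℝ (Fin n) → ℝ}
    (hv : ContDiff ℝ 2 v) (hvc : HasCompactSupport v) (x y : EuclideanSpace ℝ (Fin n))
    (hy : y ∈ ball x r) (hlap : ∀ z ∈ ball x (2 * r), lap v z = 0) :
    ∫ z, phi r z • fderiv ℝ v (y - z) = (∫ z, phi (n := n) r z) • fderiv ℝ v y := by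
  have hcphi := hasCompactSupport_phi (n := n) hr
  have hphi := continuous_phi (n := n) (r := r)
  have hdc : Continuous (fderiv ℝ v) := hv.continuous_fderiv (by norm_num)
  have hvcont := hv.continuous
  obtain ⟨M, hM⟩ := (hvc.fderiv (𝕜 := ℝ)).exists_bound_of_continuous hdc
  have h1 : HasFDerivAt (fun y => ∫ z, phi r z * v (y - z))
      (∫ z, phi r z • fderiv ℝ v (y - z)) y := by
    refine hasFDerivAt_integral_of_dominated_of_fderiv_le (s := Set.univ)
      (F := fun y z => phi r z * v (y - z))
      (F' := fun y z => phi r z • fderiv ℝ v (y - z))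
      (bound := fun z => phi r z * M) univ_mem ?_ ?_ ?_ ?_ ?_ ?_
    · refine Eventually.of_forall fun s => Continuous.aestronglyMeasurable ?_
      fun_prop
    · refine Continuous.integrable_of_hasCompactSupport ?_ hcphi.mul_right
      fun_prop
    · refine Continuous.aestronglyMeasurable (hphi.smul ?_)
      exact hdc.comp (by fun_prop)
    · refine Eventually.of_forall fun z s _ => ?_
      rw [norm_smul, Real.norm_of_nonneg (phi_nonneg z)]
      exact mul_le_mul_of_nonneg_left (hM _) (phi_nonneg z)
    · refine Continuous.integrable_of_hasCompactSupport ?_ hcphi.mul_right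
      fun_prop
    · refine Eventually.of_forall fun z s _ => HasFDerivAt.const_mul ?_ _
      have h2 : HasFDerivAt (fun s => s - z) (ContinuousLinearMap.id ℝ _) s :=
        (hasFDerivAt_id s).sub_const z
      have h3 := ((hv.differentiable (by norm_num)) (s - z)).hasFDerivAt.comp s h2
      rwa [ContinuousLinearMap.comp_id] at h3
  have h2 : (fun y => ∫ z, phi r z * v (y - z)) =ᶠ[𝓝 y]
      fun y => (∫ z, phi (n := n) r z) * v y := by
    filter_upwards [isOpen_ball.mem_nhds hy] with w hw
    refine weighted_mean_value hr hv hvc w fun z hz => hlap z ?_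
    rw [mem_ball] at *
    linarith [dist_triangle z w x]
  have h3 : HasFDerivAt (fun y => (∫ z, phi (n := n) r z) * v y)
      ((∫ z, phi (n := n) r z) • fderiv ℝ v y) y :=
    ((hv.differentiable (by norm_num)) y).hasFDerivAt.const_mul _
  exact (h1.congr_of_eventuallyEq h2.symm).unique h3

/-! ### Pointwise gradient bounds -/

lemma le_ofReal_integral_phi (hr : 0 < r) :
    ENNReal.ofReal (3 / 4 * r ^ 2) * volume (ball (0 : EuclideanSpace ℝ (Fin n)) (r / 2)) ≤
      ENNReal.ofReal (∫ z, phi (n := n) r z) := by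
  rw [ofReal_integral_eq_lintegral_ofReal
    (continuous_phi.integrable_of_hasCompactSupport (hasCompactSupport_phi hr))
    (Eventually.of_forall phi_nonneg), ← setLIntegral_const]
  refine le_trans (setLIntegral_mono' measurableSet_ball fun z hz => ?_)
    (setLIntegral_le_lintegral _ _)
  refine ENNReal.ofReal_le_ofReal (le_max_of_le_left ?_)
  rw [mem_ball_zero_iff] at hz
  nlinarith [norm_nonneg z]

/-- Gradient bound for globally defined `v`: on `B(x,r)`, the gradient is controlled by its
`L¹` norm on `B(x,2r)`. -/
lemma enorm_fderiv_mul_le (hr : 0 < r) {v : EuclideanSpace ℝ (Fin n) → ℝ}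
    (hv : ContDiff ℝ 2 v) (hvc : HasCompactSupport v) (x y : EuclideanSpace ℝ (Fin n))
    (hy : y ∈ ball x r) (hlap : ∀ z ∈ ball x (2 * r), lap v z = 0) :
    ENNReal.ofReal (3 / 4 * r ^ 2) * volume (ball (0 : EuclideanSpace ℝ (Fin n)) (r / 2)) *
      ‖fderiv ℝ v y‖ₑ ≤ ENNReal.ofReal (r ^ 2) * ∫⁻ z in ball x (2 * r), ‖fderiv ℝ v z‖ₑ := by
  calc _ ≤ ENNReal.ofReal (∫ z, phi (n := n) r z) * ‖fderiv ℝ v y‖ₑ := by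
        gcongr
        exact le_ofReal_integral_phi hr
    _ = ‖∫ z, phi r z • fderiv ℝ v (y - z)‖ₑ := by
        rw [weighted_mean_value_fderiv hr hv hvc x y hy hlap, enorm_smul,
          Real.enorm_of_nonneg (integral_nonneg phi_nonneg)]
    _ ≤ ∫⁻ z, ‖phi r z • fderiv ℝ v (y - z)‖ₑ := enorm_integral_le_lintegral_enorm _
    _ ≤ ∫⁻ z, ENNReal.ofReal (r ^ 2) *
          (ball x (2 * r)).indicator (fun w => ‖fderiv ℝ v w‖ₑ) (y - z) := by
        refine lintegral_mono fun z => ?_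
        by_cases hz : z ∈ ball (0 : EuclideanSpace ℝ (Fin n)) r
        · rw [Set.indicator_of_mem, enorm_smul, Real.enorm_of_nonneg (phi_nonneg z)]
          · gcongr
            exact phi_le z
          · rw [mem_ball_zero_iff] at hz
            rw [mem_ball_iff_norm] at *
            have h1 : y - z - x = (y - x) - z := by abel
            rw [h1]
            linarith [norm_sub_le (y - x) z]
        · rw [enorm_smul, phi_eq_zero hr hz, enorm_zero, zero_mul]
          exact zero_le
    _ = _ := by
        rw [lintegral_const_mul' _ _ ENNReal.ofReal_ne_top,
          lintegral_sub_left_eq_self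
            (fun w => (ball x (2 * r)).indicator (fun w => ‖fderiv ℝ v w‖ₑ) w) y,
          lintegral_indicator measurableSet_ball]

end weights

/-- Cutting off outside `B(x,2r)` replaces a harmonic function on `B(x,3r)` by a globally `C²`,
compactly supported function. -/
lemma exists_cutoff {n : ℕ} {r : ℝ} (hr : 0 < r) (x : EuclideanSpace ℝ (Fin n))
    {u : EuclideanSpace ℝ (Fin n) → ℝ} (hu : IsHarmonicOn u (ball x (3 * r))) :
    ∃ v : EuclideanSpace ℝ (Fin n) → ℝ, ContDiff ℝ 2 v ∧ HasCompactSupport v ∧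
      (∀ z ∈ ball x (2 * r), fderiv ℝ v z = fderiv ℝ u z) ∧
      ∀ z ∈ ball x (2 * r), lap v z = 0 := by
  let χ : ContDiffBump x := ⟨2 * r, 5 / 2 * r, by positivity, by linarith⟩
  have hχ : χ.rOut = 5 / 2 * r := rfl
  have heq : ∀ z ∈ ball x (2 * r), (fun z => χ z * u z) =ᶠ[𝓝 z] u := by
    intro z hz
    filter_upwards [χ.eventuallyEq_one_of_mem_ball hz] with w hw
    simp [hw]
  have hfd : ∀ z ∈ ball x (2 * r), fderiv ℝ (fun z => χ z * u z) z = fderiv ℝ u z :=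
    fun z hz => (heq z hz).fderiv_eq
  refine ⟨fun z => χ z * u z, ?_, χ.hasCompactSupport.mul_right, hfd, ?_⟩
  · refine contDiff_iff_contDiffAt.2 fun z => ?_
    by_cases hz : z ∉ tsupport fun z => χ z * u z
    · exact contDiffAt_const.congr_of_eventuallyEq (notMem_tsupport_iff_eventuallyEq.1 hz)
    rw [not_not] at hz
    have hz' : z ∈ closedBall x (5 / 2 * r) := by
      rw [← hχ, ← χ.tsupport_eq]
      exact tsupport_mul_subset_left hz
    have hz3 : z ∈ ball x (3 * r) := closedBall_subset_ball (by linarith) hz'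
    exact χ.contDiffAt.mul (hu.1.contDiffAt (isOpen_ball.mem_nhds hz3))
  · intro z hz
    rw [← hu.2 z (ball_subset_ball (by linarith) hz)]
    refine Finset.sum_congr rfl fun j _ => ?_
    have h : (fun y => fderiv ℝ (fun z => χ z * u z) y (EuclideanSpace.single j (1 : ℝ))) =ᶠ[𝓝 z]
        fun y => fderiv ℝ u y (EuclideanSpace.single j (1 : ℝ)) := by
      filter_upwards [isOpen_ball.mem_nhds hz] with w hw
      rw [hfd w hw]
    rw [h.fderiv_eq]

lemma enorm_fderiv_le_average {n : ℕ} {r : ℝ} (hr : 0 < r) (x : EuclideanSpace ℝ (Fin n))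
    {u : EuclideanSpace ℝ (Fin n) → ℝ} (hu : IsHarmonicOn u (ball x (3 * r)))
    {y : EuclideanSpace ℝ (Fin n)} (hy : y ∈ ball x r) :
    ‖fderiv ℝ u y‖ₑ ≤ ENNReal.ofReal (4 / 3 * 4 ^ n) *
      ((volume (ball x (2 * r)))⁻¹ * ∫⁻ z in ball x (2 * r), ‖fderiv ℝ u z‖ₑ) := by
  obtain ⟨v, hv, hvc, hfd, hlap⟩ := exists_cutoff hr x hu
  have h := enorm_fderiv_mul_le hr hv hvc x y hy hlap
  rw [hfd y (ball_subset_ball (by linarith) hy),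
    setLIntegral_congr_fun measurableSet_ball (fun z hz => by rw [hfd z hz])] at h
  set V := volume (ball (0 : EuclideanSpace ℝ (Fin n)) (r / 2)) with hV
  set I := ∫⁻ z in ball x (2 * r), ‖fderiv ℝ u z‖ₑ
  have hV0 : V ≠ 0 := (measure_ball_pos _ _ (by positivity)).ne'
  have hVt : V ≠ ∞ := measure_ball_lt_top.ne
  have hvol : volume (ball x (2 * r)) = ENNReal.ofReal (4 ^ n) * V := by
    have := Measure.addHaar_ball_mul_of_pos volume x (r := 4) (by norm_num) (r / 2)
    rw [finrank_euclideanSpace_fin] at this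
    rw [hV, ← this]
    congr 2
    ring
  have h4 : ENNReal.ofReal (4 ^ n) ≠ 0 := by simp
  have hc : ENNReal.ofReal (3 / 4 * r ^ 2) ≠ 0 := by
    rw [Ne, ENNReal.ofReal_eq_zero, not_le]; positivity
  rw [hvol, ENNReal.mul_inv (Or.inl h4) (Or.inl ENNReal.ofReal_ne_top)]
  have h5 : ENNReal.ofReal (r ^ 2) = ENNReal.ofReal (3 / 4 * r ^ 2) * ENNReal.ofReal (4 / 3) := by
    rw [← ENNReal.ofReal_mul (by positivity)]
    congr 1
    ring
  rw [h5, mul_assoc, mul_assoc, ENNReal.mul_le_mul_iff_right hc ENNReal.ofReal_ne_top] at h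
  rw [ENNReal.ofReal_mul (by norm_num)]
  calc ‖fderiv ℝ u y‖ₑ = V⁻¹ * (V * ‖fderiv ℝ u y‖ₑ) := by
        rw [← mul_assoc, ENNReal.inv_mul_cancel hV0 hVt, one_mul]
    _ ≤ V⁻¹ * (ENNReal.ofReal (4 / 3) * I) := by gcongr
    _ = (ENNReal.ofReal (4 ^ n) * (ENNReal.ofReal (4 ^ n))⁻¹) *
          (V⁻¹ * (ENNReal.ofReal (4 / 3) * I)) := by
        rw [ENNReal.mul_inv_cancel h4 ENNReal.ofReal_ne_top, one_mul]
    _ = _ := by ring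

/-! ### The reverse Hölder inequality -/

/-- Jensen's inequality for averages of a gradient over a ball. -/
lemma average_le_average_rpow {n : ℕ} {R : ℝ} (hR : 0 < R) (x : EuclideanSpace ℝ (Fin n))
    (u : EuclideanSpace ℝ (Fin n) → ℝ) {p : ℝ} (hp : 1 ≤ p) :
    (volume (ball x R))⁻¹ * ∫⁻ z in ball x R, ‖fderiv ℝ u z‖ₑ ≤
      ((volume (ball x R))⁻¹ * ∫⁻ z in ball x R, ‖fderiv ℝ u z‖ₑ ^ p) ^ (1 / p) := by
  set μ : Measure (EuclideanSpace ℝ (Fin n)) :=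
    (volume (ball x R))⁻¹ • volume.restrict (ball x R) with hμ
  have : IsProbabilityMeasure μ := ⟨by
    simp [hμ, ENNReal.inv_mul_cancel (measure_ball_pos volume x hR).ne' measure_ball_lt_top.ne]⟩
  have hp0 : 0 < p := by linarith
  have h := eLpNorm_le_eLpNorm_of_exponent_le (μ := μ) (f := fderiv ℝ u) (p := 1)
    (q := ENNReal.ofReal p) (by simpa using hp)
    (measurable_fderiv ℝ u).stronglyMeasurable.aestronglyMeasurable
  rw [eLpNorm_one_eq_lintegral_enorm, eLpNorm_eq_lintegral_rpow_enorm_toReal (by simpa using hp0)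
    ENNReal.ofReal_ne_top, ENNReal.toReal_ofReal hp0.le] at h
  simpa [hμ] using h

/-- weak reverse Hölder inequality for gradients of harmonic
functions: there are `ε ∈ (0,1)` and `C` depending only on `n` such that for
`u` harmonic on `3B`,
`((1/|B|)∫_B |∇u|²)^{1/2} ≤ C ((1/|2B|)∫_{2B} |∇u|^{2−ε})^{1/(2−ε)}`. -/
theorem statement10 (n : ℕ) (hn : 1 ≤ n) :
    ∃ ε C : ℝ, 0 < ε ∧ ε < 1 ∧ 0 < C ∧
      ∀ (x : EuclideanSpace ℝ (Fin n)) (r : ℝ), 0 < r →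
      ∀ u : EuclideanSpace ℝ (Fin n) → ℝ, IsHarmonicOn u (ball x (3 * r)) →
        ((volume (ball x r))⁻¹ *
            ∫⁻ y in ball x r, (‖fderiv ℝ u y‖₊ : ℝ≥0∞) ^ (2 : ℝ)) ^ (1 / (2 : ℝ)) ≤
          ENNReal.ofReal C *
            ((volume (ball x (2 * r)))⁻¹ *
              ∫⁻ y in ball x (2 * r),
                (‖fderiv ℝ u y‖₊ : ℝ≥0∞) ^ (2 - ε)) ^ (1 / (2 - ε)) := by
  refine ⟨1 / 2, 4 / 3 * 4 ^ n, by norm_num, by norm_num, by positivity, ?_⟩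
  intro x r hr u hu
  simp only [← enorm_eq_nnnorm]
  set A := ENNReal.ofReal (4 / 3 * 4 ^ n) *
            ((volume (ball x (2 * r)))⁻¹ *
              ∫⁻ y in ball x (2 * r), ‖fderiv ℝ u y‖ₑ ^ (2 - 1 / 2 : ℝ)) ^ (1 / (2 - 1 / 2 : ℝ))
  have hA : ∀ y ∈ ball x r, ‖fderiv ℝ u y‖ₑ ≤ A := fun y hy =>
    (enorm_fderiv_le_average hr x hu hy).trans
      (mul_le_mul_right (average_le_average_rpow (by positivity) x u (by norm_num)) _)
  have h1 : ∫⁻ y in ball x r, ‖fderiv ℝ u y‖ₑ ^ (2 : ℝ) ≤ A ^ (2 : ℝ) * volume (ball x r) := by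
    rw [← setLIntegral_const]
    exact setLIntegral_mono' measurableSet_ball fun y hy =>
      ENNReal.rpow_le_rpow (hA y hy) (by norm_num)
  calc _ ≤ ((volume (ball x r))⁻¹ * (A ^ (2 : ℝ) * volume (ball x r))) ^ (1 / (2 : ℝ)) := by
        gcongr
    _ = (A ^ (2 : ℝ)) ^ (1 / (2 : ℝ)) := by
        rw [mul_comm (A ^ (2 : ℝ)), ← mul_assoc, ENNReal.inv_mul_cancel
          (measure_ball_pos volume x hr).ne' measure_ball_lt_top.ne, one_mul]
    _ = A := by
        rw [← ENNReal.rpow_mul]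
        norm_num
end
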